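/- arXiv:2209.00285 — 5 statements merged into one kernel-verified Lean document; each statement's English description precedes it below -/
import Mathlib

section
/- Let φ : ℂ → ℂ be holomorphic and injective on the open unit disk 𝔻 = {w : ℂ | ‖w‖ < 1}, with φ(w) ≠ 0 for every w ∈ 𝔻. Then for every w ∈ 𝔻, ‖1/φ(w) − 1/φ(0)‖ ≤ (‖deriv φ 0‖ / ‖φ(0)‖²) · ‖w‖ / (1 − ‖w‖)². -/
/-!
The function `1 / φ` is again injective and holomorphic on the disc, so the claim is the upper bound
of the growth theorem, `‖f w - f 0‖ ≤ ‖deriv f 0‖ * ‖w‖ / (1 - ‖w‖) ^ 2` for `f` univalent, applied to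
`f = 1 / φ` (`growth`). That theorem follows by the classical chain: the area theorem gives the
bound `|a₂| ≤ 2` of Bieberbach (`area_theorem`, `bieberbach`), disc automorphisms carry it to every
point (`koebe_bound`), and two integrations along a ray give the bounds for the derivative and for
the function (`distortion`, `growth`).

The area theorem is proved without the Jordan curve theorem or the area formula for a curve. Write
`F = 1 / g = 1/z + h` with `h z = b z + o(z)`. On the circle of radius `ρ` the curve `F` is nearly
an ellipse, which the real-linear map `w ↦ w - c * conj w` with `c = b ρ²` turns into a curve inside
a disc of radius `ρ⁻¹ + o(ρ)`. A connectedness argument (`inclusion`) shows that the image of the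
annulus `ρ ≤ ‖z‖ ≤ s` stays in that disc. Its area is the determinant of the linear map times
the integral of `‖deriv F‖ ^ 2`, which the mean value property bounds below (`annulus_energy`).
Comparing areas, then letting `ρ → 0` and `s → 1`, yields `‖b‖ ≤ 1`.
-/

open Set Filter Topology Metric Function MeasureTheory Real

/-! ### Derivative of an injective holomorphic map -/

lemma not_eventually_const_of_injOn {f : ℂ → ℂ} {U : Set ℂ} (hU : IsOpen U)
    (hinj : InjOn f U) {a : ℂ} (ha : a ∈ U) : ¬ ∀ᶠ z in 𝓝 a, f z = f a := by
  intro h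
  have h1 : ∀ᶠ z in 𝓝 a, z = a := by
    filter_upwards [h, hU.mem_nhds ha] with z hz hzU using hinj hzU ha hz
  have h2 : ∀ᶠ z in 𝓝[≠] a, z = a := h1.filter_mono nhdsWithin_le_nhds
  obtain ⟨z, hz, hz'⟩ := (h2.and self_mem_nhdsWithin).exists
  exact hz' hz

/-- By the open mapping theorem the inverse is continuous; since the zeros of `deriv f` are isolated
it is holomorphic off an isolated point, hence everywhere by removability of the singularity. The
chain rule then forbids `deriv f a = 0`. -/
lemma deriv_ne_zero_of_injOn {f : ℂ → ℂ} {U : Set ℂ} (hU : IsOpen U)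
    (hf : DifferentiableOn ℂ f U) (hinj : InjOn f U) {a : ℂ} (ha : a ∈ U) : deriv f a ≠ 0 := by
  intro h0
  have han : ∀ z ∈ U, AnalyticAt ℂ f z := fun z hz => hf.analyticAt (hU.mem_nhds hz)
  have hopen : ∀ z ∈ U, 𝓝 (f z) ≤ map f (𝓝 z) := fun z hz =>
    (han z hz).eventually_constant_or_nhds_le_map_nhds.resolve_left
      (not_eventually_const_of_injOn hU hinj hz)
  set g := invFunOn f U
  have hgf : ∀ z ∈ U, g (f z) = z := hinj.leftInvOn_invFunOn
  have hgc : ∀ z ∈ U, ContinuousAt g (f z) := by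
    intro z hz
    have h1 : Tendsto g (map f (𝓝 z)) (𝓝 z) := by
      rw [tendsto_map'_iff]
      refine tendsto_id.congr' ?_
      filter_upwards [hU.mem_nhds hz] with x hx using (hgf x hx).symm
    have := h1.mono_left (hopen z hz)
    rwa [ContinuousAt, hgf z hz]
  have hfg : ∀ z ∈ U, ∀ᶠ y in 𝓝 (f z), f (g y) = y := by
    intro z hz
    refine (hopen z hz) ?_
    rw [mem_map]
    filter_upwards [hU.mem_nhds hz] with x hx
    simp [hgf x hx]
  have hiso : ∀ᶠ z in 𝓝[≠] a, deriv f z ≠ 0 := by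
    refine (han a ha).deriv.eventually_eq_zero_or_eventually_ne_zero.resolve_left fun h => ?_
    obtain ⟨ε, hε, hb⟩ := Metric.eventually_nhds_iff_ball.1 (h.and (hU.mem_nhds ha))
    apply not_eventually_const_of_injOn hU hinj ha
    filter_upwards [ball_mem_nhds a hε] with z hz
    exact isOpen_ball.is_const_of_deriv_eq_zero (convex_ball a ε).isPreconnected
      (hf.mono fun x hx => (hb x hx).2) (fun x hx => (hb x hx).1) hz (mem_ball_self hε)
  rw [eventually_nhdsWithin_iff] at hiso
  set V := {z | (z ∈ ({a}ᶜ : Set ℂ) → deriv f z ≠ 0) ∧ z ∈ U}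
  have hV : V ∈ 𝓝 a := hiso.and (hU.mem_nhds ha)
  have hs : f '' V ∈ 𝓝 (f a) := hopen a ha (image_mem_map hV)
  -- removable singularity for the inverse at the isolated point `f a`
  have hd : DifferentiableOn ℂ g (f '' V) := by
    refine (Complex.differentiableOn_compl_singleton_and_continuousAt_iff hs).1 ⟨?_, hgc a ha⟩
    rintro _ ⟨⟨z, hz, rfl⟩, hne⟩
    have hza : z ≠ a := by rintro rfl; exact hne rfl
    refine (HasDerivAt.of_local_left_inverse (f' := deriv f z) (hgc z hz.2) ?_ (hz.1 hza)
      (hfg z hz.2)).differentiableAt.differentiableWithinAt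
    rw [hgf z hz.2]
    exact (han z hz.2).differentiableAt.hasDerivAt
  refine not_differentiableAt_of_local_left_inverse_hasDerivAt_zero (f := f) (g := g) (a := f a)
    ?_ (hfg a ha) (hd.differentiableAt hs)
  rw [hgf a ha, ← h0]
  exact (han a ha).differentiableAt.hasDerivAt

/-! ### Images of annuli and their area -/

/-- If `F = 1 / g` on the circle of radius `ρ` is sent by the real-linear map `w ↦ w - c * conj w` into
the disc of radius `M`, then so is `F` on the whole annulus `ρ ≤ ‖z‖ < 1`. This replaces the Jordan
curve theorem in the usual proof of the area theorem. -/
lemma inclusion {g F : ℂ → ℂ} (hg : DifferentiableOn ℂ g (ball 0 1)) (hinj : InjOn g (ball 0 1))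
    (h0 : g 0 = 0) (hF : ∀ z ∈ ball (0:ℂ) 1, z ≠ 0 → F z = (g z)⁻¹) {c : ℂ} {ρ M : ℝ}
    (hρ : 0 < ρ) (hρ1 : ρ < 1)
    (hM : ∀ z : ℂ, ‖z‖ = ρ → ‖F z - c * (starRingEnd ℂ) (F z)‖ ≤ M) :
    ∀ z ∈ ball (0:ℂ) 1, ρ ≤ ‖z‖ → ‖F z - c * (starRingEnd ℂ) (F z)‖ ≤ M := by
  -- `V` is the preimage under inversion of the exterior of the disc, with `0` added. It is
  -- star-shaped, hence connected, and misses `g` of the circle of radius `ρ`; so it lies in the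
  -- image of the open disc of radius `ρ`, which injectivity separates from `g z` for `ρ ≤ ‖z‖`.
  -- The point `0` needs its own disjunct because of the convention `0⁻¹ = 0`.
  set V : Set ℂ := {w | w = 0 ∨ M < ‖w⁻¹ - c * (starRingEnd ℂ) w⁻¹‖} with hVdef
  have hsub : ball (0:ℂ) ρ ⊆ ball 0 1 := ball_subset_ball hρ1.le
  have hsubc : closedBall (0:ℂ) ρ ⊆ ball 0 1 := closedBall_subset_ball hρ1
  have hM0 : 0 ≤ M := (norm_nonneg _).trans (hM (ρ : ℂ) (by simp [abs_of_pos hρ]))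
  have hV : IsPreconnected V := by
    have : StarConvex ℝ 0 V := by
      rw [starConvex_zero_iff]
      rintro w (rfl | hw) t ht0 ht1
      · left; simp
      · rcases ht0.eq_or_lt with rfl | ht0
        · left; simp
        · right
          have e : (t • w)⁻¹ - c * (starRingEnd ℂ) (t • w)⁻¹
              = (t⁻¹ : ℝ) * (w⁻¹ - c * (starRingEnd ℂ) w⁻¹) := by
            simp only [Complex.real_smul, mul_inv, map_mul, map_inv₀, Complex.conj_ofReal,
              Complex.ofReal_inv]
            ring
          rw [e, norm_mul, Complex.norm_real, Real.norm_of_nonneg (by positivity)]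
          have : 1 ≤ t⁻¹ := (one_le_inv₀ ht0).2 ht1
          nlinarith [norm_nonneg (w⁻¹ - c * (starRingEnd ℂ) w⁻¹)]
    exact (this.isPathConnected (Or.inl rfl)).isConnected.isPreconnected
  have hA : IsOpen (g '' ball 0 ρ) := by
    have han : AnalyticOnNhd ℂ g (ball 0 ρ) := (hg.mono hsub).analyticOnNhd isOpen_ball
    refine (han.is_constant_or_isOpen (convex_ball _ _).isPreconnected).resolve_left ?_ _
      subset_rfl isOpen_ball
    rintro ⟨w, hw⟩
    have h1 : (0:ℂ) ∈ ball (0:ℂ) ρ := mem_ball_self hρ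
    have h2 : ((ρ / 2 : ℝ) : ℂ) ∈ ball (0:ℂ) ρ := by
      rw [mem_ball_zero_iff, Complex.norm_real, Real.norm_of_nonneg (by positivity)]; linarith
    have := hinj (hsub h1) (hsub h2) ((hw _ h1).trans (hw _ h2).symm)
    rw [eq_comm, Complex.ofReal_eq_zero] at this
    linarith
  have hB : IsOpen (g '' closedBall 0 ρ)ᶜ :=
    ((isCompact_closedBall _ _).image_of_continuousOn
      (hg.continuousOn.mono hsubc)).isClosed.isOpen_compl
  have hVsub : V ⊆ g '' ball 0 ρ := by
    refine hV.subset_left_of_subset_union hA hB ?_ ?_ ?_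
    · exact disjoint_compl_right.mono_left (image_mono ball_subset_closedBall)
    · intro w hw
      by_cases hw' : w ∈ g '' closedBall 0 ρ
      · left
        obtain ⟨z, hz, rfl⟩ := hw'
        rw [mem_closedBall_zero_iff] at hz
        rcases hz.lt_or_eq with h | h
        · exact ⟨z, mem_ball_zero_iff.2 h, rfl⟩
        · exfalso
          have hz1 : z ∈ ball (0:ℂ) 1 := by rw [mem_ball_zero_iff]; linarith
          have hz0 : z ≠ 0 := by rintro rfl; simp at h; linarith
          rcases hw with hw | hw
          · exact hz0 (hinj hz1 (mem_ball_self one_pos) (hw.trans h0.symm))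
          · rw [← hF z hz1 hz0] at hw
            exact absurd (hM z h) (not_le.2 hw)
      · right; exact hw'
    · exact ⟨0, Or.inl rfl, 0, mem_ball_self hρ, h0⟩
  intro z hz hzρ
  by_contra! hlt
  have hz0 : z ≠ 0 := by rintro rfl; simp at hzρ; linarith
  have hmem : g z ∈ V := by
    right; rw [← hF z hz hz0]; exact hlt
  obtain ⟨x, hx, hxz⟩ := hVsub hmem
  have := hinj (hsub hx) hz hxz
  rw [this, mem_ball_zero_iff] at hx
  linarith

lemma det_T (c : ℂ) : LinearMap.det ((LinearMap.id : ℂ →ₗ[ℝ] ℂ) -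
    (LinearMap.mulLeft ℝ c) ∘ₗ (Complex.conjAe.toLinearMap)) = 1 - ‖c‖ ^ 2 := by
  rw [← LinearMap.det_toMatrix Complex.basisOneI, Matrix.det_fin_two]
  simp [LinearMap.toMatrix_apply, Complex.basisOneI]
  rw [← Complex.normSq_eq_norm_sq, Complex.normSq_apply]; ring

lemma det_mul (a : ℂ) :
    ((ContinuousLinearMap.toSpanSingleton ℂ a).restrictScalars ℝ : ℂ →L[ℝ] ℂ).det = ‖a‖ ^ 2 := by
  simp [ContinuousLinearMap.det, LinearMap.det_restrictScalars, Algebra.norm_complex_apply,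
    Complex.normSq_eq_norm_sq]

/-- Mean value property for the real part of a holomorphic function. -/
lemma circle_integral_re {k : ℂ → ℂ} (hk : DifferentiableOn ℂ k (ball 0 1)) {r : ℝ} (hr : 0 < r)
    (hr1 : r < 1) : ∫ θ in Ioo (-π) π, (k (circleMap 0 r θ)).re = 2 * π * (k 0).re := by
  have hsubc : closedBall (0:ℂ) r ⊆ ball 0 1 := closedBall_subset_ball hr1
  have hcont : Continuous fun θ : ℝ => k (circleMap 0 r θ) := by
    refine hk.continuousOn.comp_continuous (continuous_circleMap 0 r) fun θ => hsubc ?_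
    exact circleMap_mem_closedBall 0 hr.le θ
  have h1 : circleAverage k 0 r = k 0 := by
    apply DiffContOnCl.circleAverage
    rw [abs_of_pos hr]
    exact hk.diffContOnCl_ball hsubc
  rw [circleAverage_eq_integral_add (-π)] at h1
  rw [← integral_Ioc_eq_integral_Ioo, ← intervalIntegral.integral_of_le (by linarith [pi_pos])]
  have h2 : ∫ θ in (0:ℝ)..2 * π, k (circleMap 0 r (θ + -π)) = 2 * π * k 0 := by
    rw [← h1, Complex.real_smul]
    push_cast
    rw [mul_inv_cancel_left₀]
    simp [pi_ne_zero]
  rw [intervalIntegral.integral_comp_add_right (fun θ => k (circleMap 0 r θ))] at h2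
  have e : 2 * π + -π = π := by ring
  rw [zero_add, e] at h2
  have h3 := Complex.reCLM.intervalIntegral_comp_comm (hcont.intervalIntegrable (μ := volume) (-π) π)
  simp only [Complex.reCLM_apply] at h3
  rw [h3, h2]
  rw [show (2 * π * k 0 : ℂ) = ((2 * π : ℝ) : ℂ) * k 0 by push_cast; ring, Complex.re_ofReal_mul]

/-- Polar coordinates on a closed annulus. -/
lemma annulus_integral {L : ℂ → ℝ} {ρ s : ℝ} (hρ : 0 < ρ)
    (hL : ContinuousOn L {z | ρ ≤ ‖z‖ ∧ ‖z‖ ≤ s}) :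
    ∫ z in {z : ℂ | ρ ≤ ‖z‖ ∧ ‖z‖ ≤ s}, L z =
      ∫ r in Icc ρ s, ∫ θ in Ioo (-π) π, r * L (circleMap 0 r θ) := by
  set A : Set ℂ := {z : ℂ | ρ ≤ ‖z‖ ∧ ‖z‖ ≤ s} with hA
  have hAm : MeasurableSet A :=
    ((isClosed_le continuous_const continuous_norm).inter
      (isClosed_le continuous_norm continuous_const)).measurableSet
  have hsymm : ∀ p : ℝ × ℝ, Complex.polarCoord.symm p = circleMap 0 p.1 p.2 := by
    intro p
    simp [circleMap, Complex.exp_mul_I]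
  rw [← integral_indicator hAm, ← Complex.integral_comp_polarCoord_symm]
  have h1 : ∀ p ∈ polarCoord.target, p.1 • A.indicator L (Complex.polarCoord.symm p) =
      (Icc ρ s ×ˢ Ioo (-π) π).indicator (fun p : ℝ × ℝ => p.1 * L (circleMap 0 p.1 p.2)) p := by
    rintro ⟨r, θ⟩ hp
    simp only [polarCoord_target, mem_prod, mem_Ioi] at hp
    rw [hsymm]
    simp only [indicator, hA, mem_ofPred_eq, mem_prod, mem_Icc, norm_circleMap_zero,
      abs_of_pos hp.1, hp.2, and_true, smul_eq_mul, mul_ite, mul_zero]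
  have ht : MeasurableSet (polarCoord.target) := polarCoord.open_target.measurableSet
  have hm : MeasurableSet (Icc ρ s ×ˢ Ioo (-π) π) := measurableSet_Icc.prod measurableSet_Ioo
  rw [setIntegral_congr_fun ht h1, setIntegral_indicator hm]
  have hint : polarCoord.target ∩ Icc ρ s ×ˢ Ioo (-π) π = Icc ρ s ×ˢ Ioo (-π) π := by
    apply inter_eq_right.2
    rintro ⟨r, θ⟩ ⟨h1, h2⟩
    simp only [polarCoord_target, mem_prod, mem_Ioi]
    exact ⟨hρ.trans_le h1.1, h2⟩
  rw [hint, Measure.volume_eq_prod, setIntegral_prod]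
  have hc : ContinuousOn (fun p : ℝ × ℝ => p.1 * L (circleMap 0 p.1 p.2))
      (Icc ρ s ×ˢ Icc (-π) π) := by
    refine continuousOn_fst.mul (hL.comp ?_ ?_)
    · have : Continuous fun p : ℝ × ℝ => circleMap 0 p.1 p.2 := by
        unfold circleMap; fun_prop
      exact this.continuousOn
    · rintro ⟨r, θ⟩ ⟨h1, h2⟩
      have : 0 < r := hρ.trans_le h1.1
      simpa [hA, abs_of_pos this] using h1
  exact (hc.integrableOn_compact (isCompact_Icc.prod isCompact_Icc)).mono_set
    (prod_mono subset_rfl Ioo_subset_Icc_self)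

/-- Lower bound for the Dirichlet energy of `1/z + h` on an annulus, where `m` plays the role of the
derivative of `h`; equality holds when `m` is constant. -/
lemma annulus_energy {m : ℂ → ℂ} (hm : DifferentiableOn ℂ m (ball 0 1)) {ρ s : ℝ} (hρ : 0 < ρ)
    (hρs : ρ ≤ s) (hs : s < 1) :
    π * ((ρ ^ 2)⁻¹ - (s ^ 2)⁻¹ + ‖m 0‖ ^ 2 * (s ^ 2 - ρ ^ 2)) ≤
      ∫ z in {z : ℂ | ρ ≤ ‖z‖ ∧ ‖z‖ ≤ s}, ‖-(z ^ 2)⁻¹ + m z‖ ^ 2 := by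
  set b := m 0 with hb
  set A : Set ℂ := {z : ℂ | ρ ≤ ‖z‖ ∧ ‖z‖ ≤ s} with hA
  have hAc : IsCompact A := by
    refine (isCompact_closedBall (0:ℂ) s).of_isClosed_subset
      ((isClosed_le continuous_const continuous_norm).inter
      (isClosed_le continuous_norm continuous_const)) ?_
    rintro z ⟨_, h⟩; simpa using h
  have hA0 : ∀ z ∈ A, z ≠ 0 := by rintro z ⟨h, _⟩ rfl; simp at h; linarith
  have hA1 : A ⊆ ball 0 1 := by rintro z ⟨_, h⟩; simpa using h.trans_lt hs
  have hmc : ContinuousOn m A := hm.continuousOn.mono hA1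
  -- Minorant of the integrand coming from `‖m z‖ ^ 2 ≥ 2 * re (conj (m 0) * m z) - ‖m 0‖ ^ 2`.
  -- On each circle it is the real part of a holomorphic function, because `conj (z ^ 2)⁻¹`
  -- equals `z ^ 2 / ‖z‖ ^ 4`, so its circular averages are given by the value at `0`.
  set L : ℂ → ℝ := fun z => (‖z‖ ^ 4)⁻¹ - ‖b‖ ^ 2 +
    (-2 * ((‖z‖ ^ 4)⁻¹ : ℝ) * (z ^ 2 * m z) + 2 * (starRingEnd ℂ) b * m z).re with hLdef
  have hLc : ContinuousOn L A := by
    have h4 : ContinuousOn (fun z : ℂ => (‖z‖ ^ 4)⁻¹) A :=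
      ContinuousOn.inv₀ (by fun_prop) fun z hz => by simpa using hA0 z hz
    have h4' : ContinuousOn (fun z : ℂ => (((‖z‖ ^ 4)⁻¹ : ℝ) : ℂ)) A :=
      Complex.continuous_ofReal.comp_continuousOn h4
    exact (h4.sub continuousOn_const).add (Complex.continuous_re.comp_continuousOn (by fun_prop))
  have hRc : ContinuousOn (fun z => ‖-(z ^ 2)⁻¹ + m z‖ ^ 2) A := by
    have : ContinuousOn (fun z : ℂ => (z ^ 2)⁻¹) A :=
      ContinuousOn.inv₀ (by fun_prop) fun z hz => by simpa using hA0 z hz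
    fun_prop
  refine le_trans (le_of_eq ?_) (setIntegral_mono_on (hLc.integrableOn_compact hAc)
    (hRc.integrableOn_compact hAc) hAc.measurableSet ?_)
  · rw [annulus_integral hρ hLc]
    have hin : ∀ r ∈ Icc ρ s, (∫ θ in Ioo (-π) π, r * L (circleMap 0 r θ)) =
        2 * π * ((r ^ 3)⁻¹ + ‖b‖ ^ 2 * r) := by
      intro r hr
      have hr0 : 0 < r := hρ.trans_le hr.1
      have hr1 : r < 1 := hr.2.trans_lt hs
      set k : ℂ → ℂ := fun z => ((r ^ 4)⁻¹ - ‖b‖ ^ 2 : ℝ) +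
        (-2 * ((r ^ 4)⁻¹ : ℝ) * (z ^ 2 * m z) + 2 * (starRingEnd ℂ) b * m z) with hk
      have hkd : DifferentiableOn ℂ k (ball 0 1) := by
        simp only [hk]; fun_prop
      have : ∀ θ, L (circleMap 0 r θ) = (k (circleMap 0 r θ)).re := by
        intro θ
        simp only [hLdef, hk, norm_circleMap_zero, abs_of_pos hr0, Complex.add_re,
          Complex.ofReal_re]
      simp only [this]
      rw [integral_const_mul, circle_integral_re hkd hr0 hr1]
      have : (k 0).re = (r ^ 4)⁻¹ + ‖b‖ ^ 2 := by
        have : k 0 = (((r ^ 4)⁻¹ + ‖b‖ ^ 2 : ℝ) : ℂ) := by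
          simp only [hk, ← hb]
          have := Complex.conj_mul' b
          push_cast
          linear_combination 2 * this
        rw [this, Complex.ofReal_re]
      rw [this]
      field_simp
    rw [setIntegral_congr_fun measurableSet_Icc hin, integral_Icc_eq_integral_Ioc,
      ← intervalIntegral.integral_of_le hρs]
    rw [intervalIntegral.integral_eq_sub_of_hasDerivAt
      (f := fun r => π * (-(r ^ 2)⁻¹ + ‖b‖ ^ 2 * r ^ 2))]
    · ring
    · intro r hr
      rw [uIcc_of_le hρs] at hr
      have hr0 : r ≠ 0 := (hρ.trans_le hr.1).ne'
      have h1 := ((((hasDerivAt_pow 2 r).fun_inv (by positivity)).fun_neg).fun_add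
        ((hasDerivAt_pow 2 r).const_mul (‖b‖ ^ 2))).const_mul π
      refine h1.congr_deriv ?_
      push_cast
      field_simp
    · apply ContinuousOn.intervalIntegrable
      rw [uIcc_of_le hρs]
      have : ContinuousOn (fun r : ℝ => (r ^ 3)⁻¹) (Icc ρ s) :=
        ContinuousOn.inv₀ (by fun_prop) fun z hz => by simpa using (hρ.trans_le hz.1).ne'
      fun_prop
  · intro z hz
    have hz0 := hA0 z hz
    have e1 : (‖z‖ ^ 4)⁻¹ = ‖(z ^ 2)⁻¹‖ ^ 2 := by simp; ring
    have e2 : (((‖z‖ ^ 4)⁻¹ : ℝ) : ℂ) * z ^ 2 = (starRingEnd ℂ) (z ^ 2)⁻¹ := by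
      have := Complex.conj_mul' z
      have hc0 : (starRingEnd ℂ) z ≠ 0 := by simpa using hz0
      have hn : (‖z‖ : ℂ) ^ 4 = ((starRingEnd ℂ) z * z) ^ 2 := by rw [this]; ring
      push_cast
      rw [hn, map_inv₀, map_pow]
      field_simp
    simp only [hLdef]
    rw [show (-2 * (((‖z‖ ^ 4)⁻¹ : ℝ) : ℂ) * (z ^ 2 * m z)) = -2 * ((starRingEnd ℂ) (z ^ 2)⁻¹ * m z) by
      rw [← e2]; ring, e1]
    set u := (z ^ 2)⁻¹
    have hsq : 0 ≤ ‖m z - b‖ ^ 2 := by positivity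
    simp only [← Complex.normSq_eq_norm_sq, Complex.normSq_apply] at hsq ⊢
    simp at hsq ⊢
    nlinarith

/-! ### The area theorem -/

/-- Area comparison: the image of the annulus `ρ ≤ ‖z‖ ≤ s` under `1 / g = 1/z + h` followed by
`w ↦ w - c * conj w` lies in the disc of radius `M`, where `1 - ‖c‖ ^ 2` is the determinant of the
linear map. The relation `g z * (1 + z * h z) = z` encodes `1 / g = 1/z + h` without dividing by
zero at the origin. -/
lemma area_le {g h : ℂ → ℂ} (hg : DifferentiableOn ℂ g (ball 0 1)) (hinj : InjOn g (ball 0 1))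
    (hh : DifferentiableOn ℂ h (ball 0 1)) (hgh : ∀ z ∈ ball (0:ℂ) 1, g z * (1 + z * h z) = z)
    {c : ℂ} {ρ s M : ℝ} (hρ : 0 < ρ) (hρs : ρ ≤ s) (hs : s < 1)
    (hM : ∀ z : ℂ, ‖z‖ = ρ → ‖(z⁻¹ + h z) - c * (starRingEnd ℂ) (z⁻¹ + h z)‖ ≤ M) :
    (1 - ‖c‖ ^ 2) * ((ρ ^ 2)⁻¹ - (s ^ 2)⁻¹ + ‖deriv h 0‖ ^ 2 * (s ^ 2 - ρ ^ 2)) ≤ M ^ 2 := by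
  have hM0 : 0 ≤ M := (norm_nonneg _).trans (hM (ρ : ℂ) (by simp [abs_of_pos hρ]))
  rcases le_or_gt (1 - ‖c‖ ^ 2) 0 with hc | hc
  · refine le_trans (mul_nonpos_of_nonpos_of_nonneg hc ?_) (sq_nonneg M)
    have h1 : ρ ^ 2 ≤ s ^ 2 := by gcongr
    have h2 : (s ^ 2)⁻¹ ≤ (ρ ^ 2)⁻¹ := by gcongr
    have h3 : 0 ≤ ‖deriv h 0‖ ^ 2 * (s ^ 2 - ρ ^ 2) := mul_nonneg (sq_nonneg _) (by linarith)
    linarith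
  set F : ℂ → ℂ := fun z => z⁻¹ + h z with hFdef
  set A : Set ℂ := {z : ℂ | ρ ≤ ‖z‖ ∧ ‖z‖ ≤ s} with hA
  have hAm : MeasurableSet A :=
    ((isClosed_le continuous_const continuous_norm).inter
      (isClosed_le continuous_norm continuous_const)).measurableSet
  have hA0 : ∀ z ∈ A, z ≠ 0 := by rintro z ⟨h, _⟩ rfl; simp at h; linarith
  have hA1 : A ⊆ ball 0 1 := by rintro z ⟨_, h⟩; simpa using h.trans_lt hs
  have h0 : g 0 = 0 := by simpa using hgh 0 (mem_ball_self one_pos)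
  have hF : ∀ z ∈ ball (0:ℂ) 1, z ≠ 0 → F z = (g z)⁻¹ := by
    intro z hz hz0
    have h1 := hgh z hz
    have h2 : g z ≠ 0 := by intro h2; rw [h2, zero_mul] at h1; exact hz0 h1.symm
    simp only [hFdef]
    field_simp
    linear_combination h1
  have hFinj : InjOn F A := by
    intro z hz w hw hzw
    rw [hF z (hA1 hz) (hA0 z hz), hF w (hA1 hw) (hA0 w hw), inv_inj] at hzw
    exact hinj (hA1 hz) (hA1 hw) hzw
  have hFd : ∀ z ∈ A, HasFDerivWithinAt F
      ((ContinuousLinearMap.toSpanSingleton ℂ (-(z ^ 2)⁻¹ + deriv h z)).restrictScalars ℝ : ℂ →L[ℝ] ℂ)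
      A z := by
    intro z hz
    have h1 : HasDerivAt F (-(z ^ 2)⁻¹ + deriv h z) z :=
      (hasDerivAt_inv (hA0 z hz)).fun_add
        (hh.differentiableAt (isOpen_ball.mem_nhds (hA1 hz))).hasDerivAt
    exact (h1.hasFDerivAt.restrictScalars ℝ).hasFDerivWithinAt
  have hvol : volume.real (F '' A) = ∫ z in A, ‖-(z ^ 2)⁻¹ + deriv h z‖ ^ 2 := by
    have := integral_image_eq_integral_abs_det_fderiv_smul volume hAm hFd hFinj
      (fun _ => (1 : ℝ))
    simp only [det_mul] at this
    simpa using this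
  set T : ℂ →ₗ[ℝ] ℂ := (LinearMap.id : ℂ →ₗ[ℝ] ℂ) -
    (LinearMap.mulLeft ℝ c) ∘ₗ (Complex.conjAe.toLinearMap) with hT
  have hTdet : LinearMap.det T = 1 - ‖c‖ ^ 2 := det_T c
  have hsub : T '' (F '' A) ⊆ closedBall 0 M := by
    rintro _ ⟨_, ⟨z, hz, rfl⟩, rfl⟩
    rw [mem_closedBall_zero_iff]
    exact inclusion hg hinj h0 hF hρ (hρs.trans_lt hs) hM z (hA1 hz) hz.1
  have hle : volume.real (T '' (F '' A)) ≤ volume.real (closedBall (0:ℂ) M) :=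
    measureReal_mono hsub measure_closedBall_lt_top.ne
  have e1 : volume.real (T '' (F '' A)) = (1 - ‖c‖ ^ 2) * volume.real (F '' A) := by
    rw [measureReal_def, Measure.addHaar_image_linearMap, hTdet, ENNReal.toReal_mul,
      ENNReal.toReal_ofReal (abs_nonneg _), abs_of_pos hc, measureReal_def]
  have e2 : volume.real (closedBall (0:ℂ) M) = π * M ^ 2 := by
    rw [measureReal_def, Complex.volume_closedBall, ENNReal.toReal_mul, ENNReal.toReal_pow,
      ENNReal.toReal_ofReal hM0]
    simp [mul_comm]
  rw [e1, e2, hvol] at hle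
  have hen := annulus_energy (m := deriv h) (hh.deriv isOpen_ball) hρ hρs hs
  have := (mul_le_mul_of_nonneg_left hen hc.le).trans hle
  have hπ := pi_pos
  refine le_of_mul_le_mul_left ?_ hπ
  linarith

/-- First-coefficient case of the area theorem of Gronwall: if `1 / g = 1/z + h` with `g` injective and
`h 0 = 0`, then `‖deriv h 0‖ ≤ 1`. -/
lemma area_theorem {g h : ℂ → ℂ} (hg : DifferentiableOn ℂ g (ball 0 1)) (hinj : InjOn g (ball 0 1))
    (hh : DifferentiableOn ℂ h (ball 0 1)) (hgh : ∀ z ∈ ball (0:ℂ) 1, g z * (1 + z * h z) = z)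
    (h0 : h 0 = 0) : ‖deriv h 0‖ ≤ 1 := by
  set b := deriv h 0 with hb
  have hd : HasDerivAt h b 0 :=
    (hh.differentiableAt (isOpen_ball.mem_nhds (mem_ball_self one_pos))).hasDerivAt
  have key : ∀ s : ℝ, 0 < s → s < 1 → ∀ ε : ℝ, 0 < ε →
      -(s ^ 2)⁻¹ + ‖b‖ ^ 2 * s ^ 2 ≤ 4 * ε := by
    intro s hs0 hs ε hε
    have h1 : ∀ᶠ z in 𝓝 (0:ℂ), ‖h z - b * z‖ ≤ ε * ‖z‖ := by
      have := hd.isLittleO.def hε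
      simpa [h0, mul_comm] using this
    have h2 : ∀ᶠ z in 𝓝 (0:ℂ), ‖z‖ * ‖b‖ * ‖h z‖ < ε := by
      have : ContinuousAt (fun z => ‖z‖ * ‖b‖ * ‖h z‖) 0 := by
        have := hd.continuousAt
        fun_prop
      exact this.eventually_lt_const (by simpa using hε)
    obtain ⟨δ, hδ, hball⟩ := Metric.eventually_nhds_iff_ball.1 (h1.and h2)
    have hineq : ∀ᶠ ρ in 𝓝[>] (0:ℝ),
        -(s ^ 2)⁻¹ + ‖b‖ ^ 2 * (s ^ 2 - ρ ^ 2) - ‖b‖ ^ 2 * ρ ^ 2 *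
          (1 + ρ ^ 2 * (-(s ^ 2)⁻¹ + ‖b‖ ^ 2 * (s ^ 2 - ρ ^ 2))) ≤ 4 * ε + 4 * ε ^ 2 * ρ ^ 2 := by
      filter_upwards [Ioo_mem_nhdsGT (lt_min hδ hs0)] with ρ hρ
      have hρ0 := hρ.1
      have hρδ := hρ.2.trans_le (min_le_left _ _)
      have hρs := hρ.2.trans_le (min_le_right _ _)
      -- `F = 1/z + b z + o(z)` sends the circle of radius `ρ` close to an ellipse. Since
      -- `ρ ^ 2 * conj z⁻¹ = z` there, the choice `c = b * ρ ^ 2` cancels the term `b z` and leaves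
      -- a curve in the disc of radius `ρ⁻¹ + o(ρ)`.
      have hM : ∀ z : ℂ, ‖z‖ = ρ → ‖(z⁻¹ + h z) - (b * ρ ^ 2) * (starRingEnd ℂ) (z⁻¹ + h z)‖
          ≤ ρ⁻¹ + 2 * ε * ρ := by
        intro z hz
        obtain ⟨a1, a2⟩ := hball z (by rw [mem_ball_zero_iff, hz]; exact hρδ)
        have hz0 : z ≠ 0 := by rintro rfl; simp at hz; linarith
        have hcj : (ρ : ℂ) ^ 2 * (starRingEnd ℂ) z⁻¹ = z := by
          rw [← hz, ← Complex.conj_mul', map_inv₀]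
          have : (starRingEnd ℂ) z ≠ 0 := by simpa using hz0
          field_simp
        have e : (z⁻¹ + h z) - (b * ρ ^ 2) * (starRingEnd ℂ) (z⁻¹ + h z) =
            z⁻¹ + (h z - b * z) - b * ρ ^ 2 * (starRingEnd ℂ) (h z) := by
          rw [map_add]; linear_combination (-b) * hcj
        rw [e]
        have n1 : ‖b * (ρ:ℂ) ^ 2 * (starRingEnd ℂ) (h z)‖ ≤ ε * ρ := by
          rw [norm_mul, norm_mul, norm_pow, Complex.norm_real, Real.norm_of_nonneg hρ0.le,
            RCLike.norm_conj]
          rw [hz] at a2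
          nlinarith
        calc _ ≤ ‖z⁻¹‖ + ‖h z - b * z‖ + ‖b * (ρ:ℂ) ^ 2 * (starRingEnd ℂ) (h z)‖ :=
              (norm_sub_le _ _).trans (by gcongr; exact norm_add_le _ _)
          _ ≤ ρ⁻¹ + ε * ρ + ε * ρ := by
              rw [norm_inv, hz]; rw [hz] at a1; gcongr
          _ = _ := by ring
      have := area_le hg hinj hh hgh hρ0 hρs.le hs hM
      rw [norm_mul, norm_pow, Complex.norm_real, Real.norm_of_nonneg hρ0.le, ← hb] at this
      have e1 : (ρ⁻¹ + 2 * ε * ρ) ^ 2 = (ρ ^ 2)⁻¹ + 4 * ε + 4 * ε ^ 2 * ρ ^ 2 := by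
        field_simp; ring
      have e2 : (1 - (‖b‖ * ρ ^ 2) ^ 2) * ((ρ ^ 2)⁻¹ - (s ^ 2)⁻¹ + ‖b‖ ^ 2 * (s ^ 2 - ρ ^ 2)) =
        (ρ ^ 2)⁻¹ + (-(s ^ 2)⁻¹ + ‖b‖ ^ 2 * (s ^ 2 - ρ ^ 2) - ‖b‖ ^ 2 * ρ ^ 2 *
          (1 + ρ ^ 2 * (-(s ^ 2)⁻¹ + ‖b‖ ^ 2 * (s ^ 2 - ρ ^ 2)))) := by
        field_simp; ring
      rw [e1, e2] at this
      linarith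
    -- after the cancellation of `(ρ ^ 2)⁻¹`, both sides are continuous at `ρ = 0`
    have hl : Continuous fun ρ : ℝ => -(s ^ 2)⁻¹ + ‖b‖ ^ 2 * (s ^ 2 - ρ ^ 2) - ‖b‖ ^ 2 * ρ ^ 2 *
          (1 + ρ ^ 2 * (-(s ^ 2)⁻¹ + ‖b‖ ^ 2 * (s ^ 2 - ρ ^ 2))) := by fun_prop
    have hr : Continuous fun ρ : ℝ => 4 * ε + 4 * ε ^ 2 * ρ ^ 2 := by fun_prop
    have := le_of_tendsto_of_tendsto (hl.continuousAt (x := 0) |>.mono_left nhdsWithin_le_nhds)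
      (hr.continuousAt (x := 0) |>.mono_left nhdsWithin_le_nhds) hineq
    simpa using this
  have key2 : ∀ s : ℝ, 0 < s → s < 1 → ‖b‖ ^ 2 * s ^ 4 ≤ 1 := by
    intro s hs0 hs
    have : -(s ^ 2)⁻¹ + ‖b‖ ^ 2 * s ^ 2 ≤ 0 := by
      refine le_of_forall_pos_le_add fun ε hε => ?_
      have := key s hs0 hs (ε / 4) (by positivity)
      linarith
    have h2 : 0 < s ^ 2 := by positivity
    have h3 : ‖b‖ ^ 2 * s ^ 2 ≤ (s ^ 2)⁻¹ := by linarith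
    calc ‖b‖ ^ 2 * s ^ 4 = ‖b‖ ^ 2 * s ^ 2 * s ^ 2 := by ring
      _ ≤ (s ^ 2)⁻¹ * s ^ 2 := by gcongr
      _ = 1 := inv_mul_cancel₀ h2.ne'
  have hc : Continuous fun s : ℝ => ‖b‖ ^ 2 * s ^ 4 := by fun_prop
  have : ‖b‖ ^ 2 * 1 ^ 4 ≤ 1 := by
    refine le_of_tendsto (hc.continuousAt (x := 1) |>.mono_left (nhdsWithin_le_nhds (s := Iio 1))) ?_
    filter_upwards [Ioo_mem_nhdsLT (zero_lt_one (α := ℝ))] with s hs using key2 s hs.1 hs.2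
  rw [one_pow, mul_one] at this
  exact (sq_le_one_iff₀ (norm_nonneg _)).1 this

/-! ### The second coefficient of a univalent function -/

/-- A nowhere vanishing holomorphic function on the disc has a holomorphic square root (values outside
the disc are only required to square to those of `p`). -/
lemma exists_sqrt {p : ℂ → ℂ} (hp : DifferentiableOn ℂ p (ball 0 1))
    (hp0 : ∀ z ∈ ball (0:ℂ) 1, p z ≠ 0) :
    ∃ q : ℂ → ℂ, DifferentiableOn ℂ q (ball 0 1) ∧ ∀ z, q z ^ 2 = p z := by
  have hsc : IsSimplyConnected (ball (0:ℂ) 1) := by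
    have : ContractibleSpace (ball (0:ℂ) 1) :=
      (convex_ball (0:ℂ) 1).contractibleSpace ⟨0, mem_ball_self one_pos⟩
    exact (inferInstance : SimplyConnectedSpace (ball (0:ℂ) 1))
  obtain ⟨q, hqc, hq⟩ := Complex.exists_continuousOn_pow_eq hsc isOpen_ball hp.continuousOn
    (by rintro ⟨z, hz, hz0⟩; exact hp0 z hz hz0) two_ne_zero
  refine ⟨q, fun z hz => ?_, hq⟩
  have hqz : q z ≠ 0 := by
    intro h; apply hp0 z hz; rw [← hq, h]; simp
  have hqa := hqc.continuousAt (isOpen_ball.mem_nhds hz)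
  have hpd := hp.differentiableAt (isOpen_ball.mem_nhds hz)
  -- `q y - q z = (p y - p z) / (q y + q z)` gives the difference quotient
  refine DifferentiableAt.differentiableWithinAt
    (HasDerivAt.differentiableAt (f' := deriv p z / (q z + q z)) ?_)
  have hs : q z + q z ≠ 0 := by rw [← two_mul]; exact mul_ne_zero two_ne_zero hqz
  rw [hasDerivAt_iff_tendsto_slope]
  have h1 := hasDerivAt_iff_tendsto_slope.1 hpd.hasDerivAt
  have h2 : Tendsto (fun y => q y + q z) (𝓝[≠] z) (𝓝 (q z + q z)) :=
    (hqa.add continuousAt_const).mono_left nhdsWithin_le_nhds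
  refine (h1.div h2 hs).congr' ?_
  filter_upwards [h2.eventually_ne hs] with y hy
  simp only [Pi.div_apply, slope_def_field, ← hq]
  rw [div_div, mul_comm, ← div_div]
  congr 1
  field_simp
  ring

/-- The second-coefficient bound of Bieberbach, `|a₂| ≤ 2` for normalised univalent functions, written
without normalisation. It is the area theorem for the odd square root transform of `f`. -/
lemma bieberbach {f : ℂ → ℂ} (hf : DifferentiableOn ℂ f (ball 0 1))
    (hinj : InjOn f (ball 0 1)) : ‖deriv (deriv f) 0‖ ≤ 4 * ‖deriv f 0‖ := by
  have hB : ball (0:ℂ) 1 ∈ 𝓝 0 := ball_mem_nhds 0 one_pos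
  have h0 : (0:ℂ) ∈ ball (0:ℂ) 1 := mem_ball_self one_pos
  have hd0 : deriv f 0 ≠ 0 := deriv_ne_zero_of_injOn isOpen_ball hf hinj h0
  set p := dslope f 0 with hpdef
  have hp : DifferentiableOn ℂ p (ball 0 1) := (Complex.differentiableOn_dslope hB).2 hf
  have hfp : ∀ z, f z = f 0 + z * p z := by
    intro z
    have := sub_smul_dslope f 0 z
    simp only [sub_zero, smul_eq_mul] at this
    rw [hpdef, this]; ring
  have hp00 : p 0 = deriv f 0 := dslope_same f 0
  have hp0 : ∀ z ∈ ball (0:ℂ) 1, p z ≠ 0 := by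
    intro z hz h
    by_cases hz0 : z = 0
    · rw [hz0, hp00] at h; exact hd0 h
    · apply hz0; apply hinj hz h0; rw [hfp z, h]; simp
  have hf2 : deriv (deriv f) 0 = 2 * deriv p 0 := by
    have e : deriv f =ᶠ[𝓝 0] fun z => p z + z * deriv p z := by
      filter_upwards [hB] with z hz
      have hpz := (hp.differentiableAt (isOpen_ball.mem_nhds hz)).hasDerivAt
      have := ((hasDerivAt_id z).fun_mul hpz).const_add (f 0)
      have h2 : f = fun z => f 0 + id z * p z := funext hfp
      rw [← h2] at this
      rw [this.deriv]; simp
    rw [e.deriv_eq]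
    have h1 := (hp.differentiableAt hB).hasDerivAt
    have h2 := ((hp.deriv isOpen_ball).differentiableAt hB).hasDerivAt
    have := (h1.fun_add ((hasDerivAt_id (0:ℂ)).fun_mul h2)).deriv
    simp only [id] at this
    rw [this]; ring
  obtain ⟨q, hq, hqp⟩ := exists_sqrt hp hp0
  have hq0 : ∀ z ∈ ball (0:ℂ) 1, q z ≠ 0 := by
    intro z hz h; apply hp0 z hz; rw [← hqp, h]; simp
  have hq00 := hq0 0 h0
  have hsq : MapsTo (fun z : ℂ => z ^ 2) (ball 0 1) (ball 0 1) := by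
    intro z hz
    rw [mem_ball_zero_iff] at hz ⊢
    rw [norm_pow]
    exact pow_lt_one₀ (norm_nonneg _) hz two_ne_zero
  have hsqd : DifferentiableOn ℂ (fun z : ℂ => z ^ 2) (ball 0 1) := by fun_prop
  set k : ℂ → ℂ := fun z => q 0 / q z with hk
  have hkd : DifferentiableOn ℂ k (ball 0 1) := (differentiableOn_const _).fun_div hq hq0
  have hk0 : k 0 = 1 := div_self hq00
  set e := dslope k 0 with he
  have hed : DifferentiableOn ℂ e (ball 0 1) := (Complex.differentiableOn_dslope hB).2 hkd
  have hke : ∀ z, k z = 1 + z * e z := by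
    intro z
    have := sub_smul_dslope k 0 z
    simp only [sub_zero, smul_eq_mul] at this
    rw [he, this, hk0]; ring
  have he0 : e 0 = deriv k 0 := dslope_same k 0
  have hqd := (hq.differentiableAt hB).hasDerivAt
  have hpq : deriv p 0 = 2 * q 0 * deriv q 0 := by
    have h2 : p = fun z => q z ^ 2 := funext fun z => (hqp z).symm
    rw [h2, (hqd.fun_pow 2).deriv]; push_cast; ring
  have hkq : deriv k 0 = - deriv q 0 / q 0 := by
    have := ((hasDerivAt_const (0:ℂ) (q 0)).fun_div hqd hq00).deriv
    rw [hk, this]; field_simp; ring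
  -- With `f = f 0 + z * q z ^ 2`, the function `g z = z * q (z ^ 2) / q 0` is injective because
  -- `g z ^ 2` determines `f (z ^ 2)` and `g` is odd; moreover `1 / g z = k (z ^ 2) / z` is
  -- `1/z + z * e (z ^ 2)`.
  have harea := area_theorem (g := fun z => z * q (z ^ 2) / q 0) (h := fun z => z * e (z ^ 2))
    ?_ ?_ ?_ ?_ ?_
  · have hh : deriv (fun z => z * e (z ^ 2)) 0 = e 0 := by
      have hc : DifferentiableAt ℂ (fun z : ℂ => e (z ^ 2)) 0 :=
        (hed.comp hsqd hsq).differentiableAt hB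
      have := ((hasDerivAt_id (0:ℂ)).fun_mul hc.hasDerivAt).deriv
      simpa using this
    rw [hh, he0, hkq, norm_div, norm_neg, div_le_one (norm_pos_iff.2 hq00)] at harea
    rw [hf2, hpq, ← hp00, ← hqp 0]
    simp only [norm_mul, norm_pow, Complex.norm_ofNat]
    nlinarith [norm_nonneg (q 0)]
  · exact (differentiableOn_id.fun_mul (hq.comp hsqd hsq)).div_const _
  · intro z hz w hw hzw
    have hzw' : z * q (z ^ 2) = w * q (w ^ 2) := by
      simpa [div_left_inj' hq00] using hzw
    have h1 : f (z ^ 2) = f (w ^ 2) := by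
      rw [hfp, hfp (w ^ 2), ← hqp, ← hqp, ← mul_pow, ← mul_pow, hzw']
    have h2 := hinj (hsq hz) (hsq hw) h1
    rcases sq_eq_sq_iff_eq_or_eq_neg.1 h2 with h | h
    · exact h
    · rw [h] at hzw'
      have hne := hq0 _ (hsq hw)
      simp only [even_two, Even.neg_pow] at hzw' hne
      have : w = 0 := by
        have h3 : w * q (w ^ 2) = 0 := by linear_combination (-1/2) * hzw'
        exact (mul_eq_zero.1 h3).resolve_right hne
      rw [h, this]; simp
  · exact differentiableOn_id.fun_mul (hed.comp hsqd hsq)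
  · intro z hz
    have h1 := hke (z ^ 2)
    have hne := hq0 _ (hsq hz)
    have e1 : 1 + z * (z * e (z ^ 2)) = q 0 / q (z ^ 2) := by
      rw [← show k (z ^ 2) = q 0 / q (z ^ 2) from rfl, h1]; ring
    rw [e1]
    field_simp
  · simp

/-! ### Distortion and growth -/

/-- The bound of Bieberbach transported from `0` to `a` by the disc automorphism
`z ↦ (z + a) / (1 + conj a * z)`. -/
lemma koebe_bound {f : ℂ → ℂ} (hf : DifferentiableOn ℂ f (ball 0 1))
    (hinj : InjOn f (ball 0 1)) {a : ℂ} (ha : a ∈ ball (0:ℂ) 1) :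
    ‖deriv (deriv f) a‖ * (1 - ‖a‖ ^ 2) ≤ (4 + 2 * ‖a‖) * ‖deriv f a‖ := by
  have hB : ball (0:ℂ) 1 ∈ 𝓝 0 := ball_mem_nhds 0 one_pos
  have ha1 : ‖a‖ < 1 := mem_ball_zero_iff.1 ha
  have hpos : 0 < 1 - ‖a‖ ^ 2 := by nlinarith [norm_nonneg a]
  set c := (starRingEnd ℂ) a with hc
  have hca : c * a = ((‖a‖ ^ 2 : ℝ) : ℂ) := by rw [hc, Complex.conj_mul']; push_cast; rfl
  have hcn : ‖c‖ = ‖a‖ := RCLike.norm_conj a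
  have hden : ∀ z ∈ ball (0:ℂ) 1, 1 + c * z ≠ 0 := by
    intro z hz h
    have hz1 : ‖z‖ < 1 := mem_ball_zero_iff.1 hz
    have h1 : ‖c * z‖ = 1 := by rw [eq_neg_of_add_eq_zero_right h]; simp
    rw [norm_mul, hcn] at h1
    nlinarith [norm_nonneg a, norm_nonneg z]
  set μ : ℂ → ℂ := fun z => (z + a) / (1 + c * z) with hμ
  have hμ0 : μ 0 = a := by simp [hμ]
  have hmaps : MapsTo μ (ball 0 1) (ball 0 1) := by
    intro z hz
    have hz1 : ‖z‖ < 1 := mem_ball_zero_iff.1 hz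
    rw [mem_ball_zero_iff, hμ, norm_div, div_lt_one (norm_pos_iff.2 (hden z hz))]
    have hid : ‖1 + c * z‖ ^ 2 - ‖z + a‖ ^ 2 = (1 - ‖z‖ ^ 2) * (1 - ‖a‖ ^ 2) := by
      simp only [← Complex.normSq_eq_norm_sq, Complex.normSq_apply, hc]
      simp
      ring
    have hz2 : 0 < 1 - ‖z‖ ^ 2 := by nlinarith [norm_nonneg z]
    have := mul_pos hz2 hpos
    exact lt_of_pow_lt_pow_left₀ 2 (norm_nonneg _) (by linarith)
  have hμinj : InjOn μ (ball 0 1) := by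
    intro z hz w hw hzw
    simp only [hμ] at hzw
    rw [div_eq_div_iff (hden z hz) (hden w hw)] at hzw
    have h1 : (z - w) * ((1 - ‖a‖ ^ 2 : ℝ) : ℂ) = 0 := by
      push_cast at hca ⊢
      linear_combination hzw + (z - w) * hca
    have h2 : ((1 - ‖a‖ ^ 2 : ℝ) : ℂ) ≠ 0 := Complex.ofReal_ne_zero.2 hpos.ne'
    exact sub_eq_zero.1 ((mul_eq_zero.1 h1).resolve_right h2)
  have hμd : ∀ z ∈ ball (0:ℂ) 1, HasDerivAt μ ((1 - c * a) / (1 + c * z) ^ 2) z := by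
    intro z hz
    have := ((hasDerivAt_id z).add_const a).fun_div
      (((hasDerivAt_id z).const_mul c).const_add 1) (hden z hz)
    refine this.congr_deriv ?_
    congr 1
    simp only [id]; ring
  have hbie := bieberbach (f := f ∘ μ)
    (hf.comp (fun z hz => (hμd z hz).differentiableAt.differentiableWithinAt) hmaps)
    (hinj.comp hμinj hmaps)
  have hG1 : ∀ z ∈ ball (0:ℂ) 1,
      deriv (f ∘ μ) z = deriv f (μ z) * ((1 - c * a) / (1 + c * z) ^ 2) := by
    intro z hz
    exact ((hf.differentiableAt (isOpen_ball.mem_nhds (hmaps hz))).hasDerivAt.comp z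
      (hμd z hz)).deriv
  have h0 : (0:ℂ) ∈ ball (0:ℂ) 1 := mem_ball_self one_pos
  have hG2 : deriv (deriv (f ∘ μ)) 0 =
      (1 - c * a) * (deriv (deriv f) a * (1 - c * a) - 2 * c * deriv f a) := by
    have e : deriv (f ∘ μ) =ᶠ[𝓝 0]
        fun z => deriv f (μ z) * ((1 - c * a) / (1 + c * z) ^ 2) := by
      filter_upwards [hB] with z hz using hG1 z hz
    rw [e.deriv_eq]
    have d1 : HasDerivAt (deriv f) (deriv (deriv f) (μ 0)) (μ 0) :=
      ((hf.deriv isOpen_ball).differentiableAt (isOpen_ball.mem_nhds (hmaps h0))).hasDerivAt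
    have d2 := d1.comp 0 (hμd 0 h0)
    have d3 := (hasDerivAt_const (0:ℂ) (1 - c * a)).fun_div
      ((((hasDerivAt_id (0:ℂ)).const_mul c).const_add 1).fun_pow 2)
      (pow_ne_zero 2 (hden 0 h0))
    have := (d2.fun_mul d3).deriv
    simp only [Function.comp_apply, id] at this
    rw [this, hμ0]
    simp
    ring
  have hG10 : deriv (f ∘ μ) 0 = deriv f a * (1 - c * a) := by
    rw [hG1 0 h0, hμ0]; simp
  have hn : ‖1 - c * a‖ = 1 - ‖a‖ ^ 2 := by
    rw [hca, ← Complex.ofReal_one, ← Complex.ofReal_sub, Complex.norm_real,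
      Real.norm_of_nonneg hpos.le]
  rw [hG2, hG10, norm_mul, norm_mul, hn] at hbie
  have h1 : ‖deriv (deriv f) a * (1 - c * a) - 2 * c * deriv f a‖ ≤ 4 * ‖deriv f a‖ := by
    refine le_of_mul_le_mul_left ?_ hpos
    linarith
  have h2 : ‖deriv (deriv f) a‖ * (1 - ‖a‖ ^ 2) - 2 * ‖a‖ * ‖deriv f a‖ ≤
      ‖deriv (deriv f) a * (1 - c * a) - 2 * c * deriv f a‖ := by
    have := norm_sub_norm_le (deriv (deriv f) a * (1 - c * a)) (2 * c * deriv f a)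
    rw [norm_mul, hn, norm_mul, norm_mul, hcn, Complex.norm_ofNat] at this
    exact this
  linarith

/-- Upper half of the distortion theorem, on the ray through a unit vector `e`. -/
lemma distortion {f : ℂ → ℂ} (hf : DifferentiableOn ℂ f (ball 0 1))
    (hinj : InjOn f (ball 0 1)) {e : ℂ} (he : ‖e‖ = 1) {t : ℝ} (ht : t ∈ Ico (0:ℝ) 1) :
    ‖deriv f (t * e)‖ ≤ ‖deriv f 0‖ * ((1 + t) / (1 - t) ^ 3) := by
  have hmem : ∀ x ∈ Ico (0:ℝ) 1, (x * e : ℂ) ∈ ball (0:ℂ) 1 := by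
    intro x hx
    rw [mem_ball_zero_iff, norm_mul, he, Complex.norm_real, Real.norm_of_nonneg hx.1, mul_one]
    exact hx.2
  set u : ℝ → ℂ := fun x => deriv f (x * e) with hu
  have hud : ∀ x ∈ Ico (0:ℝ) 1, HasDerivAt u (deriv (deriv f) (x * e) * e) x := by
    intro x hx
    have d1 := ((hf.deriv isOpen_ball).differentiableAt
      (isOpen_ball.mem_nhds (hmem x hx))).hasDerivAt
    have d2 : HasDerivAt (fun z : ℂ => z * e) e (x : ℂ) := by
      simpa using (hasDerivAt_id (x : ℂ)).mul_const e
    exact (d1.comp (x : ℂ) d2).comp_ofReal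
  -- The weight solves `deriv W x = -2 * W x * (4 + 2 * x) / (1 - x ^ 2)`, so that the bound on the second
  -- derivative makes `‖u‖ ^ 2 * W` nonincreasing along the ray. Squares avoid differentiating
  -- the norm itself.
  set W : ℝ → ℝ := fun x => ((1 - x) ^ 3 / (1 + x)) ^ 2 with hW
  have hWd : ∀ x ∈ Ico (0:ℝ) 1,
      HasDerivAt W (-2 * W x * ((4 + 2 * x) / (1 - x ^ 2))) x := by
    intro x hx
    have h1 : 1 + x ≠ 0 := by linarith [hx.1]
    have h2 : 1 - x ≠ 0 := by linarith [hx.2]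
    have h3 : 1 - x ^ 2 ≠ 0 := by
      rw [show 1 - x ^ 2 = (1 - x) * (1 + x) by ring]; exact mul_ne_zero h2 h1
    have d := (((((hasDerivAt_id x).const_sub 1).fun_pow 3).fun_div
      ((hasDerivAt_id x).const_add 1) h1).fun_pow 2)
    refine d.congr_deriv ?_
    simp only [id, hW]
    rw [show 1 - x ^ 2 = (1 - x) * (1 + x) by ring]
    push_cast
    field_simp
    ring
  have hNd : ∀ x ∈ Ico (0:ℝ) 1, HasDerivAt (fun x => ‖u x‖ ^ 2 * W x)
      (2 * inner ℝ (u x) (deriv (deriv f) (x * e) * e) * W x +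
        ‖u x‖ ^ 2 * (-2 * W x * ((4 + 2 * x) / (1 - x ^ 2)))) x :=
    fun x hx => (hud x hx).norm_sq.fun_mul (hWd x hx)
  have hanti : AntitoneOn (fun x => ‖u x‖ ^ 2 * W x) (Ico (0:ℝ) 1) := by
    refine antitoneOn_of_deriv_nonpos (convex_Ico 0 1)
      (fun x hx => (hNd x hx).continuousAt.continuousWithinAt)
      (fun x hx => (hNd x (interior_subset hx)).differentiableAt.differentiableWithinAt) ?_
    intro x hx
    have hx := interior_subset hx
    rw [(hNd x hx).deriv]
    have hpos : 0 < 1 - x ^ 2 := by nlinarith [hx.1, hx.2]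
    have hnx : ‖(x * e : ℂ)‖ = x := by
      rw [norm_mul, he, Complex.norm_real, Real.norm_of_nonneg hx.1, mul_one]
    have hk := koebe_bound hf hinj (hmem x hx)
    rw [hnx, ← le_div_iff₀ hpos] at hk
    have hi : inner ℝ (u x) (deriv (deriv f) (x * e) * e) ≤
        ‖u x‖ ^ 2 * ((4 + 2 * x) / (1 - x ^ 2)) := by
      refine (real_inner_le_norm _ _).trans ?_
      rw [norm_mul, he, mul_one, sq, mul_assoc]
      refine mul_le_mul_of_nonneg_left (hk.trans_eq ?_) (norm_nonneg _)
      simp only [hu]; ring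
    have hW0 : 0 ≤ W x := sq_nonneg _
    nlinarith [mul_le_mul_of_nonneg_right hi hW0]
  have h := hanti (left_mem_Ico.2 one_pos) ht ht.1
  have hp1 : 0 < 1 + t := by linarith [ht.1]
  have hp2 : 0 < 1 - t := by linarith [ht.2]
  simp only [hW, hu, ← mul_pow] at h
  have h2 := le_of_sq_le_sq h (by positivity)
  simp only [Complex.ofReal_zero, zero_mul, sub_zero, one_pow, add_zero, div_one, mul_one] at h2
  rw [← mul_div_assoc, div_le_iff₀ hp1] at h2
  rw [← mul_div_assoc, le_div_iff₀ (by positivity)]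
  exact h2

/-- Upper half of the growth theorem: the distortion bound integrated along the ray through `w`. -/
lemma growth {f : ℂ → ℂ} (hf : DifferentiableOn ℂ f (ball 0 1))
    (hinj : InjOn f (ball 0 1)) {w : ℂ} (hw : w ∈ ball (0:ℂ) 1) :
    ‖f w - f 0‖ ≤ ‖deriv f 0‖ * (‖w‖ / (1 - ‖w‖) ^ 2) := by
  rcases eq_or_ne w 0 with rfl | hw0
  · simp
  have hw1 : ‖w‖ < 1 := mem_ball_zero_iff.1 hw
  have hwn : (‖w‖ : ℂ) ≠ 0 := by simpa using hw0
  set e : ℂ := w / ‖w‖ with he_def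
  have he : ‖e‖ = 1 := by
    rw [he_def, norm_div, Complex.norm_real, norm_norm, div_self (norm_ne_zero_iff.2 hw0)]
  have hd : ∀ x ∈ Icc 0 ‖w‖, HasDerivAt (fun x : ℝ => f (x * e) - f 0)
      (deriv f (x * e) * e) x := by
    intro x hx
    have hmem : (x * e : ℂ) ∈ ball (0:ℂ) 1 := by
      rw [mem_ball_zero_iff, norm_mul, he, Complex.norm_real, Real.norm_of_nonneg hx.1, mul_one]
      exact hx.2.trans_lt hw1
    have d1 := (hf.differentiableAt (isOpen_ball.mem_nhds hmem)).hasDerivAt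
    have d2 : HasDerivAt (fun z : ℂ => z * e) e (x : ℂ) := by
      simpa using (hasDerivAt_id (x : ℂ)).mul_const e
    exact ((d1.comp (x : ℂ) d2).comp_ofReal).sub_const _
  have hBd : ∀ x ∈ Icc 0 ‖w‖, HasDerivAt (fun x : ℝ => ‖deriv f 0‖ * (x / (1 - x) ^ 2))
      (‖deriv f 0‖ * ((1 + x) / (1 - x) ^ 3)) x := by
    intro x hx
    have h2 : 1 - x ≠ 0 := by linarith [hx.2]
    have d := ((hasDerivAt_id x).fun_div (((hasDerivAt_id x).const_sub 1).fun_pow 2)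
      (pow_ne_zero 2 h2)).const_mul ‖deriv f 0‖
    refine d.congr_deriv ?_
    simp only [id]
    push_cast
    field_simp
    ring
  have := image_norm_le_of_norm_deriv_right_le_deriv_boundary' (a := 0) (b := ‖w‖)
    (fun x hx => (hd x hx).continuousAt.continuousWithinAt)
    (fun x hx => (hd x (Ico_subset_Icc_self hx)).hasDerivWithinAt)
    (by simp)
    (fun x hx => (hBd x hx).continuousAt.continuousWithinAt)
    (fun x hx => (hBd x (Ico_subset_Icc_self hx)).hasDerivWithinAt)
    (fun x hx => by
      rw [norm_mul, he, mul_one]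
      exact distortion hf hinj he ⟨hx.1, hx.2.trans hw1⟩)
    (right_mem_Icc.2 (norm_nonneg w))
  rwa [he_def, mul_div_cancel₀ _ hwn] at this

/-- Second inequality of the Lemma on holomorphic maps of the disk, from the
Growth Theorem for univalent functions. -/
theorem disk_univalent_growth_bound
    (φ : ℂ → ℂ)
    (hφ : DifferentiableOn ℂ φ {w : ℂ | ‖w‖ < 1})
    (hinj : Set.InjOn φ {w : ℂ | ‖w‖ < 1})
    (hne : ∀ w ∈ {w : ℂ | ‖w‖ < 1}, φ w ≠ 0) :
    ∀ w ∈ {w : ℂ | ‖w‖ < 1},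
      ‖1 / φ w - 1 / φ 0‖ ≤ (‖deriv φ 0‖ / ‖φ 0‖ ^ 2) * ‖w‖ / (1 - ‖w‖) ^ 2 := by
  have hball : {w : ℂ | ‖w‖ < 1} = ball (0:ℂ) 1 := by ext; simp
  rw [hball] at hφ hinj hne ⊢
  intro w hw
  have h0 : (0:ℂ) ∈ ball (0:ℂ) 1 := mem_ball_self one_pos
  have h := growth (f := fun w => 1 / φ w) ((differentiableOn_const _).fun_div hφ hne)
    (fun z hz w hw hzw => hinj hz hw (by simpa using hzw)) hw
  have hd : deriv (fun w => 1 / φ w) 0 = - deriv φ 0 / φ 0 ^ 2 := by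
    have := ((hasDerivAt_const (0:ℂ) (1:ℂ)).fun_div
      (hφ.differentiableAt (isOpen_ball.mem_nhds h0)).hasDerivAt (hne 0 h0)).deriv
    rw [this]; simp
  rw [hd, norm_div, norm_neg, norm_pow, ← mul_div_assoc] at h
  exact h
end

section
/- Let f : ℂ → ℂ be holomorphic on the open upper half-plane ℍ = {z : ℂ | 0 < Im z}, and suppose there are constants C > 0 and A, B ≥ 0 such that ‖f(x + i·y)‖ ≤ C·(1 + |x|)^B · y^{−A} for all x ∈ ℝ and all y ∈ (0,1]. Then there exists a continuous ℂ-linear functional T on the Schwartz space 𝓢(ℝ, ℂ) such that for every Schwartz function φ, the pairing ∫_ℝ f(x + i·y)·φ(x) dx tends to T(φ) as y → 0⁺. In other words, f has a boundary value on the real axis in the sense of tempered distributions. -/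
/-!
For a Schwartz function `φ` write `g_φ(y) = ∫ f(x + iy) φ(x) dx`. Since `∂f/∂y = i ∂f/∂x` for
holomorphic `f`, an integration by parts gives `g_φ'(y) = -i g_{φ'}(y)` (`hasDerivAt_slicePairing`);
Cauchy's estimate for `f'` on a disc of radius comparable to `y` justifies both the differentiation
under the integral sign and the integration by parts.

Consequently a bound `|g_φ(y)| ≤ q(φ) y^(e-1)`, valid for all `φ` and with `q` continuous on the
Schwartz space, can be integrated from a fixed height down to `y` and, at the cost of
replacing `φ` by `φ'`, improves to an exponent `e` (`SlicePairingBound.improve`). The hypothesis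
gives the bound with some negative exponent, which may be taken to be a half-integer so that the
logarithmic case `e = 0` never occurs. After finitely many steps `g_φ` is bounded by `q(φ)` uniformly
in `y`, for every `φ`. Then `g_φ' = -i g_{φ'}` is bounded, so `g_φ` is Lipschitz near `0` and has a
limit, which is linear in `φ` and dominated by `q(φ)`, hence continuous.
-/

open MeasureTheory Filter

/-- The pairing of the horizontal slice of `f` at height `y` with the Schwartz function `φ`. -/
noncomputable def slicePairing (f : ℂ → ℂ) (y : ℝ) (φ : SchwartzMap ℝ ℂ) : ℂ :=
  ∫ x : ℝ, f ((x : ℂ) + (y : ℂ) * Complex.I) * φ x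

/-- The slice pairings are `O(y ^ r)` as `y → 0⁺`, locally uniformly in the test function: the
implied constant is a function `q` of `φ`, continuous and vanishing at `0`. The height `1/4`
is an arbitrary choice inside the range in which the hypothesis on `f` holds. -/
def SlicePairingBound (f : ℂ → ℂ) (r : ℝ) : Prop :=
  ∃ q : SchwartzMap ℝ ℂ → ℝ, Continuous q ∧ q 0 = 0 ∧
    ∀ φ : SchwartzMap ℝ ℂ, ∀ y ∈ Set.Ioc (0 : ℝ) (1 / 4), ‖slicePairing f y φ‖ ≤ q φ * y ^ r

/-- The growth hypothesis on the strip `0 < Im z ≤ 1`, with a natural number as the exponent of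
polynomial growth along the real direction. -/
def StripBound (f : ℂ → ℂ) (C A : ℝ) (N : ℕ) : Prop :=
  ∀ z : ℂ, 0 < z.im → z.im ≤ 1 → ‖f z‖ ≤ C * (1 + |z.re|) ^ N * z.im ^ (-A)

/-! ### Integrability against Schwartz functions -/

/-- A weighted `L¹` norm is a continuous function on the Schwartz space; here in the form of a
continuous majorant, obtained from the decay of `φ` with two powers to spare. -/
lemma exists_weight_bound (N : ℕ) :
    ∃ q : SchwartzMap ℝ ℂ → ℝ, Continuous q ∧ q 0 = 0 ∧ ∀ φ : SchwartzMap ℝ ℂ,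
      Integrable (fun x : ℝ => (1 + |x|) ^ N * ‖φ x‖) ∧
        ∫ x : ℝ, (1 + |x|) ^ N * ‖φ x‖ ≤ q φ := by
  set p : Seminorm ℂ (SchwartzMap ℝ ℂ) :=
    (Finset.Iic ((N + 2, 0) : ℕ × ℕ)).sup (schwartzSeminormFamily ℂ ℝ ℂ) with hp
  have hpc : Continuous p :=
    Seminorm.continuous_finsetSup fun i _ =>
      (schwartz_withSeminorms ℂ ℝ ℂ).continuous_seminorm i
  have hint : Integrable (fun x : ℝ => (1 + ‖x‖) ^ (-(2 : ℝ))) :=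
    integrable_one_add_norm (by simp)
  have key (φ : SchwartzMap ℝ ℂ) (x : ℝ) :
      (1 + |x|) ^ N * ‖φ x‖ ≤ (2 ^ (N + 2) * p φ) * (1 + ‖x‖) ^ (-(2 : ℝ)) := by
    have h := SchwartzMap.one_add_le_sup_seminorm_apply (𝕜 := ℂ) (m := (N + 2, 0))
      (k := N + 2) (n := 0) le_rfl le_rfl φ x
    rw [norm_iteratedFDeriv_zero] at h
    have hx : 0 < 1 + ‖x‖ := by positivity
    rw [Real.rpow_neg hx.le, Real.rpow_two, ← div_eq_mul_inv, le_div_iff₀ (by positivity)]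
    calc (1 + |x|) ^ N * ‖φ x‖ * (1 + ‖x‖) ^ 2 = (1 + ‖x‖) ^ (N + 2) * ‖φ x‖ := by
          rw [Real.norm_eq_abs]; ring
      _ ≤ _ := h
  have hI (φ : SchwartzMap ℝ ℂ) : Integrable (fun x : ℝ => (1 + |x|) ^ N * ‖φ x‖) := by
    refine (hint.const_mul (2 ^ (N + 2) * p φ)).mono' ?_ (.of_forall fun x => ?_)
    · exact Continuous.aestronglyMeasurable (by fun_prop)
    · rw [Real.norm_of_nonneg (by positivity)]
      exact key φ x
  refine ⟨fun φ => (2 ^ (N + 2) * p φ) * ∫ x : ℝ, (1 + ‖x‖) ^ (-(2 : ℝ)), by fun_prop,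
    by simp, fun φ => ⟨hI φ, ?_⟩⟩
  beta_reduce
  rw [← integral_const_mul]
  exact integral_mono (hI φ) (hint.const_mul _) (key φ)

lemma integrable_mul_schwartz {h : ℝ → ℂ} (hh : Continuous h) {c : ℝ} {N : ℕ}
    (hb : ∀ x, ‖h x‖ ≤ c * (1 + |x|) ^ N) (φ : SchwartzMap ℝ ℂ) :
    Integrable (fun x => h x * φ x) := by
  obtain ⟨q, -, -, hq⟩ := exists_weight_bound N
  refine ((hq φ).1.const_mul c).mono' ?_ (.of_forall fun x => ?_)
  · exact Continuous.aestronglyMeasurable (by fun_prop)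
  · rw [norm_mul, ← mul_assoc]
    exact mul_le_mul_of_nonneg_right (hb x) (norm_nonneg _)

lemma continuous_slice {f : ℂ → ℂ} (hf : ContinuousOn f {z : ℂ | 0 < z.im}) {y : ℝ} (hy : 0 < y) :
    Continuous fun x : ℝ => f ((x : ℂ) + (y : ℂ) * Complex.I) :=
  hf.comp_continuous (by fun_prop) fun x => by simpa using hy

lemma StripBound.slice {f : ℂ → ℂ} {C A : ℝ} {N : ℕ} (hb : StripBound f C A N)
    {y : ℝ} (hy : 0 < y) (hy1 : y ≤ 1) (x : ℝ) :
    ‖f ((x : ℂ) + (y : ℂ) * Complex.I)‖ ≤ C * y ^ (-A) * (1 + |x|) ^ N := by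
  have := hb ((x : ℂ) + (y : ℂ) * Complex.I) (by simpa using hy) (by simpa using hy1)
  simp at this
  linarith

lemma StripBound.integrable {f : ℂ → ℂ} (hf : DifferentiableOn ℂ f {z : ℂ | 0 < z.im})
    {C A : ℝ} {N : ℕ} (hb : StripBound f C A N) {y : ℝ} (hy : 0 < y) (hy1 : y ≤ 1)
    (φ : SchwartzMap ℝ ℂ) :
    Integrable fun x : ℝ => f ((x : ℂ) + (y : ℂ) * Complex.I) * φ x :=
  integrable_mul_schwartz (continuous_slice hf.continuousOn hy) (hb.slice hy hy1) φ

/-! ### The derivative of the slice pairing in the height -/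

/-- Cauchy's estimate: on the strip `η < Im z < 1/2` the derivative of `f` has at most the
same polynomial growth as `f`. -/
lemma StripBound.exists_deriv_bound {f : ℂ → ℂ}
    (hf : DifferentiableOn ℂ f {z : ℂ | 0 < z.im})
    {C A : ℝ} (hC : 0 < C) (hA : 0 ≤ A) {N : ℕ} (hb : StripBound f C A N) {η : ℝ} (hη : 0 < η) :
    ∃ D : ℝ, ∀ y ∈ Set.Ioo η (1 / 2), ∀ x : ℝ,
      ‖deriv f ((x : ℂ) + (y : ℂ) * Complex.I)‖ ≤ D * (1 + |x|) ^ N := by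
  refine ⟨C * 2 ^ N * (η / 2) ^ (-A) / (η / 2), fun y hy x => ?_⟩
  set z : ℂ := (x : ℂ) + (y : ℂ) * Complex.I with hz
  have hzre : z.re = x := by simp [hz]
  have hzim : z.im = y := by simp [hz]
  have him (w : ℂ) (hw : w ∈ Metric.closedBall z (η / 2)) :
      |w.re - x| ≤ η / 2 ∧ |w.im - y| ≤ η / 2 := by
    rw [mem_closedBall_iff_norm] at hw
    have h1 := Complex.abs_re_le_norm (w - z)
    have h2 := Complex.abs_im_le_norm (w - z)
    rw [Complex.sub_re, hzre] at h1
    rw [Complex.sub_im, hzim] at h2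
    exact ⟨h1.trans hw, h2.trans hw⟩
  have hd : DiffContOnCl ℂ f (Metric.ball z (η / 2)) := by
    refine DifferentiableOn.diffContOnCl (hf.mono fun w hw => ?_)
    have := (abs_le.1 (him w (Metric.closure_ball_subset_closedBall hw)).2).1
    have := hy.1
    change 0 < w.im
    linarith
  have := Complex.norm_deriv_le_of_forall_mem_sphere_norm_le (f := f) (c := z) (R := η / 2)
    (C := C * 2 ^ N * (η / 2) ^ (-A) * (1 + |x|) ^ N) (by positivity) hd ?_
  · refine this.trans_eq ?_
    ring
  intro w hw
  obtain ⟨h1, h2⟩ := him w (Metric.sphere_subset_closedBall hw)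
  rw [abs_le] at h2
  have hy1 := hy.1
  have hy2 := hy.2
  have hwim : η / 2 ≤ w.im := by linarith
  have hre : 1 + |w.re| ≤ 2 * (1 + |x|) := by
    have := abs_sub_abs_le_abs_sub w.re x
    have := abs_nonneg x
    linarith
  calc ‖f w‖ ≤ C * (1 + |w.re|) ^ N * w.im ^ (-A) := hb w (by linarith) (by linarith)
    _ ≤ C * (2 * (1 + |x|)) ^ N * (η / 2) ^ (-A) := by
      gcongr ?_ * ?_
      · exact Real.rpow_nonneg (by linarith) _
      · gcongr
      · exact Real.rpow_le_rpow_of_nonpos (by positivity) hwim (by linarith)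
    _ = _ := by rw [mul_pow]; ring

/-- The differential equation linking the slice pairings with `φ` and with `φ'`: the Cauchy–Riemann
equation `∂f/∂y = i ∂f/∂x` followed by integration by parts in `x`. -/
lemma hasDerivAt_slicePairing {f : ℂ → ℂ} (hf : DifferentiableOn ℂ f {z : ℂ | 0 < z.im})
    {C A : ℝ} (hC : 0 < C) (hA : 0 ≤ A) {N : ℕ} (hb : StripBound f C A N)
    (φ : SchwartzMap ℝ ℂ) {y : ℝ} (hy : y ∈ Set.Ioo (0 : ℝ) (1 / 2)) :
    HasDerivAt (fun y => slicePairing f y φ)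
      (-Complex.I * slicePairing f y (SchwartzMap.derivCLM ℂ ℂ φ)) y := by
  have hy0 := hy.1
  have hopen : IsOpen {z : ℂ | 0 < z.im} := isOpen_lt continuous_const Complex.continuous_im
  have hfd {z : ℂ} (hz : 0 < z.im) : HasDerivAt f (deriv f z) z :=
    (hf.differentiableAt (hopen.mem_nhds hz)).hasDerivAt
  have hdc : ContinuousOn (deriv f) {z : ℂ | 0 < z.im} := (hf.deriv hopen).continuousOn
  obtain ⟨D, hD⟩ := hb.exists_deriv_bound hf hC hA (half_pos hy0)
  have hys : y ∈ Set.Ioo (y / 2) (1 / 2) := ⟨by linarith, hy.2⟩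
  have hI1 : Integrable fun x : ℝ => deriv f ((x : ℂ) + (y : ℂ) * Complex.I) * φ x :=
    integrable_mul_schwartz (continuous_slice hdc hy0) (hD y hys) φ
  obtain ⟨q, -, -, hq⟩ := exists_weight_bound N
  have hder := (hasDerivAt_integral_of_dominated_loc_of_deriv_le
    (μ := volume) (x₀ := y) (s := Set.Ioo (y / 2) (1 / 2))
    (F := fun (y x : ℝ) => f ((x : ℂ) + (y : ℂ) * Complex.I) * φ x)
    (F' := fun (y x : ℝ) => deriv f ((x : ℂ) + (y : ℂ) * Complex.I) * Complex.I * φ x)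
    (bound := fun x => D * ((1 + |x|) ^ N * ‖φ x‖))
    (Ioo_mem_nhds hys.1 hys.2) ?_ (hb.integrable hf hy0 (by linarith [hy.2]) φ) ?_ ?_
    ((hq φ).1.const_mul D) ?_).2
  · have hparts := integral_mul_deriv_eq_deriv_mul_of_integrable
      (u := fun x : ℝ => f ((x : ℂ) + (y : ℂ) * Complex.I))
      (u' := fun x : ℝ => deriv f ((x : ℂ) + (y : ℂ) * Complex.I))
      (v := φ) (v' := deriv φ) ?_ (fun x _ => φ.hasDerivAt x)
      (hb.integrable hf hy0 (by linarith [hy.2]) (SchwartzMap.derivCLM ℂ ℂ φ)) hI1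
      (hb.integrable hf hy0 (by linarith [hy.2]) φ)
    · refine hder.congr_deriv ?_
      simp only [slicePairing, SchwartzMap.derivCLM_apply]
      rw [hparts, neg_mul_neg, ← integral_const_mul]
      congr 1 with x
      ring
    · intro x _
      have hin : HasDerivAt (fun x : ℝ => (x : ℂ) + (y : ℂ) * Complex.I) 1 x := by
        simpa using (Complex.ofRealCLM.hasDerivAt (x := x)).add_const ((y : ℂ) * Complex.I)
      simpa using! (hfd (z := (x : ℂ) + (y : ℂ) * Complex.I) (by simpa using hy0)).comp x hin
  · filter_upwards [lt_mem_nhds hy0] with t ht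
    exact ((continuous_slice hf.continuousOn ht).mul φ.continuous).aestronglyMeasurable
  · exact (((continuous_slice hdc hy0).mul continuous_const).mul
      φ.continuous).aestronglyMeasurable
  · refine .of_forall fun x t ht => ?_
    rw [norm_mul, norm_mul, Complex.norm_I, mul_one, ← mul_assoc]
    exact mul_le_mul_of_nonneg_right (hD t ht x) (norm_nonneg _)
  · refine .of_forall fun x t ht => ?_
    have ht0 : 0 < t := by linarith [ht.1]
    have hin : HasDerivAt (fun t : ℝ => (x : ℂ) + (t : ℂ) * Complex.I) Complex.I t := by
      simpa using ((Complex.ofRealCLM.hasDerivAt (x := t)).mul_const Complex.I).const_add (x : ℂ)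
    exact ((hfd (z := (x : ℂ) + (t : ℂ) * Complex.I) (by simpa using ht0)).comp t hin).mul_const _

/-! ### Improving the bound by integration -/

lemma StripBound.slicePairingBound {f : ℂ → ℂ} {C A : ℝ} (hC : 0 < C) {N : ℕ}
    (hb : StripBound f C A N) : SlicePairingBound f (-A) := by
  obtain ⟨q, hqc, hq0, hq⟩ := exists_weight_bound N
  refine ⟨fun φ => C * q φ, by fun_prop, by simp [hq0], fun φ y hy => ?_⟩
  have hyA : 0 ≤ y ^ (-A) := Real.rpow_nonneg hy.1.le _
  calc ‖slicePairing f y φ‖ ≤ ∫ x : ℝ, C * y ^ (-A) * ((1 + |x|) ^ N * ‖φ x‖) := by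
        refine norm_integral_le_of_norm_le ((hq φ).1.const_mul _) (.of_forall fun x => ?_)
        rw [norm_mul, ← mul_assoc]
        exact mul_le_mul_of_nonneg_right (hb.slice hy.1 (by linarith [hy.2]) x) (norm_nonneg _)
    _ = C * y ^ (-A) * ∫ x : ℝ, (1 + |x|) ^ N * ‖φ x‖ := integral_const_mul _ _
    _ ≤ C * y ^ (-A) * q φ := by gcongr; exact (hq φ).2
    _ = C * q φ * y ^ (-A) := by ring

lemma nonneg_of_slicePairing_le {f : ℂ → ℂ} {r c : ℝ} {φ : SchwartzMap ℝ ℂ}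
    (h : ∀ y ∈ Set.Ioc (0 : ℝ) (1 / 4), ‖slicePairing f y φ‖ ≤ c * y ^ r) : 0 ≤ c :=
  nonneg_of_mul_nonneg_left ((norm_nonneg _).trans (h (1 / 4) (by norm_num))) (by positivity)

lemma SlicePairingBound.mono {f : ℂ → ℂ} {r s : ℝ} (hrs : r ≤ s) (h : SlicePairingBound f s) :
    SlicePairingBound f r := by
  obtain ⟨q, hqc, hq0, hq⟩ := h
  refine ⟨q, hqc, hq0, fun φ y hy => (hq φ y hy).trans ?_⟩
  exact mul_le_mul_of_nonneg_left
    (Real.rpow_le_rpow_of_exponent_ge hy.1 (by linarith [hy.2]) hrs)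
    (nonneg_of_slicePairing_le (hq φ))

/-- Integrating `g_φ' = -i g_{φ'}` from height `1/4` down to `y` raises the exponent by one, up to
the cap at `0` and away from the logarithmic case `e = 0`. -/
lemma SlicePairingBound.improve {f : ℂ → ℂ}
    (hder : ∀ φ : SchwartzMap ℝ ℂ, ∀ y ∈ Set.Ioo (0 : ℝ) (1 / 2),
      HasDerivAt (fun y => slicePairing f y φ)
        (-Complex.I * slicePairing f y (SchwartzMap.derivCLM ℂ ℂ φ)) y)
    {e : ℝ} (he : e ≠ 0) (h : SlicePairingBound f (e - 1)) : SlicePairingBound f (min e 0) := by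
  obtain ⟨q, hqc, hq0, hq⟩ := h
  refine ⟨fun φ => q φ * (1 / 4 : ℝ) ^ (e - 1) + q (SchwartzMap.derivCLM ℂ ℂ φ) * (1 / |e|),
    ((hqc.mul_const _).add ((hqc.comp (SchwartzMap.derivCLM ℂ ℂ).continuous).mul_const _)),
    by simp [hq0], fun φ y hy => ?_⟩
  set ψ := SchwartzMap.derivCLM ℂ ℂ φ
  obtain ⟨hy0, hy4⟩ := hy
  have hq1 : 0 ≤ q φ := nonneg_of_slicePairing_le (hq φ)
  have hq2 : 0 ≤ q ψ := nonneg_of_slicePairing_le (hq ψ)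
  have h0 : (0 : ℝ) ∉ Set.uIcc y (1 / 4) := by
    rw [Set.uIcc_of_le hy4]
    exact fun h => absurd h.1 (not_le.2 hy0)
  have hd (t : ℝ) (ht : t ∈ Set.Icc y (1 / 4)) :=
    hder φ t ⟨hy0.trans_le ht.1, by linarith [ht.2]⟩
  have hdiff : ‖slicePairing f (1 / 4) φ - slicePairing f y φ‖ ≤
      ∫ t in y..(1 / 4), q ψ * t ^ (e - 1) := by
    refine norm_sub_le_integral_of_norm_deriv_le_of_le (f := fun y => slicePairing f y φ) hy4
      (fun t ht => (hd t ht).continuousAt.continuousWithinAt)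
      (fun t ht => (hd t (Set.Ioo_subset_Icc_self ht)).differentiableAt.differentiableWithinAt)
      (.of_forall fun t ht => ?_)
      ((intervalIntegral.intervalIntegrable_rpow (.inr h0)).const_mul _)
    rw [(hd t (Set.Ioo_subset_Icc_self ht)).deriv, norm_mul, norm_neg, Complex.norm_I, one_mul]
    exact hq ψ t ⟨hy0.trans ht.1, ht.2.le⟩
  rw [intervalIntegral.integral_const_mul,
    integral_rpow (.inr ⟨fun h => he (by linarith), h0⟩), sub_add_cancel] at hdiff
  have hone : 1 ≤ y ^ min e 0 :=
    Real.one_le_rpow_of_pos_of_le_one_of_nonpos hy0 (by linarith) (min_le_right _ _)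
  have hint : ((1 / 4 : ℝ) ^ e - y ^ e) / e ≤ 1 / |e| * y ^ min e 0 := by
    have hye : 0 < y ^ e := Real.rpow_pos_of_pos hy0 e
    have h4e : (0 : ℝ) < (1 / 4 : ℝ) ^ e := by positivity
    rcases he.lt_or_gt with hneg | hpos
    · rw [min_eq_left hneg.le, abs_of_neg hneg, ← neg_div_neg_eq, div_mul_eq_mul_div, one_mul]
      exact div_le_div_of_nonneg_right (by linarith) (by linarith)
    · rw [min_eq_right hpos.le, abs_of_pos hpos, Real.rpow_zero, mul_one]
      have : (1 / 4 : ℝ) ^ e ≤ 1 := Real.rpow_le_one (by norm_num) (by norm_num) hpos.le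
      exact div_le_div_of_nonneg_right (by linarith) hpos.le
  have h4 := hq φ (1 / 4) (by norm_num)
  have htri := norm_le_norm_add_norm_sub (slicePairing f (1 / 4) φ) (slicePairing f y φ)
  calc ‖slicePairing f y φ‖
      ≤ q φ * (1 / 4 : ℝ) ^ (e - 1) + q ψ * (((1 / 4 : ℝ) ^ e - y ^ e) / e) := by linarith
    _ ≤ q φ * (1 / 4 : ℝ) ^ (e - 1) * y ^ min e 0 + q ψ * (1 / |e| * y ^ min e 0) := by
      exact add_le_add (le_mul_of_one_le_right (by positivity) hone)
        (mul_le_mul_of_nonneg_left hint hq2)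
    _ = _ := by ring

/-- Half-integer exponents descend to `0` without passing through the logarithmic case. -/
lemma SlicePairingBound.to_zero {f : ℂ → ℂ}
    (hder : ∀ φ : SchwartzMap ℝ ℂ, ∀ y ∈ Set.Ioo (0 : ℝ) (1 / 2),
      HasDerivAt (fun y => slicePairing f y φ)
        (-Complex.I * slicePairing f y (SchwartzMap.derivCLM ℂ ℂ φ)) y)
    (n : ℕ) (h : SlicePairingBound f (-(n + 1 / 2))) : SlicePairingBound f 0 := by
  induction n with
  | zero =>
    have h' : SlicePairingBound f ((1 / 2 : ℝ) - 1) := by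
      convert h using 1
      norm_num
    simpa using h'.improve hder (by norm_num)
  | succ n ih =>
    have hn : (0 : ℝ) < n + 1 / 2 := by positivity
    have h' : SlicePairingBound f (-((n : ℝ) + 1 / 2) - 1) := by
      convert h using 1
      push_cast
      ring
    have := h'.improve hder (by linarith)
    rw [min_eq_left (by linarith)] at this
    exact ih this

/-! ### The boundary value -/

/-- Bounded pairings for all test functions make each `y ↦ slicePairing f y φ` Lipschitz near `0`,
because its derivative is a pairing with `φ'`. -/
lemma SlicePairingBound.exists_tendsto {f : ℂ → ℂ}
    (hder : ∀ φ : SchwartzMap ℝ ℂ, ∀ y ∈ Set.Ioo (0 : ℝ) (1 / 2),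
      HasDerivAt (fun y => slicePairing f y φ)
        (-Complex.I * slicePairing f y (SchwartzMap.derivCLM ℂ ℂ φ)) y)
    (h : SlicePairingBound f 0) (φ : SchwartzMap ℝ ℂ) :
    ∃ l : ℂ, Tendsto (fun y => slicePairing f y φ) (nhdsWithin 0 (Set.Ioi 0)) (nhds l) := by
  obtain ⟨q, -, -, hq⟩ := h
  set ψ := SchwartzMap.derivCLM ℂ ℂ φ
  have hq2 : 0 ≤ q ψ := nonneg_of_slicePairing_le (hq ψ)
  have hlip : LipschitzOnWith (q ψ).toNNReal (fun y => slicePairing f y φ)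
      (Set.Ioo (0 : ℝ) (1 / 4)) := by
    refine (convex_Ioo _ _).lipschitzOnWith_of_nnnorm_hasDerivWithin_le (𝕜 := ℝ)
      (fun y hy => (hder φ y ⟨hy.1, by linarith [hy.2]⟩).hasDerivWithinAt) fun y hy => ?_
    rw [← NNReal.coe_le_coe, coe_nnnorm, Real.coe_toNNReal _ hq2, norm_mul, norm_neg,
      Complex.norm_I, one_mul]
    simpa using hq ψ y ⟨hy.1, hy.2.le⟩
  have hcau : Cauchy (nhdsWithin (0 : ℝ) (Set.Ioi 0)) := cauchy_nhds.mono nhdsWithin_le_nhds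
  exact CompleteSpace.complete (hcau.map_of_le hlip.uniformContinuousOn
    (le_principal_iff.2 (Ioo_mem_nhdsGT (by norm_num))))

/-- Vladimirov's theorem in one variable: a holomorphic function on the upper
half-plane with a power-law bound has a tempered-distribution boundary value. -/
theorem vladimirov_one_variable
    (f : ℂ → ℂ)
    (hf : DifferentiableOn ℂ f {z : ℂ | 0 < z.im})
    (C A B : ℝ) (hC : 0 < C) (hA : 0 ≤ A) (hB : 0 ≤ B)
    (hbound : ∀ x : ℝ, ∀ y ∈ Set.Ioc (0:ℝ) 1,
      ‖f ((x : ℂ) + (y : ℂ) * Complex.I)‖ ≤ C * (1 + |x|) ^ B * y ^ (-A)) :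
    ∃ T : SchwartzMap ℝ ℂ →L[ℂ] ℂ, ∀ φ : SchwartzMap ℝ ℂ,
      Tendsto (fun y : ℝ => ∫ x : ℝ, f ((x : ℂ) + (y : ℂ) * Complex.I) * φ x)
        (nhdsWithin 0 (Set.Ioi 0)) (nhds (T φ)) := by
  have hstrip : StripBound f C A ⌈B⌉₊ := by
    intro z hz0 hz1
    have h := hbound z.re z.im ⟨hz0, hz1⟩
    rw [Complex.re_add_im] at h
    refine h.trans ?_
    have hx : 1 ≤ 1 + |z.re| := by linarith [abs_nonneg z.re]
    rw [← Real.rpow_natCast]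
    gcongr
    exact Nat.le_ceil B
  have hder (φ : SchwartzMap ℝ ℂ) (y : ℝ) (hy : y ∈ Set.Ioo (0 : ℝ) (1 / 2)) :=
    hasDerivAt_slicePairing hf hC hA hstrip φ hy
  have hzero : SlicePairingBound f 0 := by
    refine SlicePairingBound.to_zero hder ⌈A⌉₊ ((hstrip.slicePairingBound hC).mono ?_)
    linarith [Nat.le_ceil A]
  choose T hT using hzero.exists_tendsto hder
  have hnear : ∀ᶠ y : ℝ in nhdsWithin 0 (Set.Ioi 0), y ∈ Set.Ioo (0 : ℝ) (1 / 4) :=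
    Ioo_mem_nhdsGT (by norm_num)
  have hadd (φ ψ : SchwartzMap ℝ ℂ) : T (φ + ψ) = T φ + T ψ := by
    refine tendsto_nhds_unique_of_eventuallyEq (hT _) ((hT φ).add (hT ψ)) ?_
    filter_upwards [hnear] with y hy
    have hy1 : y ≤ 1 := by linarith [hy.2]
    rw [slicePairing, slicePairing, slicePairing,
      ← integral_add (hstrip.integrable hf hy.1 hy1 φ) (hstrip.integrable hf hy.1 hy1 ψ)]
    simp [mul_add]
  have hsmul (c : ℂ) (φ : SchwartzMap ℝ ℂ) : T (c • φ) = c * T φ := by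
    refine tendsto_nhds_unique (hT _) (((hT φ).const_mul c).congr fun y => ?_)
    rw [slicePairing, slicePairing, ← integral_const_mul]
    congr 1 with x
    simp only [smul_apply, smul_eq_mul]
    ring
  obtain ⟨q, hqc, hq0, hq⟩ := hzero
  have hTq (φ : SchwartzMap ℝ ℂ) : ‖T φ‖ ≤ q φ := by
    refine le_of_tendsto (hT φ).norm ?_
    filter_upwards [hnear] with y hy
    simpa using hq φ y ⟨hy.1, hy.2.le⟩
  let L : SchwartzMap ℝ ℂ →ₗ[ℂ] ℂ :=
    { toFun := T, map_add' := hadd, map_smul' := by simpa using hsmul }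
  -- For a linear map continuity at `0` suffices, and there `q` tends to `0`.
  have hL : Continuous L := by
    refine continuous_of_continuousAt_zero L ?_
    rw [ContinuousAt, map_zero]
    refine squeeze_zero_norm hTq ?_
    simpa [hq0] using hqc.tendsto 0
  exact ⟨⟨L, hL⟩, hT⟩
end

section
/- Let n ≥ 1 and let f : (Fin n → ℂ) → ℂ be holomorphic (differentiable over ℂ) on the tube T = {z : Fin n → ℂ | ∀ i, 0 < Im (z i)}. Suppose there are constants C > 0 and A, B ≥ 0 such that for all x : Fin n → ℝ and all y : Fin n → ℝ with 0 < y i ≤ 1 for every i, ‖f(x + i·y)‖ ≤ C·(1 + ‖x‖)^B · (min_i y i)^{−A}. Then there exists a continuous ℂ-linear functional T on the Schwartz space 𝓢(Fin n → ℝ, ℂ) such that for every Schwartz function φ and for every v : Fin n → ℝ with v i > 0 for all i, the pairing ∫ f(x + i·ε·v)·φ(x) dx tends to T(φ) as ε → 0⁺. In particular the limit exists for each direction v with positive components and is independent of the choice of v. -/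
open MeasureTheory Filter

/-!
Write `F_φ(y) = ∫ f(x + i y) φ(x) dx`. By the Cauchy–Riemann equations and integration by parts,
differentiating in `y` moves onto the test function: `∂_w F_φ = -i F_{∂_w φ}`
(`hasDerivAt_pairing`; Cauchy's estimate supplies the domination needed to differentiate under the
integral). Hence an estimate that holds for *all* `φ`, with a continuous seminorm as constant, is
also an estimate for the derivatives of `F_φ`.

The hypothesis gives `|F_φ(y)| ≤ p(φ) (min y)^(-N/2)` for a continuous seminorm `p` and some `N`
(`growth_init`). Integrating the same bound for `∂_e φ`, where `e = (1, …, 1)`, along `y + t e` from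
a point at fixed distance from the boundary of the cone, improves the exponent `-(j+1)/2` to `-j/2`,
at the price of replacing `p` by a combination of `p` and `p ∘ ∂_e` (`growth_step`): one writes
`(μ + t)^(-(j+1)/2) ≤ μ^(-j/2) (μ + t)^(-1/2)` and the last factor is integrable at `t = μ = 0`.
Half-integer steps avoid the logarithm that would appear at exponent `-1`. After `N` steps
`|F_φ(y)| ≤ p(φ)` near the vertex of the cone (`exists_uniform_bound`).

Applying this to `∂_e φ` shows that `ε ↦ F_φ(ε e)` is Lipschitz, so it has a limit `T φ`, which is
linear in `φ` and bounded by `p(φ)`, hence continuous. Applying it to `∂_{v - e} φ` on the segment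
from `ε e` to `ε v` gives `|F_φ(ε v) - F_φ(ε e)| ≤ ε p(∂_{v - e} φ)`, so every direction `v` in the
cone yields the same limit.
-/

namespace TubeBV

open scoped LineDeriv SchwartzMap Topology

variable {n : ℕ}

/-! ### Slices of the tube and integrability against Schwartz functions -/

/-- The point `x + i y` of `ℂⁿ`. -/
def tubePt (x y : Fin n → ℝ) : Fin n → ℂ := fun i => (x i : ℂ) + (y i : ℂ) * Complex.I

/-- The open tube over the positive orthant. -/
def tube (n : ℕ) : Set (Fin n → ℂ) := {z | ∀ i, 0 < (z i).im}

/-- The pairing `∫ f(x + i y) φ(x) dx` of a slice of `f` with a test function. -/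
noncomputable def pairing (f : (Fin n → ℂ) → ℂ) (φ : 𝓢(Fin n → ℝ, ℂ)) (y : Fin n → ℝ) : ℂ :=
  ∫ x, f (tubePt x y) * φ x

/-- Polynomial growth of degree `k` in `x` and blow-up at most `(min y)^(-N/2)` as `y → 0`.
The minimum of the `y i` enters through an arbitrary lower bound `μ`. -/
def TubeBound (f : (Fin n → ℂ) → ℂ) (C : ℝ) (k N : ℕ) : Prop :=
  ∀ μ : ℝ, 0 < μ → ∀ x y : Fin n → ℝ, (∀ i, μ ≤ y i ∧ y i ≤ 1) →
    ‖f (tubePt x y)‖ ≤ C / √μ ^ N * (1 + ‖x‖) ^ k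

lemma tubePt_mem {x y : Fin n → ℝ} (hy : ∀ i, 0 < y i) : tubePt x y ∈ tube n := by
  intro i; simpa [tubePt] using hy i

lemma isOpen_tube : IsOpen (tube n) := by
  have : tube n = ⋂ i, {z : Fin n → ℂ | 0 < (z i).im} := by ext z; simp [tube]
  rw [this]
  exact isOpen_iInter_of_finite fun i => isOpen_lt continuous_const (by fun_prop)

lemma tubePt_add_smul (x y w : Fin n → ℝ) (ζ : ℂ) :
    tubePt x y + ζ • (fun i => (w i : ℂ)) = tubePt (x + ζ.re • w) (y + ζ.im • w) := by
  ext i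
  simp only [tubePt, Pi.add_apply, Pi.smul_apply, smul_eq_mul]
  push_cast
  conv_lhs => rw [← Complex.re_add_im ζ]
  ring

lemma continuous_tubePt (y : Fin n → ℝ) : Continuous fun x => tubePt x y := by
  unfold tubePt; fun_prop

/-- A nonnegative multiple of a continuous seminorm, as a continuous seminorm. -/
lemma exists_seminorm_const_mul {r : ℝ} (hr : 0 ≤ r) {p : Seminorm ℂ 𝓢(Fin n → ℝ, ℂ)}
    (hp : Continuous p) :
    ∃ q : Seminorm ℂ 𝓢(Fin n → ℝ, ℂ), Continuous q ∧ ∀ φ, q φ = r * p φ := by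
  have h : ∀ φ, (r.toNNReal • p) φ = r * p φ := fun φ => by
    simp [NNReal.smul_def, Real.coe_toNNReal _ hr]
  refine ⟨r.toNNReal • p, ?_, h⟩
  rw [show ⇑(r.toNNReal • p) = fun φ => r * p φ from funext h]
  exact continuous_const.mul hp

/-- Schwartz functions decay with any polynomial weight `(1 + ‖x‖)^k` to spare, uniformly in terms
of one continuous seminorm. The exponent `-(n + 1)` on the right is integrable over `ℝⁿ`. -/
lemma exists_seminorm (n k : ℕ) : ∃ p : Seminorm ℂ 𝓢(Fin n → ℝ, ℂ), Continuous p ∧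
    ∀ φ x, (1 + ‖x‖) ^ k * ‖φ x‖ ≤ p φ * (1 + ‖x‖) ^ (-((n : ℝ) + 1)) := by
  let m : ℕ × ℕ := (k + n + 1, 0)
  obtain ⟨q, hqc, hq⟩ := exists_seminorm_const_mul (r := 2 ^ m.1) (by positivity)
    (Seminorm.continuous_finsetSup (s := Finset.Iic m)
      (p := schwartzSeminormFamily ℂ (Fin n → ℝ) ℂ) fun i _ =>
        (schwartz_withSeminorms ℂ (Fin n → ℝ) ℂ).continuous_seminorm i)
  refine ⟨q, hqc, fun φ x => ?_⟩
  have h := SchwartzMap.one_add_le_sup_seminorm_apply (𝕜 := ℂ) (m := m) (k := k + n + 1) (n := 0)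
    le_rfl le_rfl φ x
  rw [Real.rpow_neg (by positivity), ← div_eq_mul_inv, le_div_iff₀ (by positivity)]
  have e : (1 + ‖x‖) ^ ((n : ℝ) + 1) = (1 + ‖x‖) ^ (n + 1) := by
    rw [← Real.rpow_natCast]; norm_num
  rw [e, hq]
  simp only [norm_iteratedFDeriv_zero] at h
  calc _ = (1 + ‖x‖) ^ (k + n + 1) * ‖φ x‖ := by ring
    _ ≤ _ := h

lemma integrable_weight (n : ℕ) :
    Integrable fun x : Fin n → ℝ => (1 + ‖x‖) ^ (-((n : ℝ) + 1)) :=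
  integrable_one_add_norm (by simp)

lemma integrable_mul_schwartz {g : (Fin n → ℝ) → ℂ} {K : ℝ} {k : ℕ}
    (hg : AEStronglyMeasurable g) (hK : ∀ x, ‖g x‖ ≤ K * (1 + ‖x‖) ^ k) (φ : 𝓢(Fin n → ℝ, ℂ)) :
    Integrable fun x => g x * φ x := by
  obtain ⟨p, -, hp⟩ := exists_seminorm n k
  have hK0 : 0 ≤ K := by simpa using (norm_nonneg _).trans (hK 0)
  refine ((integrable_weight n).const_mul (K * p φ)).mono'
    (hg.mul φ.continuous.aestronglyMeasurable) (.of_forall fun x => ?_)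
  rw [norm_mul]
  calc _ ≤ K * (1 + ‖x‖) ^ k * ‖φ x‖ := by gcongr; exact hK x
    _ = K * ((1 + ‖x‖) ^ k * ‖φ x‖) := by ring
    _ ≤ K * (p φ * (1 + ‖x‖) ^ (-((n : ℝ) + 1))) := mul_le_mul_of_nonneg_left (hp φ x) (by positivity)
    _ = _ := by ring

/-! ### Differentiating the pairing in the imaginary direction -/

section
variable {f : (Fin n → ℂ) → ℂ} {C : ℝ} {k N : ℕ}

lemma continuous_slice (hf : DifferentiableOn ℂ f (tube n)) {y : Fin n → ℝ} (hy : ∀ i, 0 < y i) :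
    Continuous fun x => f (tubePt x y) :=
  hf.continuousOn.comp_continuous (continuous_tubePt y) fun _ => tubePt_mem hy

/-- Cauchy's estimate on a complex disc in the direction `w`: along a short real segment through `y`,
the derivative of `f` in the direction `w` grows polynomially in `x`, uniformly on the segment. -/
lemma exists_fderiv_bound (hf : DifferentiableOn ℂ f (tube n)) (hC : 0 ≤ C)
    (hb : TubeBound f C k N) {y : Fin n → ℝ} (hy : ∀ i, 0 < y i ∧ y i < 1) (w : Fin n → ℝ) :
    ∃ ρ > 0, ∃ K : ℝ, ∀ τ ∈ Metric.ball (0 : ℝ) ρ, (∀ i, ρ ≤ (y + τ • w) i ∧ (y + τ • w) i ≤ 1) ∧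
      ∀ x, ‖fderiv ℂ f (tubePt x (y + τ • w)) (fun i => (w i : ℂ))‖ ≤ K * (1 + ‖x‖) ^ k := by
  -- Room for `|τ| < ρ`, a disc of radius `ρ` around each such `τ`, and a margin `ρ` from the walls.
  obtain ⟨ρ, hρ, hρ0⟩ : ∃ ρ : ℝ, (∀ i, 3 * ρ * (1 + |w i|) < y i ∧ 3 * ρ * (1 + |w i|) < 1 - y i) ∧
      0 < ρ := by
    have : ∀ᶠ ρ : ℝ in 𝓝[>] 0,
        ∀ i, 3 * ρ * (1 + |w i|) < y i ∧ 3 * ρ * (1 + |w i|) < 1 - y i := by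
      refine eventually_nhdsWithin_of_eventually_nhds (eventually_all.2 fun i => ?_)
      have h : Tendsto (fun ρ : ℝ => 3 * ρ * (1 + |w i|)) (𝓝 0) (𝓝 0) :=
        Continuous.tendsto' (by fun_prop) _ _ (by simp)
      exact (h.eventually_lt_const (hy i).1).and
        (h.eventually_lt_const (by linarith [(hy i).2]))
    exact (this.and self_mem_nhdsWithin).exists
  have key : ∀ t : ℝ, |t| ≤ 2 * ρ → ∀ i, ρ ≤ (y + t • w) i ∧ (y + t • w) i ≤ 1 := by
    intro t ht i
    obtain ⟨h1, h2⟩ := hρ i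
    have h3 : |t * w i| ≤ 2 * ρ * |w i| := by rw [abs_mul]; gcongr
    have := abs_le.1 h3
    have h4 : 0 ≤ ρ * |w i| := by positivity
    simp only [Pi.add_apply, Pi.smul_apply, smul_eq_mul]
    constructor <;> nlinarith
  refine ⟨ρ, hρ0, C / √ρ ^ N * (1 + ρ * ‖w‖) ^ k / ρ, fun τ hτ => ?_⟩
  have hτ' : |τ| < ρ := by simpa using hτ
  refine ⟨key τ (by linarith), fun x => ?_⟩
  set z := tubePt x (y + τ • w)
  set w' : Fin n → ℂ := fun i => (w i : ℂ)
  have hpt : ∀ ζ : ℂ, z + ζ • w' = tubePt (x + ζ.re • w) (y + (τ + ζ.im) • w) := by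
    intro ζ; simp only [z, w', tubePt_add_smul, add_smul, add_assoc]
  have hin : ∀ ζ ∈ Metric.closedBall (0 : ℂ) ρ, |ζ.re| ≤ ρ ∧ |τ + ζ.im| ≤ 2 * ρ := by
    intro ζ hζ
    have hζ' : ‖ζ‖ ≤ ρ := by simpa using hζ
    exact ⟨(Complex.abs_re_le_norm ζ).trans hζ',
      (abs_add_le _ _).trans (by linarith [(Complex.abs_im_le_norm ζ).trans hζ'])⟩
  have hmem : ∀ ζ ∈ Metric.closedBall (0 : ℂ) ρ, z + ζ • w' ∈ tube n := by
    intro ζ hζ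
    rw [hpt]
    exact tubePt_mem fun i => hρ0.trans_le (key _ (hin ζ hζ).2 i).1
  have hd : DifferentiableOn ℂ (fun ζ : ℂ => f (z + ζ • w')) (Metric.closedBall 0 ρ) :=
    hf.comp (by fun_prop) hmem
  have hder : HasDerivAt (fun ζ : ℂ => f (z + ζ • w')) (fderiv ℂ f z w') 0 := by
    have h0 : z ∈ tube n := by
      simpa using hmem 0 (by simp [hρ0.le])
    have h1 : HasFDerivAt f (fderiv ℂ f z) (z + (0 : ℂ) • w') := by
      simpa using (hf.differentiableAt (isOpen_tube.mem_nhds h0)).hasFDerivAt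
    have h2 : HasDerivAt (fun ζ : ℂ => z + ζ • w') w' 0 := by
      simpa using ((hasDerivAt_id (0 : ℂ)).smul_const w').const_add z
    exact h1.comp_hasDerivAt (0 : ℂ) h2
  rw [← hder.deriv]
  refine (Complex.norm_deriv_le_of_forall_mem_sphere_norm_le hρ0
    (hd.diffContOnCl_ball le_rfl) (C := C / √ρ ^ N * (1 + ρ * ‖w‖) ^ k * (1 + ‖x‖) ^ k)
    fun ζ hζ => ?_).trans_eq (by ring)
  have hζ' := hin ζ (Metric.sphere_subset_closedBall hζ)
  rw [hpt]
  refine (hb ρ hρ0 _ _ (key _ hζ'.2)).trans ?_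
  rw [mul_assoc, ← mul_pow]
  gcongr
  calc 1 + ‖x + ζ.re • w‖ ≤ 1 + (‖x‖ + |ζ.re| * ‖w‖) := by
        gcongr; exact (norm_add_le _ _).trans (by simp [norm_smul])
    _ ≤ 1 + (‖x‖ + ρ * ‖w‖) := by gcongr; exact hζ'.1
    _ ≤ _ := by nlinarith [mul_nonneg (mul_nonneg hρ0.le (norm_nonneg w)) (norm_nonneg x)]

/-- `∂_w F_φ = -i F_{∂_w φ}` at a point `y`, by differentiation under the integral and integration
by parts. -/
lemma hasDerivAt_pairing_zero (hf : DifferentiableOn ℂ f (tube n)) (hC : 0 ≤ C)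
    (hb : TubeBound f C k N) (φ : 𝓢(Fin n → ℝ, ℂ)) {y : Fin n → ℝ}
    (hy : ∀ i, 0 < y i ∧ y i < 1) (w : Fin n → ℝ) :
    HasDerivAt (fun τ : ℝ => pairing f φ (y + τ • w)) (-Complex.I * pairing f (∂_{w} φ) y) 0 := by
  obtain ⟨ρ, hρ, K, hK⟩ := exists_fderiv_bound hf hC hb hy w
  have h0 : (0 : ℝ) ∈ Metric.ball (0 : ℝ) ρ := Metric.mem_ball_self hρ
  set w' : Fin n → ℂ := fun i => (w i : ℂ) with hw'
  have hdiff : ∀ τ ∈ Metric.ball (0 : ℝ) ρ, ∀ x,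
      HasFDerivAt f (fderiv ℂ f (tubePt x (y + τ • w))) (tubePt x (y + τ • w)) := fun τ hτ x =>
    (hf.differentiableAt (isOpen_tube.mem_nhds
      (tubePt_mem fun i => hρ.trans_le ((hK τ hτ).1 i).1))).hasFDerivAt
  have hy0 : y + (0 : ℝ) • w = y := by simp
  have hslice : ∀ ψ : 𝓢(Fin n → ℝ, ℂ), Integrable fun x => f (tubePt x y) * ψ x := fun ψ =>
    integrable_mul_schwartz (continuous_slice hf fun i => (hy i).1).aestronglyMeasurable
      (fun x => hb ρ hρ x y (by simpa [hy0] using (hK 0 h0).1)) ψ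
  have hmeas : AEStronglyMeasurable fun x => fderiv ℂ f (tubePt x y) w' :=
    ((measurable_fderiv_apply_const ℂ f w').comp
      (continuous_tubePt y).measurable).aestronglyMeasurable
  have hslice' : Integrable fun x => fderiv ℂ f (tubePt x y) w' * φ x :=
    integrable_mul_schwartz hmeas (fun x => by simpa [hy0] using (hK 0 h0).2 x) φ
  have main := (hasDerivAt_integral_of_dominated_loc_of_deriv_le (𝕜 := ℝ) (μ := volume)
    (F := fun (τ : ℝ) (x : Fin n → ℝ) => f (tubePt x (y + τ • w)) * φ x)
    (F' := fun (τ : ℝ) x => Complex.I * fderiv ℂ f (tubePt x (y + τ • w)) w' * φ x)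
    (bound := fun x => ‖((K * (1 + ‖x‖) ^ k : ℝ) : ℂ) * φ x‖)
    (x₀ := (0 : ℝ)) (s := Metric.ball 0 ρ) (Metric.ball_mem_nhds _ hρ) ?_ ?_ ?_ ?_ ?_ ?_).2
  · refine main.congr_deriv ?_
    -- The real derivative of the slice in the direction `w` is the complex derivative of `f` in `w`.
    have hreal : ∀ x, HasFDerivAt (fun x => f (tubePt x y))
        ((fderiv ℂ f (tubePt x y)).restrictScalars ℝ ∘L
          ContinuousLinearMap.pi fun i =>
            Complex.ofRealCLM ∘L ContinuousLinearMap.proj (R := ℝ) (φ := fun _ : Fin n => ℝ) i) x := by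
      intro x
      have h1 := (by simpa [hy0] using hdiff 0 h0 x :
        HasFDerivAt f (fderiv ℂ f (tubePt x y)) (tubePt x y)).restrictScalars ℝ
      refine HasFDerivAt.comp x h1 ?_
      refine hasFDerivAt_pi.2 fun i => ?_
      exact (Complex.ofRealCLM ∘L ContinuousLinearMap.proj (R := ℝ)
        (φ := fun _ : Fin n => ℝ) i).hasFDerivAt.add_const _
    have hfd : ∀ x, fderiv ℝ (fun x => f (tubePt x y)) x w = fderiv ℂ f (tubePt x y) w' := by
      intro x
      rw [(hreal x).fderiv]
      rfl
    have ibp := integral_mul_fderiv_eq_neg_fderiv_mul_of_integrable (μ := volume) (𝕜 := ℂ)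
      (f := fun x => f (tubePt x y)) (g := φ) (v := w) (by simpa only [hfd] using hslice')
      (hslice (∂_{w} φ)) (hslice φ) (fun x _ => (hreal x).differentiableAt)
      (fun x _ => φ.differentiableAt)
    have e : pairing f (∂_{w} φ) y = - ∫ x, fderiv ℂ f (tubePt x y) w' * φ x := by
      simp only [hfd] at ibp
      exact ibp
    rw [e, hy0]
    simp only [mul_assoc]
    rw [integral_const_mul]
    ring
  · filter_upwards [Metric.ball_mem_nhds _ hρ] with τ hτ
    exact ((continuous_slice hf fun i => hρ.trans_le ((hK τ hτ).1 i).1).mul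
      φ.continuous).aestronglyMeasurable
  · simpa only [hy0] using hslice φ
  · simp only [hy0]
    exact (aestronglyMeasurable_const.mul hmeas).mul φ.continuous.aestronglyMeasurable
  · refine .of_forall fun x τ hτ => ?_
    rw [norm_mul, norm_mul, norm_mul, Complex.norm_I, one_mul, Complex.norm_real]
    gcongr
    exact ((hK τ hτ).2 x).trans (le_abs_self _)
  · refine (integrable_mul_schwartz (k := k) (K := |K|) ?_ (fun x => ?_) φ).norm
    · exact (by fun_prop : Continuous fun x : Fin n → ℝ =>
        ((K * (1 + ‖x‖) ^ k : ℝ) : ℂ)).aestronglyMeasurable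
    · rw [Complex.norm_real, norm_mul, Real.norm_eq_abs, norm_pow, Real.norm_of_nonneg
        (by positivity : 0 ≤ 1 + ‖x‖)]
  · refine .of_forall fun x τ hτ => ?_
    refine HasDerivAt.mul_const ?_ _
    have h1 : HasDerivAt (fun τ : ℝ => tubePt x (y + τ • w)) (Complex.I • w') τ := by
      refine hasDerivAt_pi.2 fun i => ?_
      have h := ((((hasDerivAt_id τ).mul_const (w i)).const_add (y i)).ofReal_comp.mul_const
        Complex.I).const_add (x i : ℂ)
      refine h.congr_deriv ?_
      simp [w', mul_comm]
    have h2 := ((hdiff τ hτ x).restrictScalars ℝ).comp_hasDerivAt τ h1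
    refine h2.congr_deriv ?_
    simp

lemma hasDerivAt_pairing (hf : DifferentiableOn ℂ f (tube n)) (hC : 0 ≤ C)
    (hb : TubeBound f C k N) (φ : 𝓢(Fin n → ℝ, ℂ)) {y w : Fin n → ℝ} {t : ℝ}
    (hy : ∀ i, 0 < (y + t • w) i ∧ (y + t • w) i < 1) :
    HasDerivAt (fun τ : ℝ => pairing f φ (y + τ • w))
      (-Complex.I * pairing f (∂_{w} φ) (y + t • w)) t := by
  have h := hasDerivAt_pairing_zero hf hC hb φ hy w
  have h' : HasDerivAt (fun τ : ℝ => pairing f φ (y + t • w + τ • w))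
      (-Complex.I * pairing f (∂_{w} φ) (y + t • w)) (t - t) := by rwa [sub_self]
  refine (h'.comp_sub_const t t).congr_of_eventuallyEq (.of_forall fun τ => ?_)
  simp [sub_smul, add_assoc]

/-! ### Lowering the order of the singularity -/

/-- The pairing with `φ` blows up at most like `(min y)^(-j/2)` at the vertex of the cone, with a
constant that is a continuous seminorm of `φ`. The minimum of the `y i` enters through an arbitrary
lower bound `μ`, and `c` is the size of the cube on which the bound holds. -/
def Growth (f : (Fin n → ℂ) → ℂ) (j : ℕ) : Prop :=
  ∃ c : ℝ, 0 < c ∧ c ≤ 1 ∧ ∃ p : Seminorm ℂ 𝓢(Fin n → ℝ, ℂ), Continuous p ∧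
    ∀ φ, ∀ μ : ℝ, 0 < μ → μ < c → ∀ y : Fin n → ℝ, (∀ i, μ ≤ y i ∧ y i < c) →
      ‖pairing f φ y‖ ≤ p φ / √μ ^ j

lemma growth_init (hC : 0 ≤ C) (hb : TubeBound f C k N) : Growth f N := by
  obtain ⟨p, hpc, hp⟩ := exists_seminorm n k
  set J : ℝ := ∫ x : Fin n → ℝ, (1 + ‖x‖) ^ (-((n : ℝ) + 1))
  have hJ : 0 ≤ J := integral_nonneg fun x => by positivity
  obtain ⟨q, hqc, hq⟩ := exists_seminorm_const_mul (mul_nonneg hC hJ) hpc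
  refine ⟨1, one_pos, le_rfl, q, hqc, fun φ μ hμ _ y hy => ?_⟩
  have := norm_integral_le_of_norm_le
    ((integrable_weight n).const_mul (C / √μ ^ N * p φ)) (f := fun x => f (tubePt x y) * φ x)
    (.of_forall fun x => ?_)
  · refine this.trans_eq ?_
    rw [integral_const_mul, hq]
    ring
  · rw [norm_mul]
    calc _ ≤ C / √μ ^ N * (1 + ‖x‖) ^ k * ‖φ x‖ := by
          gcongr; exact hb μ hμ x y fun i => ⟨(hy i).1, (hy i).2.le⟩
      _ = C / √μ ^ N * ((1 + ‖x‖) ^ k * ‖φ x‖) := by ring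
      _ ≤ C / √μ ^ N * (p φ * (1 + ‖x‖) ^ (-((n : ℝ) + 1))) :=
          mul_le_mul_of_nonneg_left (hp φ x) (by positivity)
      _ = _ := by ring

/-- Integrating the bound for `∂_e φ` along the diagonal `e = (1, …, 1)` gains a factor `√μ`; the
cube is halved so that the segment stays inside the old one. -/
lemma growth_step (hf : DifferentiableOn ℂ f (tube n)) (hC : 0 ≤ C)
    (hb : TubeBound f C k N) {j : ℕ} (h : Growth f (j + 1)) : Growth f j := by
  obtain ⟨c, hc0, hc1, p, hpc, hp⟩ := h
  let e : Fin n → ℝ := fun _ => 1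
  let D := (LineDeriv.lineDerivOpCLM ℂ 𝓢(Fin n → ℝ, ℂ) e)
  set s := c / 2
  have hs : 0 < s := by positivity
  have hsc : s + s = c := by simp [s]
  obtain ⟨q₁, hq₁c, hq₁⟩ := exists_seminorm_const_mul (r := (√s ^ (j + 1))⁻¹) (by positivity) hpc
  obtain ⟨q₂, hq₂c, hq₂⟩ := exists_seminorm_const_mul (r := 2) (by positivity)
    (p := p.comp D.toLinearMap) (hpc.comp D.continuous)
  refine ⟨s, hs, by linarith, q₁ + q₂, hq₁c.add hq₂c, fun φ μ hμ hμs y hy => ?_⟩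
  have hdom : ∀ t ∈ Set.Icc 0 s, ∀ i,
      μ + (s - t) ≤ (y + (s - t) • e) i ∧ (y + (s - t) • e) i < c := by
    intro t ht i
    have := hy i
    simp only [Pi.add_apply, Pi.smul_apply, smul_eq_mul, e, mul_one]
    constructor <;> linarith [ht.1]
  have hder : ∀ t ∈ Set.Icc 0 s, HasDerivAt (fun t => pairing f φ (y + (s - t) • e))
      (-(-Complex.I * pairing f (∂_{e} φ) (y + (s - t) • e))) t := fun t ht =>
    HasDerivAt.comp_const_sub s t (hasDerivAt_pairing hf hC hb φ fun i =>
      ⟨lt_of_lt_of_le (by linarith [ht.2]) (hdom t ht i).1, (hdom t ht i).2.trans_le hc1⟩)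
  set Q := p (∂_{e} φ) / √μ ^ j
  have hQ : 0 ≤ Q := by positivity
  have hμ1 : √μ ^ j ≤ 1 := pow_le_one₀ (by positivity) (Real.sqrt_le_one.2 (by linarith))
  -- The comparison function is a primitive of `Q (μ + (s - t))^(-1/2)`, which dominates the
  -- derivative; at `t = 0` it equals the bound at the interior point `y + s e`.
  have main := image_norm_le_of_norm_deriv_right_le_deriv_boundary'
    (f := fun t => pairing f φ (y + (s - t) • e)) (a := 0) (b := s)
    (B := fun t => p φ / √s ^ (j + 1) + 2 * Q * √(μ + s) - 2 * Q * √(μ + (s - t)))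
    (B' := fun t => Q / √(μ + (s - t)))
    (fun t ht => (hder t ht).continuousAt.continuousWithinAt)
    (fun t ht => (hder t (Set.Ico_subset_Icc_self ht)).hasDerivWithinAt) ?_
    (by fun_prop) ?_ ?_ (Set.right_mem_Icc.2 hs.le)
  · simp only [sub_self, zero_smul, add_zero] at main
    refine main.trans ?_
    have h1 : √(μ + s) ≤ 1 := Real.sqrt_le_one.2 (by linarith)
    have h2 : p φ / √s ^ (j + 1) ≤ p φ / √s ^ (j + 1) / √μ ^ j :=
      le_div_self (by positivity) (by positivity) hμ1
    have h3 : (q₁ + q₂) φ / √μ ^ j = p φ / √s ^ (j + 1) / √μ ^ j + 2 * Q := by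
      rw [add_apply, hq₁, hq₂]
      simp only [Q, D, Seminorm.comp_apply]
      have : (D : 𝓢(Fin n → ℝ, ℂ) →ₗ[ℂ] 𝓢(Fin n → ℝ, ℂ)) φ = ∂_{e} φ := rfl
      rw [this]
      ring
    rw [h3]
    nlinarith [Real.sqrt_nonneg μ, mul_nonneg hQ (Real.sqrt_nonneg μ)]
  · simp only [sub_zero, add_sub_cancel_right]
    have h0 : (0 : ℝ) ∈ Set.Icc 0 s := ⟨le_rfl, hs.le⟩
    refine hp φ s hs (by linarith) _ fun i => ?_
    have := hdom 0 h0 i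
    rw [sub_zero] at this
    exact ⟨by linarith, this.2⟩
  · intro t ht
    have hpos : 0 < μ + (s - t) := by linarith [ht.2]
    have h1 : HasDerivAt (fun t => μ + (s - t)) (-1) t :=
      ((hasDerivAt_id t).const_sub s).const_add μ
    refine (((h1.sqrt hpos.ne').const_mul (2 * Q)).const_sub _).hasDerivWithinAt.congr_deriv ?_
    field_simp
  · intro t ht
    have hpos : 0 < μ + (s - t) := by linarith [ht.2]
    rw [norm_neg, norm_mul, norm_neg, Complex.norm_I, one_mul]
    refine (hp _ (μ + (s - t)) hpos (by linarith [ht.1]) _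
      (hdom t (Set.Ico_subset_Icc_self ht))).trans ?_
    rw [pow_succ, ← div_div]
    simp only [Q]
    gcongr
    linarith [ht.2]

lemma growth_zero (hf : DifferentiableOn ℂ f (tube n)) (hC : 0 ≤ C)
    (hb : TubeBound f C k N) : Growth f 0 := by
  have : ∀ j, Growth f j → Growth f 0 := by
    intro j
    induction j with
    | zero => exact id
    | succ j ih => exact fun h => ih (growth_step hf hC hb h)
  exact this N (growth_init hC hb)

/-- Near the vertex of the cone the pairing is bounded by a continuous seminorm of `φ`, with no
singularity left. -/
lemma exists_uniform_bound (hf : DifferentiableOn ℂ f (tube n)) (hC : 0 ≤ C)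
    (hb : TubeBound f C k N) :
    ∃ c : ℝ, 0 < c ∧ c ≤ 1 ∧ ∃ p : Seminorm ℂ 𝓢(Fin n → ℝ, ℂ), Continuous p ∧
      ∀ φ, ∀ y : Fin n → ℝ, (∀ i, 0 < y i ∧ y i < c) → ‖pairing f φ y‖ ≤ p φ := by
  obtain ⟨c, hc, hc1, p, hpc, hp⟩ := growth_zero hf hC hb
  refine ⟨c, hc, hc1, p, hpc, fun φ y hy => ?_⟩
  have : ∀ᶠ μ : ℝ in 𝓝[>] 0, (∀ i, μ ≤ y i) ∧ μ < c ∧ 0 < μ :=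
    (eventually_nhdsWithin_of_eventually_nhds <|
      (eventually_all.2 fun i => eventually_le_nhds (hy i).1)).and
      ((eventually_nhdsWithin_of_eventually_nhds (eventually_lt_nhds hc)).and self_mem_nhdsWithin)
  obtain ⟨μ, h1, h2, h3⟩ := this.exists
  simpa using hp φ μ h3 h2 y fun i => ⟨h1 i, (hy i).2⟩

/-! ### Existence, continuity and independence of direction of the limit -/

lemma exists_tendsto_diag (hf : DifferentiableOn ℂ f (tube n)) (hC : 0 ≤ C)
    (hb : TubeBound f C k N) (φ : 𝓢(Fin n → ℝ, ℂ)) :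
    ∃ L, Tendsto (fun ε : ℝ => pairing f φ (ε • fun _ => 1)) (𝓝[>] 0) (𝓝 L) := by
  obtain ⟨c, hc, hc1, p, hpc, hp⟩ := exists_uniform_bound hf hC hb
  set e : Fin n → ℝ := fun _ => 1
  have hdom : ∀ t ∈ Set.Ioo 0 c, ∀ i, 0 < (0 + t • e) i ∧ (0 + t • e) i < c := by
    intro t ht i; simpa [e] using ht
  have hlip := (convex_Ioo (0 : ℝ) c).lipschitzOnWith_of_nnnorm_hasDerivWithin_le
    (C := (p (∂_{e} φ)).toNNReal) (fun t ht => (hasDerivAt_pairing hf hC hb φ (w := e) fun i =>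
      ⟨(hdom t ht i).1, (hdom t ht i).2.trans_le hc1⟩).hasDerivWithinAt) (fun t ht => by
      rw [← NNReal.coe_le_coe, coe_nnnorm, Real.coe_toNNReal _ (apply_nonneg _ _), norm_mul,
        norm_neg, Complex.norm_I, one_mul]
      exact hp _ _ (hdom t ht))
  have hmap : Cauchy (map (fun t : ℝ => pairing f φ (0 + t • e)) (𝓝[>] 0)) :=
    (cauchy_nhds.mono' inferInstance nhdsWithin_le_nhds).map_of_le hlip.uniformContinuousOn
      (le_principal_iff.2 (Ioo_mem_nhdsGT hc))
  simpa using cauchy_map_iff_exists_tendsto.1 hmap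

lemma tendsto_pairing_sub (hf : DifferentiableOn ℂ f (tube n)) (hC : 0 ≤ C)
    (hb : TubeBound f C k N) (φ : 𝓢(Fin n → ℝ, ℂ)) {v : Fin n → ℝ} (hv : ∀ i, 0 < v i) :
    Tendsto (fun ε : ℝ => pairing f φ (ε • v) - pairing f φ (ε • fun _ => 1)) (𝓝[>] 0) (𝓝 0) := by
  obtain ⟨c, hc, hc1, p, hpc, hp⟩ := exists_uniform_bound hf hC hb
  set e : Fin n → ℝ := fun _ => 1
  have hsmall : ∀ᶠ ε : ℝ in 𝓝[>] 0, (∀ i, ε * (1 + v i) < c) ∧ 0 < ε := by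
    refine (eventually_nhdsWithin_of_eventually_nhds (eventually_all.2 fun i => ?_)).and
      self_mem_nhdsWithin
    exact (Continuous.tendsto' (by fun_prop) 0 0 (by simp) :
      Tendsto (fun ε : ℝ => ε * (1 + v i)) (𝓝 0) (𝓝 0)).eventually_lt_const hc
  refine squeeze_zero_norm' (a := fun ε => p (∂_{v - e} φ) * ε) ?_ ?_
  · filter_upwards [hsmall] with ε ⟨hε, hε0⟩
    have hdom : ∀ t ∈ Set.Icc 0 ε, ∀ i, 0 < (ε • e + t • (v - e)) i ∧
        (ε • e + t • (v - e)) i < c := by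
      intro t ht i
      have := hε i
      have h1 := mul_nonneg ht.1 (hv i).le
      have h2 := mul_le_mul_of_nonneg_right ht.2 (hv i).le
      have h3 := mul_pos hε0 (hv i)
      simp only [Pi.add_apply, Pi.smul_apply, Pi.sub_apply, smul_eq_mul, e, mul_one]
      refine ⟨?_, by nlinarith [ht.1]⟩
      rcases ht.2.eq_or_lt with rfl | h
      · nlinarith
      · nlinarith
    have := (convex_Icc (0 : ℝ) ε).norm_image_sub_le_of_norm_hasDerivWithin_le
      (C := p (∂_{v - e} φ)) (fun t ht => (hasDerivAt_pairing hf hC hb φ (y := ε • e) (w := v - e)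
        fun i => ⟨(hdom t ht i).1, (hdom t ht i).2.trans_le hc1⟩).hasDerivWithinAt) (fun t ht => by
        rw [norm_mul, norm_neg, Complex.norm_I, one_mul]
        exact hp _ _ (hdom t ht)) (Set.left_mem_Icc.2 hε0.le) (Set.right_mem_Icc.2 hε0.le)
    simpa [← smul_add, abs_of_pos hε0] using this
  · refine tendsto_nhdsWithin_of_tendsto_nhds (Continuous.tendsto' (by fun_prop) _ _ (by simp))

lemma integrable_slice (hf : DifferentiableOn ℂ f (tube n)) (hb : TubeBound f C k N)
    {y : Fin n → ℝ} {μ : ℝ} (hμ : 0 < μ) (hy : ∀ i, μ ≤ y i ∧ y i ≤ 1) (φ : 𝓢(Fin n → ℝ, ℂ)) :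
    Integrable fun x => f (tubePt x y) * φ x :=
  integrable_mul_schwartz (continuous_slice hf fun i => hμ.trans_le (hy i).1).aestronglyMeasurable
    (fun x => hb μ hμ x y hy) φ

lemma exists_boundary_value (hf : DifferentiableOn ℂ f (tube n)) (hC : 0 ≤ C)
    (hb : TubeBound f C k N) : ∃ T : 𝓢(Fin n → ℝ, ℂ) →L[ℂ] ℂ, ∀ φ, ∀ v : Fin n → ℝ,
      (∀ i, 0 < v i) → Tendsto (fun ε : ℝ => pairing f φ (ε • v)) (𝓝[>] 0) (𝓝 (T φ)) := by
  choose T hT using exists_tendsto_diag hf hC hb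
  obtain ⟨c, hc, hc1, p, hpc, hp⟩ := exists_uniform_bound hf hC hb
  set e : Fin n → ℝ := fun _ => 1
  have hev : ∀ᶠ ε : ℝ in 𝓝[>] 0, 0 < ε ∧ ε < c := Ioo_mem_nhdsGT hc
  have hint : ∀ᶠ ε : ℝ in 𝓝[>] 0, ∀ φ : 𝓢(Fin n → ℝ, ℂ),
      Integrable fun x => f (tubePt x (ε • e)) * φ x := by
    filter_upwards [hev] with ε hε φ
    refine integrable_slice hf hb hε.1 (fun i => ?_) φ
    simpa [e] using hε.2.le.trans hc1
  let T' : 𝓢(Fin n → ℝ, ℂ) →ₗ[ℂ] ℂ :=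
    { toFun := T
      map_add' := fun φ ψ => tendsto_nhds_unique (hT (φ + ψ)) <|
        ((hT φ).add (hT ψ)).congr' <| by
          filter_upwards [hint] with ε h
          simp only [pairing, add_apply, mul_add]
          exact (integral_add (h φ) (h ψ)).symm
      map_smul' := fun a φ => tendsto_nhds_unique (hT (a • φ)) <|
        ((hT φ).const_mul a).congr fun ε => by
          simp only [pairing, smul_apply, smul_eq_mul]
          rw [← integral_const_mul]
          congr 1 with x
          ring }
  have hbound : ∀ φ, ‖T' φ‖ ≤ p φ := fun φ => le_of_tendsto (hT φ).norm <| by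
    filter_upwards [hev] with ε hε
    exact hp φ _ fun i => by simpa [e] using hε
  have hcont : Continuous T' := by
    refine continuous_of_continuousAt_zero T' ?_
    rw [ContinuousAt, map_zero]
    exact squeeze_zero_norm hbound (hpc.tendsto' 0 0 (map_zero p))
  refine ⟨⟨T', hcont⟩, fun φ v hv => ?_⟩
  simpa [e] using! (tendsto_pairing_sub hf hC hb φ hv).add (hT φ)

end
end TubeBV

/-- Vladimirov's theorem in several variables: the distributional boundary value
of a holomorphic function on the tube with power-law bound exists along every
direction `v` inside the positive cone and does not depend on `v`. -/
theorem vladimirov_several_variables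
    (n : ℕ) (hn : 1 ≤ n) (f : (Fin n → ℂ) → ℂ)
    (hf : DifferentiableOn ℂ f {z : Fin n → ℂ | ∀ i, 0 < (z i).im})
    (C A B : ℝ) (hC : 0 < C) (hA : 0 ≤ A) (hB : 0 ≤ B)
    (hbound : ∀ x : Fin n → ℝ, ∀ y : Fin n → ℝ, (∀ i, 0 < y i ∧ y i ≤ 1) →
      ‖f (fun i => (x i : ℂ) + (y i : ℂ) * Complex.I)‖ ≤
        C * (1 + ‖x‖) ^ B * (⨅ i, y i) ^ (-A)) :
    ∃ T : SchwartzMap (Fin n → ℝ) ℂ →L[ℂ] ℂ,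
      ∀ φ : SchwartzMap (Fin n → ℝ) ℂ, ∀ v : Fin n → ℝ, (∀ i, 0 < v i) →
        Tendsto (fun ε : ℝ => ∫ x : Fin n → ℝ,
            f (fun i => (x i : ℂ) + ((ε * v i : ℝ) : ℂ) * Complex.I) * φ x)
          (nhdsWithin 0 (Set.Ioi 0)) (nhds (T φ)) := by
  -- The exponent `A` is rounded up to a half-integer, which is harmless since `μ ≤ 1`.
  have hb : TubeBV.TubeBound f C ⌈B⌉₊ ⌈2 * A⌉₊ := by
    intro μ hμ x y hy
    have : Nonempty (Fin n) := ⟨⟨0, hn⟩⟩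
    have hμ1 : μ ≤ 1 := (hy ⟨0, hn⟩).1.trans (hy ⟨0, hn⟩).2
    refine (hbound x y fun i => ⟨hμ.trans_le (hy i).1, (hy i).2⟩).trans ?_
    have h1 : (1 + ‖x‖) ^ B ≤ (1 + ‖x‖) ^ ⌈B⌉₊ := by
      rw [← Real.rpow_natCast]
      exact Real.rpow_le_rpow_of_exponent_le (by linarith [norm_nonneg x]) (Nat.le_ceil B)
    have h2 : (⨅ i, y i) ^ (-A) ≤ (√μ ^ ⌈2 * A⌉₊)⁻¹ := by
      refine (Real.rpow_le_rpow_of_nonpos hμ (le_ciInf fun i => (hy i).1)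
        (neg_nonpos.2 hA)).trans ?_
      rw [Real.rpow_neg hμ.le]
      refine inv_anti₀ (by positivity) ?_
      rw [Real.sqrt_eq_rpow, ← Real.rpow_natCast, ← Real.rpow_mul hμ.le]
      exact Real.rpow_le_rpow_of_exponent_ge hμ hμ1 (by linarith [Nat.le_ceil (2 * A)])
    calc _ ≤ C * (1 + ‖x‖) ^ ⌈B⌉₊ * (√μ ^ ⌈2 * A⌉₊)⁻¹ := by
          have h3 : 0 ≤ (⨅ i, y i) ^ (-A) :=
            Real.rpow_nonneg (Real.iInf_nonneg fun i => hμ.le.trans (hy i).1) _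
          gcongr
      _ = _ := by ring
  exact TubeBV.exists_boundary_value hf hC.le hb
end

section
/- Let f : ℂ → ℂ be holomorphic on the open upper half-plane ℍ = {z : ℂ | 0 < Im z}, with constants C > 0 and A, B ≥ 0 such that ‖f(x + i·y)‖ ≤ C·(1 + |x|)^B · y^{−A} for all x ∈ ℝ, y ∈ (0,1]. Then there is a constant K > 0 such that for every Schwartz function φ : ℝ → ℂ the limit L(φ) = lim_{y→0⁺} ∫_ℝ f(x + i·y)·φ(x) dx exists and satisfies ‖L(φ)‖ ≤ K · ∫_ℝ (1 + |x|)^B · (max_{0 ≤ k ≤ ⌊A⌋+1} ‖φ^{(k)}(x)‖) dx, where φ^{(k)} is the k-th derivative of φ and ⌊A⌋ is the integer part of A. -/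
/-!
Write `F k y = ∫ f (x + i y) φ⁽ᵏ⁾(x) dx` for `0 < y < 1`. Since `∂_y f (x + i y) = i f' (x + i y)`,
differentiating under the integral sign (legitimate by the Cauchy estimate for `f'`) and integrating
by parts gives `(F k)' = -i F (k + 1)` (`hasDerivAt_pairing`). The hypothesis on `f` bounds each
`F k y` with `k ≤ ⌊A⌋ + 1` by `M y ^ (-A)`, where `M` is `C` times the weighted integral norm of `φ`.

Each integration of such a bound in `y` lowers the exponent of the singularity by one. No logarithm
appears if the exponent is first increased to a non-integer `a + ⌊A⌋` with `0 < a < 1`, which is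
harmless as `y ≤ 1`. After `⌊A⌋` steps the derivative of `F 0` is `O(y ^ (-a))`, hence integrable at
`0`, so that `F 0` has a limit there, bounded by a constant multiple of `M` (`exists_limit_of_chain`).
-/

open MeasureTheory Filter

/-- Integrated form of the derivative bound `‖G'‖ ≤ M y ^ (-s)`, for `s ≠ 1`. -/
lemma norm_sub_le_of_deriv_le_rpow {G G' : ℝ → ℂ} {M s : ℝ} (hs : s ≠ 1)
    (hG : ∀ y ∈ Set.Ioo (0:ℝ) 1, HasDerivAt G (G' y) y)
    (hG' : ∀ y ∈ Set.Ioc (0:ℝ) (1/2), ‖G' y‖ ≤ M * y ^ (-s))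
    {y z : ℝ} (hy : 0 < y) (hyz : y ≤ z) (hz : z ≤ 1/2) :
    ‖G z - G y‖ ≤ M * ((z ^ (1 - s) - y ^ (1 - s)) / (1 - s)) := by
  have h1s : 1 - s ≠ 0 := sub_ne_zero.mpr (Ne.symm hs)
  have hd : ∀ x ∈ Set.Icc y z,
      HasDerivAt (fun x : ℝ => M * ((x ^ (1 - s) - y ^ (1 - s)) / (1 - s))) (M * x ^ (-s)) x := by
    intro x hx
    have hx0 : x ≠ 0 := (hy.trans_le hx.1).ne'
    have h := ((((Real.hasDerivAt_rpow_const (p := 1 - s) (Or.inl hx0)).sub_const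
      (y ^ (1 - s))).div_const (1 - s)).const_mul M)
    refine h.congr_deriv ?_
    rw [show 1 - s - 1 = -s by ring]
    field_simp
  have hd' : ∀ x ∈ Set.Icc y z, HasDerivAt (fun x => G x - G y) (G' x) x := fun x hx =>
    (hG x ⟨hy.trans_le hx.1, by linarith [hx.2]⟩).sub_const _
  refine image_norm_le_of_norm_deriv_right_le_deriv_boundary'
    (f := fun x => G x - G y) (f' := G') (a := y) (b := z)
    (B := fun x : ℝ => M * ((x ^ (1 - s) - y ^ (1 - s)) / (1 - s))) (B' := fun x => M * x ^ (-s))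
    (fun x hx => (hd' x hx).continuousAt.continuousWithinAt)
    (fun x hx => (hd' x (Set.Ico_subset_Icc_self hx)).hasDerivWithinAt) ?_
    (fun x hx => (hd x hx).continuousAt.continuousWithinAt)
    (fun x hx => (hd x (Set.Ico_subset_Icc_self hx)).hasDerivWithinAt)
    (fun x hx => hG' x ⟨hy.trans_le hx.1, by linarith [hx.2]⟩) ⟨hyz, le_rfl⟩
  simp

/-- A function on `(0, 1)` whose derivative is `O(y ^ (-a))` with `a < 1` has a limit at `0⁺`. -/
lemma exists_limit_of_deriv_le_rpow {G G' : ℝ → ℂ} {M a : ℝ} (hM : 0 ≤ M) (ha : a < 1)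
    (hG : ∀ y ∈ Set.Ioo (0:ℝ) 1, HasDerivAt G (G' y) y)
    (hG' : ∀ y ∈ Set.Ioc (0:ℝ) (1/2), ‖G' y‖ ≤ M * y ^ (-a)) :
    ∃ L, Tendsto G (nhdsWithin 0 (Set.Ioi 0)) (nhds L) ∧
      ‖L‖ ≤ ‖G (1/2)‖ + M * (1 / (1 - a)) := by
  have h1a : 0 < 1 - a := by linarith
  have key : ∀ y z : ℝ, 0 < y → y ≤ z → z ≤ 1/2 → ‖G z - G y‖ ≤ M * (z ^ (1 - a) / (1 - a)) := by
    intro y z hy hyz hz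
    refine (norm_sub_le_of_deriv_le_rpow ha.ne hG hG' hy hyz hz).trans ?_
    have := Real.rpow_nonneg hy.le (1 - a)
    gcongr
    linarith
  have hmem : Set.Ioc (0:ℝ) (1/2) ∈ nhdsWithin (0:ℝ) (Set.Ioi 0) := Ioc_mem_nhdsGT (by norm_num)
  have hc : Cauchy (map G (nhdsWithin 0 (Set.Ioi 0))) := by
    refine Metric.cauchy_iff.mpr ⟨inferInstance, fun ε hε => ?_⟩
    have ht : Tendsto (fun z : ℝ => M * (z ^ (1 - a) / (1 - a))) (nhds 0) (nhds 0) := by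
      have h := (((Real.continuousAt_rpow_const 0 (1 - a) (Or.inr h1a.le)).tendsto).div_const
        (1 - a)).const_mul M
      simpa [Real.zero_rpow h1a.ne'] using h
    have hev : ∀ᶠ z in nhdsWithin (0:ℝ) (Set.Ioi 0),
        M * (z ^ (1 - a) / (1 - a)) < ε ∧ z ∈ Set.Ioc (0:ℝ) (1/2) :=
      ((ht.mono_left nhdsWithin_le_nhds).eventually_lt_const hε).and hmem
    refine ⟨_, image_mem_map hev, ?_⟩
    rintro _ ⟨y, ⟨hy1, hy2⟩, rfl⟩ _ ⟨z, ⟨hz1, hz2⟩, rfl⟩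
    rcases le_total y z with h | h
    · rw [dist_comm, dist_eq_norm]
      exact (key y z hy2.1 h hz2.2).trans_lt hz1
    · rw [dist_eq_norm]
      exact (key z y hz2.1 h hy2.2).trans_lt hy1
  obtain ⟨L, hL⟩ := cauchy_map_iff_exists_tendsto.mp hc
  refine ⟨L, hL, le_of_tendsto hL.norm ?_⟩
  filter_upwards [hmem] with y hy
  have h1 := key y (1/2) hy.1 hy.2 le_rfl
  have h2 : M * ((1/2 : ℝ) ^ (1 - a) / (1 - a)) ≤ M * (1 / (1 - a)) := by
    gcongr
    exact Real.rpow_le_one (by norm_num) (by norm_num) h1a.le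
  have h3 : ‖G y‖ ≤ ‖G (1/2)‖ + ‖G (1/2) - G y‖ := by
    simpa using norm_sub_le (G (1/2)) (G (1/2) - G y)
  linarith

/-- In a chain `F k' = c F (k + 1)` with `‖c‖ = 1`, a common bound `M y ^ (-(a + m))` on
`F 0, …, F (m + 1)` makes `F 0` converge at `0⁺`: each integration improves the exponent by one,
at the cost of one term of the chain. -/
lemma exists_limit_of_chain {a : ℝ} (ha0 : 0 < a) (ha1 : a < 1) (c : ℂ) (hc : ‖c‖ = 1) (m : ℕ) :
    ∃ K : ℝ, 0 < K ∧ ∀ (F : ℕ → ℝ → ℂ) (M : ℝ), 0 ≤ M →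
      (∀ k, ∀ y ∈ Set.Ioo (0:ℝ) 1, HasDerivAt (F k) (c * F (k + 1) y) y) →
      (∀ k ≤ m + 1, ∀ y ∈ Set.Ioc (0:ℝ) (1/2), ‖F k y‖ ≤ M * y ^ (-(a + m))) →
      ∃ L, Tendsto (F 0) (nhdsWithin 0 (Set.Ioi 0)) (nhds L) ∧ ‖L‖ ≤ K * M := by
  induction m with
  | zero =>
    have h1a : 0 < 1 - a := by linarith
    refine ⟨(1/2 : ℝ) ^ (-a) + 1 / (1 - a), by positivity, fun F M hM hd hb => ?_⟩
    simp only [Nat.cast_zero, add_zero] at hb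
    obtain ⟨L, hL, hle⟩ := exists_limit_of_deriv_le_rpow hM ha1 (hd 0) (fun y hy => by
      rw [norm_mul, hc, one_mul]; exact hb 1 le_rfl y hy)
    refine ⟨L, hL, hle.trans ?_⟩
    have := hb 0 (by norm_num) (1/2) (by norm_num)
    nlinarith
  | succ m ih =>
    obtain ⟨K, hK, ih⟩ := ih
    have hpos : 0 < a + m := by positivity
    refine ⟨K * ((1/2 : ℝ) ^ (-(a + (m + 1 : ℕ))) + 1 / (a + m)), by positivity,
      fun F M hM hd hb => ?_⟩
    obtain ⟨L, hL, hle⟩ := ih F (((1/2 : ℝ) ^ (-(a + (m + 1 : ℕ))) + 1 / (a + m)) * M)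
      (by positivity) hd (fun k hk y hy => by
        have h1 := norm_sub_le_of_deriv_le_rpow (s := a + (m + 1 : ℕ))
          (by push_cast; linarith) (hd k) (fun y hy => by
            rw [norm_mul, hc, one_mul]; exact hb (k + 1) (by omega) y hy) hy.1 hy.2 le_rfl
        have h2 := hb k (by omega) (1/2) (by norm_num)
        have h3 : ‖F k y‖ ≤ ‖F k (1/2)‖ + ‖F k (1/2) - F k y‖ := by
          simpa using norm_sub_le (F k (1/2)) (F k (1/2) - F k y)
        rw [show 1 - (a + (m + 1 : ℕ)) = -(a + m) by push_cast; ring] at h1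
        have h4 : (1:ℝ) ≤ y ^ (-(a + m)) :=
          Real.one_le_rpow_of_pos_of_le_one_of_nonpos hy.1 (by linarith [hy.2]) (by linarith)
        have h5 : 0 ≤ (1/2 : ℝ) ^ (-(a + m)) := by positivity
        have h6 : ((1/2 : ℝ) ^ (-(a + m)) - y ^ (-(a + m))) / (-(a + m))
            ≤ 1 / (a + m) * y ^ (-(a + m)) := by
          rw [div_neg, ← neg_div, one_div_mul_eq_div]
          gcongr
          linarith
        have h7 := mul_le_mul_of_nonneg_left h6 hM
        have h8 : M * (1/2 : ℝ) ^ (-(a + (m + 1 : ℕ))) ≤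
            M * (1/2 : ℝ) ^ (-(a + (m + 1 : ℕ))) * y ^ (-(a + m)) :=
          le_mul_of_one_le_right (by positivity) h4
        linarith)
    exact ⟨L, hL, hle.trans_eq (by ring)⟩

lemma integrable_weight_mul_schwartz (B : ℝ) (ψ : SchwartzMap ℝ ℂ) :
    Integrable (fun x : ℝ => (1 + |x|) ^ B * ‖ψ x‖) := by
  obtain ⟨N, hN⟩ := exists_nat_ge B
  have h0 := ψ.integrable_pow_mul volume 0
  have h1 := ψ.integrable_pow_mul volume N
  refine Integrable.mono' ((h0.add h1).const_mul (2 ^ (N - 1))) ?_ (ae_of_all _ fun x => ?_)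
  · refine Continuous.aestronglyMeasurable (Continuous.mul ?_ ψ.continuous.norm)
    exact (by fun_prop : Continuous fun x : ℝ => 1 + |x|).rpow_const
      fun x => Or.inl (by positivity)
  · have h2 : (1 + |x|) ^ B ≤ (1 + |x|) ^ N := by
      rw [← Real.rpow_natCast]
      exact Real.rpow_le_rpow_of_exponent_le (by linarith [abs_nonneg x]) hN
    have h3 := add_pow_le zero_le_one (abs_nonneg x) N
    rw [Real.norm_of_nonneg (by positivity)]
    calc (1 + |x|) ^ B * ‖ψ x‖ ≤ (2 ^ (N - 1) * (1 ^ N + |x| ^ N)) * ‖ψ x‖ := by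
          gcongr; exact h2.trans h3
      _ = _ := by simp; ring

/-- Horizontal slices of a continuous function on the upper half-plane, dominated by the weight,
are integrable against Schwartz functions. -/
lemma integrable_slice_mul {g : ℂ → ℂ} (hg : ContinuousOn g {z : ℂ | 0 < z.im}) {B D y : ℝ}
    (hy : 0 < y) (hb : ∀ x : ℝ, ‖g ((x : ℂ) + (y : ℂ) * Complex.I)‖ ≤ D * (1 + |x|) ^ B)
    (ψ : SchwartzMap ℝ ℂ) :
    Integrable (fun x : ℝ => g ((x : ℂ) + (y : ℂ) * Complex.I) * ψ x) := by
  refine Integrable.mono' ((integrable_weight_mul_schwartz B ψ).const_mul D) ?_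
    (ae_of_all _ fun x => ?_)
  · refine Continuous.aestronglyMeasurable (Continuous.mul ?_ ψ.continuous)
    exact hg.comp_continuous (by fun_prop) (fun x => by simpa using hy)
  · rw [norm_mul, ← mul_assoc]
    gcongr
    exact hb x

section Pairing

variable {f : ℂ → ℂ} {C A B : ℝ}

/-- Cauchy estimate: on each closed strip inside `0 < Im z < 1`, the derivative of `f` has the
same growth in `x` as `f`. -/
lemma norm_deriv_slice_le (hf : DifferentiableOn ℂ f {z : ℂ | 0 < z.im})
    (hC : 0 < C) (hA : 0 ≤ A) (hB : 0 ≤ B)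
    (hbound : ∀ x : ℝ, ∀ y ∈ Set.Ioc (0:ℝ) 1,
      ‖f ((x : ℂ) + (y : ℂ) * Complex.I)‖ ≤ C * (1 + |x|) ^ B * y ^ (-A))
    {r : ℝ} (hr : 0 < r) {x y : ℝ} (hy : 2 * r ≤ y) (hy1 : y ≤ 1 - r) :
    ‖deriv f ((x : ℂ) + (y : ℂ) * Complex.I)‖ ≤
      (C * 2 ^ B * r ^ (-A) / r) * (1 + |x|) ^ B := by
  have him : ∀ z ∈ Metric.closedBall ((x : ℂ) + (y : ℂ) * Complex.I) r,
      |z.re - x| ≤ r ∧ |z.im - y| ≤ r := by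
    intro z hz
    rw [Metric.mem_closedBall, dist_eq_norm] at hz
    constructor
    · simpa using (Complex.abs_re_le_norm _).trans hz
    · simpa using (Complex.abs_im_le_norm _).trans hz
  have h := Complex.norm_deriv_le_of_forall_mem_sphere_norm_le
    (c := (x : ℂ) + (y : ℂ) * Complex.I) (R := r) (C := C * (2 * (1 + |x|)) ^ B * r ^ (-A)) (f := f)
    hr ?_ ?_
  · refine h.trans_eq ?_
    rw [Real.mul_rpow (by norm_num) (by positivity)]
    ring
  · refine (hf.mono fun z hz => ?_).diffContOnCl_ball (U := Metric.closedBall _ r) subset_rfl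
    have := (abs_le.mp (him z hz).2).1
    simp only [Set.mem_ofPred_eq]
    linarith
  · intro z hz
    obtain ⟨h1, h2⟩ := him z (Metric.sphere_subset_closedBall hz)
    rw [abs_le] at h2
    have hz' := hbound z.re z.im ⟨by linarith, by linarith⟩
    rw [Complex.re_add_im] at hz'
    refine hz'.trans ?_
    -- `2 * r ≤ y ≤ 1 - r` forces `r ≤ 1`
    have h3 : |z.re| ≤ |x| + 1 := by
      have := abs_sub_abs_le_abs_sub z.re x
      linarith
    have h4 : z.im ^ (-A) ≤ r ^ (-A) :=
      Real.rpow_le_rpow_of_nonpos hr (by linarith) (by linarith)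
    have h5 : 0 ≤ z.im := by linarith
    gcongr
    linarith [abs_nonneg x]

lemma hasDerivAt_pairing (hf : DifferentiableOn ℂ f {z : ℂ | 0 < z.im})
    (hC : 0 < C) (hA : 0 ≤ A) (hB : 0 ≤ B)
    (hbound : ∀ x : ℝ, ∀ y ∈ Set.Ioc (0:ℝ) 1,
      ‖f ((x : ℂ) + (y : ℂ) * Complex.I)‖ ≤ C * (1 + |x|) ^ B * y ^ (-A))
    (ψ : SchwartzMap ℝ ℂ) {y : ℝ} (hy : y ∈ Set.Ioo (0:ℝ) 1) :
    HasDerivAt (fun y : ℝ => ∫ x : ℝ, f ((x : ℂ) + (y : ℂ) * Complex.I) * ψ x)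
      (-Complex.I * ∫ x : ℝ, f ((x : ℂ) + (y : ℂ) * Complex.I) *
        SchwartzMap.derivCLM ℂ ℂ ψ x) y := by
  have hopen : IsOpen {z : ℂ | 0 < z.im} := isOpen_lt continuous_const Complex.continuous_im
  have hder : ∀ x y : ℝ, 0 < y → HasDerivAt f (deriv f ((x : ℂ) + (y : ℂ) * Complex.I))
      ((x : ℂ) + (y : ℂ) * Complex.I) := fun x y hy =>
    (hf.differentiableAt (hopen.mem_nhds (by simpa using hy))).hasDerivAt
  have hdc : ContinuousOn (deriv f) {z : ℂ | 0 < z.im} := (hf.deriv hopen).continuousOn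
  -- for `t` within `r` of `y` the disc of radius `r` about `x + i t` stays in the strip
  obtain ⟨r, hr, hry, hry1⟩ : ∃ r : ℝ, 0 < r ∧ 3 * r ≤ y ∧ y ≤ 1 - 2 * r := by
    refine ⟨min y (1 - y) / 3, ?_, ?_, ?_⟩
    · have := lt_min hy.1 (sub_pos.mpr hy.2)
      positivity
    · linarith [min_le_left y (1 - y)]
    · linarith [min_le_right y (1 - y), lt_min hy.1 (sub_pos.mpr hy.2)]
  have hD : ∀ t ∈ Metric.ball y r, ∀ x : ℝ, ‖deriv f ((x : ℂ) + (t : ℂ) * Complex.I)‖ ≤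
      (C * 2 ^ B * r ^ (-A) / r) * (1 + |x|) ^ B := by
    intro t ht x
    rw [Real.ball_eq_Ioo] at ht
    exact norm_deriv_slice_le hf hC hA hB hbound hr (by linarith [ht.1])
      (by linarith [ht.2])
  have hyI : ∀ x : ℝ, ‖f ((x : ℂ) + (y : ℂ) * Complex.I)‖ ≤ (C * y ^ (-A)) * (1 + |x|) ^ B :=
    fun x => (hbound x y ⟨hy.1, hy.2.le⟩).trans_eq (by ring)
  have hint := fun ψ => integrable_slice_mul hf.continuousOn hy.1 hyI ψ
  have hint' := integrable_slice_mul hdc hy.1 (hD y (Metric.mem_ball_self hr)) ψ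
  have hmain := hasDerivAt_integral_of_dominated_loc_of_deriv_le (μ := volume)
    (F := fun (t : ℝ) (x : ℝ) => f ((x : ℂ) + (t : ℂ) * Complex.I) * ψ x)
    (F' := fun (t : ℝ) (x : ℝ) =>
      Complex.I * (deriv f ((x : ℂ) + (t : ℂ) * Complex.I) * ψ x))
    (x₀ := y) (s := Metric.ball y r)
    (bound := fun x => (C * 2 ^ B * r ^ (-A) / r) * ((1 + |x|) ^ B * ‖ψ x‖))
    (Metric.ball_mem_nhds y hr) ?_ (hint ψ) (hint'.const_mul _).aestronglyMeasurable ?_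
    ((integrable_weight_mul_schwartz B ψ).const_mul _) ?_
  · refine hmain.2.congr_deriv ?_
    have hparts := integral_mul_deriv_eq_deriv_mul_of_integrable
      (u := fun x : ℝ => f ((x : ℂ) + (y : ℂ) * Complex.I)) (v := ψ)
      (u' := fun x : ℝ => deriv f ((x : ℂ) + (y : ℂ) * Complex.I))
      (v' := SchwartzMap.derivCLM ℂ ℂ ψ) (fun x _ => ?_) (fun x _ => ?_)
      (hint _) hint' (hint ψ)
    · rw [hparts, integral_const_mul]
      ring
    · have hinner : HasDerivAt (fun x : ℝ => (x : ℂ) + (y : ℂ) * Complex.I) 1 x :=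
        (Complex.ofRealCLM.hasDerivAt (x := x)).add_const _
      exact ((hder x y hy.1).comp x hinner).congr_deriv (mul_one _)
    · rw [SchwartzMap.derivCLM_apply]
      exact ψ.differentiableAt.hasDerivAt
  · filter_upwards [Ioo_mem_nhds hy.1 hy.2] with t ht
    refine Continuous.aestronglyMeasurable (Continuous.mul ?_ ψ.continuous)
    exact hf.continuousOn.comp_continuous (by fun_prop) (fun x => by simpa using ht.1)
  · refine ae_of_all _ fun x t ht => ?_
    rw [norm_mul, Complex.norm_I, one_mul, norm_mul, ← mul_assoc]
    gcongr
    exact hD t ht x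
  · refine ae_of_all _ fun x t ht => ?_
    rw [Real.ball_eq_Ioo] at ht
    have hinner : HasDerivAt (fun t : ℝ => (x : ℂ) + (t : ℂ) * Complex.I) Complex.I t := by
      simpa using ((Complex.ofRealCLM.hasDerivAt (x := t)).mul_const Complex.I).const_add (x : ℂ)
    have h := ((hder x t (by linarith [ht.1])).comp t hinner).mul_const (ψ x)
    exact h.congr_deriv (by ring)

end Pairing

/-- Quantitative regularity for Vladimirov's theorem: the boundary value is
bounded by an integral norm involving `⌊A⌋+1` derivatives of the test function,
weighted by `(1+|x|)^B`. -/
theorem vladimirov_boundary_value_regularity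
    (f : ℂ → ℂ)
    (hf : DifferentiableOn ℂ f {z : ℂ | 0 < z.im})
    (C A B : ℝ) (hC : 0 < C) (hA : 0 ≤ A) (hB : 0 ≤ B)
    (hbound : ∀ x : ℝ, ∀ y ∈ Set.Ioc (0:ℝ) 1,
      ‖f ((x : ℂ) + (y : ℂ) * Complex.I)‖ ≤ C * (1 + |x|) ^ B * y ^ (-A)) :
    ∃ K : ℝ, 0 < K ∧ ∀ φ : SchwartzMap ℝ ℂ, ∃ L : ℂ,
      Tendsto (fun y : ℝ => ∫ x : ℝ, f ((x : ℂ) + (y : ℂ) * Complex.I) * φ x)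
        (nhdsWithin 0 (Set.Ioi 0)) (nhds L) ∧
      ‖L‖ ≤ K * ∫ x : ℝ, (1 + |x|) ^ B *
        ((Finset.range (⌊A⌋₊ + 2)).sup' (by simp)
          fun k => ‖iteratedDeriv k (fun t => φ t) x‖) := by
  have hfl : (⌊A⌋₊ : ℝ) ≤ A := Nat.floor_le hA
  have hfl' : A < ⌊A⌋₊ + 1 := Nat.lt_floor_add_one A
  -- `a + ⌊A⌋` is the midpoint of `A` and `⌊A⌋ + 1`
  obtain ⟨a, ha0, ha1, haA⟩ : ∃ a : ℝ, 0 < a ∧ a < 1 ∧ A ≤ a + ⌊A⌋₊ :=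
    ⟨(A - ⌊A⌋₊ + 1) / 2, by linarith, by linarith, by linarith⟩
  obtain ⟨K, hK, hchain⟩ := exists_limit_of_chain ha0 ha1 (-Complex.I) (by simp) ⌊A⌋₊
  refine ⟨K * C, by positivity, fun φ => ?_⟩
  set S : ℝ → ℝ := fun x => (Finset.range (⌊A⌋₊ + 2)).sup' (by simp)
    fun k => ‖iteratedDeriv k (fun t => φ t) x‖ with hS
  let ψ : ℕ → SchwartzMap ℝ ℂ := fun k => (SchwartzMap.derivCLM ℂ ℂ)^[k] φ
  have hψs : ∀ k, ψ (k + 1) = SchwartzMap.derivCLM ℂ ℂ (ψ k) := fun k =>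
    Function.iterate_succ_apply' _ _ _
  have hψ : ∀ k, iteratedDeriv k (fun t => φ t) = ψ k := by
    intro k
    induction k with
    | zero => simp [ψ]
    | succ k ih =>
      ext x
      rw [iteratedDeriv_succ, ih, hψs, SchwartzMap.derivCLM_apply]
  have hle : ∀ k ≤ ⌊A⌋₊ + 1, ∀ x, ‖ψ k x‖ ≤ S x := by
    intro k hk x
    rw [← hψ]
    exact Finset.le_sup' (fun k => ‖iteratedDeriv k (fun t => φ t) x‖)
      (Finset.mem_range.mpr (by omega))
  have hS0 : ∀ x, 0 ≤ S x := fun x => (norm_nonneg _).trans (hle 0 (by omega) x)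
  have hSi : Integrable (fun x : ℝ => (1 + |x|) ^ B * S x) := by
    refine Integrable.mono' (integrable_finsetSum (Finset.range (⌊A⌋₊ + 2)) fun k _ =>
      integrable_weight_mul_schwartz B (ψ k)) ?_ (ae_of_all _ fun x => ?_)
    · refine Continuous.aestronglyMeasurable (Continuous.mul ?_ ?_)
      · exact (by fun_prop : Continuous fun x : ℝ => 1 + |x|).rpow_const
          fun x => Or.inl (by positivity)
      · refine Continuous.finset_sup'_apply _ fun k _ => ?_
        rw [hψ]
        exact (ψ k).continuous.norm
    · rw [Real.norm_of_nonneg (mul_nonneg (by positivity) (hS0 x)), ← Finset.mul_sum]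
      gcongr
      refine Finset.sup'_le _ _ fun k hk => ?_
      rw [hψ]
      exact Finset.single_le_sum (f := fun k => ‖ψ k x‖) (fun _ _ => norm_nonneg _) hk
  have hI0 : 0 ≤ ∫ x : ℝ, (1 + |x|) ^ B * S x :=
    integral_nonneg fun x => mul_nonneg (by positivity) (hS0 x)
  obtain ⟨L, hL, hLK⟩ := hchain
    (fun k y => ∫ x : ℝ, f ((x : ℂ) + (y : ℂ) * Complex.I) * ψ k x)
    (C * ∫ x : ℝ, (1 + |x|) ^ B * S x) (by positivity)
    (fun k y hy => by
      have := hasDerivAt_pairing hf hC hA hB hbound (ψ k) hy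
      rwa [← hψs] at this)
    (fun k hk y hy => by
      have hy1 : y ≤ 1 := by linarith [hy.2]
      have h1 : y ^ (-A) ≤ y ^ (-(a + ⌊A⌋₊)) :=
        Real.rpow_le_rpow_of_exponent_ge hy.1 hy1 (by linarith)
      have hy0 := hy.1
      calc ‖∫ x : ℝ, f ((x : ℂ) + (y : ℂ) * Complex.I) * ψ k x‖
          ≤ ∫ x : ℝ, (C * y ^ (-A)) * ((1 + |x|) ^ B * S x) := by
            refine norm_integral_le_of_norm_le (hSi.const_mul _) (ae_of_all _ fun x => ?_)
            rw [norm_mul]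
            calc _ ≤ (C * (1 + |x|) ^ B * y ^ (-A)) * S x :=
                  mul_le_mul (hbound x y ⟨hy.1, hy1⟩) (hle k hk x) (norm_nonneg _)
                    (by positivity)
              _ = _ := by ring
        _ = (C * ∫ x : ℝ, (1 + |x|) ^ B * S x) * y ^ (-A) := by
            rw [integral_const_mul]; ring
        _ ≤ _ := by gcongr)
  exact ⟨L, hL, hLK.trans_eq (by ring)⟩
end

section
/- The set of Schwartz functions g : ℝ → ℂ for which there exists a smooth compactly supported function φ : ℝ → ℂ with support contained in the open half-line (0, ∞) such that g(E) = ∫_{(0,∞)} φ(t)·e^{−E·t} dt for every E ≥ 0, is dense in the Schwartz space 𝓢(ℝ, ℂ) (with its usual Fréchet topology of Schwartz seminorms). -/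
/-!
The Schwartz functions agreeing on `[0, ∞)` with such a Laplace transform form a linear subspace
`laplaceSubmodule`, and its closure is shown to be everything. Write `χ` for a smooth cutoff which
is `0` on `(-∞, -1]` and `1` on `[0, ∞)`. The subspace contains every Schwartz function vanishing
on `[0, ∞)`, so only `χ f` matters.

* Each `χ(x) e^{-(m+1)x}` is in the closure (`expSchwartz_mem`). If `ρ` is a smooth profile
  supported in `[0, 1]` with integral `1` and Laplace transform `ψ`, then for `x ≥ 0` the product
  `e^{-(m+1)x} ψ(c x)` is the Laplace transform of the bump `c⁻¹ ρ(c⁻¹(t - (m+1)))`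
  (`isLaplace_exp_mul`), and `ψ(c ·) → ψ(0) = 1` as `c → 0` in a sense strong enough for the
  product to converge in the Schwartz topology (`tendsto_dilate`).
* A compactly supported `f` is in the closure (`mem_of_hasCompactSupport`). In the variable
  `y = e^{-x}` one has `f(x) = e^{-x} h(e^{-x})` with `h` smooth, and `h` is approximated on
  `[0, e]` by polynomials together with any number of derivatives
  (`exists_polynomial_near_iteratedDeriv`). Then `χ(x) e^{-x} q(e^{-x})` is a linear combination
  of the functions of the first step. The image of `[-1, ∞)` under `x ↦ e^{-x}` is in `[0, e]`, so
  the remaining factor `χ(x) e^{-x}` turns the uniform bounds on derivatives into Schwartz bounds.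
* Compactly supported functions are dense: `f · η(x / (N + 1)) → f` for a bump `η`, which is
  `tendsto_dilate` once more.

All three limits go through one criterion (`tendsto_of_mul`): `g_N → f` as soon as
`g_N - f = v w_N` with `v` Schwartz and, on the support of `v`, each fixed derivative of `w_N` is
`O((1 + |x|) / N)`.
-/

open MeasureTheory

namespace LaplaceDense

open Filter Topology Set
open scoped ContDiff SchwartzMap

/-! ### Products with a fixed Schwartz function -/

/-- If each `F (n + 1)` is the derivative of `F n`, then `F n` is the `n`-th derivative of `F 0`. -/
theorem iteratedDeriv_of_chain {F : ℕ → ℝ → ℂ}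
    (hF : ∀ n x, HasDerivAt (F n) (F (n + 1) x) x) :
    ContDiff ℝ ∞ (F 0) ∧ ∀ n, iteratedDeriv n (F 0) = F n := by
  have h : ∀ n, iteratedDeriv n (F 0) = F n := by
    intro n
    induction n with
    | zero => simp
    | succ n ih =>
      rw [iteratedDeriv_succ, ih]
      funext x
      exact (hF n x).deriv
  refine ⟨?_, h⟩
  refine contDiff_of_differentiable_iteratedDeriv fun m _ => ?_
  rw [h]
  exact fun x => (hF m x).differentiableAt

/-- Leibniz bound for `v * w` when the derivatives of `w` grow at most linearly on the support of
`v`. The linear growth costs one extra power of `x` in the seminorms of `v`. -/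
theorem decay_mul_le (v : 𝓢(ℝ, ℂ)) {S : Set ℝ} (hv : tsupport v ⊆ S) {w : ℝ → ℂ}
    (hw : ContDiff ℝ ∞ w) (k n : ℕ) {A : ℝ} (hA : 0 ≤ A)
    (hb : ∀ j ≤ n, ∀ x ∈ S, ‖iteratedDeriv j w x‖ ≤ A * (1 + |x|)) (x : ℝ) :
    ‖x‖ ^ k * ‖iteratedFDeriv ℝ n (fun y => v y * w y) x‖ ≤
      A * ∑ i ∈ Finset.range (n + 1), (n.choose i : ℝ) *
        (SchwartzMap.seminorm ℝ k i v + SchwartzMap.seminorm ℝ (k + 1) i v) := by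
  have h1 := norm_iteratedFDeriv_mul_le (v.smooth ⊤) hw x (n := n) (by exact_mod_cast le_top)
  refine (mul_le_mul_of_nonneg_left h1 (by positivity)).trans ?_
  rw [Finset.mul_sum, Finset.mul_sum]
  refine Finset.sum_le_sum fun i hi => ?_
  have hs1 := v.le_seminorm ℝ k i x
  have hs2 := v.le_seminorm ℝ (k + 1) i x
  by_cases hx : x ∈ S
  · have h2 := hb (n - i) (by omega) x hx
    rw [norm_iteratedFDeriv_eq_norm_iteratedDeriv (f := w)]
    calc ‖x‖ ^ k * ((n.choose i : ℝ) * ‖iteratedFDeriv ℝ i (⇑v) x‖ * ‖iteratedDeriv (n - i) w x‖)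
        ≤ ‖x‖ ^ k * ((n.choose i : ℝ) * ‖iteratedFDeriv ℝ i (⇑v) x‖ * (A * (1 + |x|))) := by
          gcongr
      _ = A * ((n.choose i : ℝ) * (‖x‖ ^ k * ‖iteratedFDeriv ℝ i (⇑v) x‖ +
            ‖x‖ ^ (k + 1) * ‖iteratedFDeriv ℝ i (⇑v) x‖)) := by
          rw [Real.norm_eq_abs x]; ring
      _ ≤ _ := by gcongr
  · have h0 : iteratedFDeriv ℝ i (⇑v) x = 0 := by
      by_contra hne
      exact hx (hv (support_iteratedFDeriv_subset i hne))
    rw [h0]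
    simp only [norm_zero, mul_zero, zero_mul]
    have := apply_nonneg (SchwartzMap.seminorm ℝ k i) v
    have := apply_nonneg (SchwartzMap.seminorm ℝ (k + 1) i) v
    positivity

theorem exists_mul (v : 𝓢(ℝ, ℂ)) {S : Set ℝ} (hv : tsupport v ⊆ S) {w : ℝ → ℂ}
    (hw : ContDiff ℝ ∞ w) (C : ℕ → ℝ)
    (hC : ∀ j, ∀ x ∈ S, ‖iteratedDeriv j w x‖ ≤ C j * (1 + |x|)) :
    ∃ g : 𝓢(ℝ, ℂ), ∀ x, g x = v x * w x := by
  refine ⟨⟨fun x => v x * w x, (v.smooth ⊤).mul hw, fun k n => ?_⟩, fun x => rfl⟩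
  refine ⟨_, decay_mul_le v hv hw k n (A := ∑ j ∈ Finset.range (n + 1), |C j|) (by positivity)
    fun j hj x hx => (hC j x hx).trans ?_⟩
  gcongr
  exact (le_abs_self _).trans (Finset.single_le_sum (f := fun j => |C j|)
    (fun _ _ => abs_nonneg _) (Finset.mem_range.2 (by omega)))

/-- Convergence criterion in the Schwartz topology. The threshold on `N` may depend on the order `j`
of the derivative, since every Schwartz seminorm involves finitely many orders only. -/
theorem tendsto_of_mul (v : 𝓢(ℝ, ℂ)) {S : Set ℝ} (hv : tsupport v ⊆ S) {w : ℕ → ℝ → ℂ}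
    (hw : ∀ N, ContDiff ℝ ∞ (w N)) (C : ℕ → ℝ)
    (hC : ∀ j, ∀ᶠ N : ℕ in atTop, ∀ x ∈ S,
      ‖iteratedDeriv j (w N) x‖ ≤ C j / ((N : ℝ) + 1) * (1 + |x|))
    {g : ℕ → 𝓢(ℝ, ℂ)} {f : 𝓢(ℝ, ℂ)} (hg : ∀ N x, g N x - f x = v x * w N x) :
    Tendsto g atTop (𝓝 f) := by
  rw [(schwartz_withSeminorms ℝ ℝ ℂ).tendsto_nhds]
  rintro ⟨k, n⟩ ε hε
  set B := ∑ j ∈ Finset.range (n + 1), |C j| with hB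
  set K := ∑ i ∈ Finset.range (n + 1), (n.choose i : ℝ) *
        (SchwartzMap.seminorm ℝ k i v + SchwartzMap.seminorm ℝ (k + 1) i v) with hK
  have hB0 : 0 ≤ B := by positivity
  have hK0 : 0 ≤ K := Finset.sum_nonneg fun i _ => by
    have := apply_nonneg (SchwartzMap.seminorm ℝ k i) v
    have := apply_nonneg (SchwartzMap.seminorm ℝ (k + 1) i) v
    positivity
  have hall : ∀ᶠ N : ℕ in atTop, ∀ j ∈ Finset.range (n + 1), ∀ x ∈ S,
      ‖iteratedDeriv j (w N) x‖ ≤ C j / ((N : ℝ) + 1) * (1 + |x|) :=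
    (Finset.eventually_all _).2 fun j _ => hC j
  have hlim : Tendsto (fun N : ℕ => B * K * (1 / ((N : ℝ) + 1))) atTop (𝓝 0) := by
    simpa using (tendsto_one_div_add_atTop_nhds_zero_nat (𝕜 := ℝ)).const_mul (B * K)
  filter_upwards [hall, hlim.eventually_lt_const hε] with N hN hN2
  refine lt_of_le_of_lt ?_ hN2
  refine SchwartzMap.seminorm_le_bound ℝ k n _ (by positivity) fun x => ?_
  have hfun : ⇑(g N - f) = fun y => v y * w N y := by
    funext y; simpa using hg N y
  rw [hfun]
  refine (decay_mul_le v hv (hw N) k n (A := B / ((N : ℝ) + 1)) (by positivity)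
    fun j hj x hx => ?_) x |>.trans (le_of_eq (by rw [← hK]; ring))
  refine (hN j (Finset.mem_range.2 (by omega)) x hx).trans ?_
  gcongr
  exact (le_abs_self _).trans (Finset.single_le_sum (f := fun j => |C j|)
    (fun _ _ => abs_nonneg _) (Finset.mem_range.2 (by omega)))

theorem iteratedDeriv_scale {η : ℝ → ℂ} (hη : ContDiff ℝ ∞ η) (c : ℝ) :
    ContDiff ℝ ∞ (fun x => η (c * x) - 1) ∧
      ∀ n x, iteratedDeriv n (fun x => η (c * x) - 1) x =
        (c : ℂ) ^ n * iteratedDeriv n η (c * x) - if n = 0 then 1 else 0 := by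
  have key := iteratedDeriv_of_chain (F := fun n x =>
    (c : ℂ) ^ n * iteratedDeriv n η (c * x) - if n = 0 then 1 else 0) (by
      intro n x
      have h1 : HasDerivAt (iteratedDeriv n η) (iteratedDeriv (n + 1) η (c * x)) (c * x) := by
        rw [iteratedDeriv_succ]
        exact ((hη.differentiable_iteratedDeriv n (by exact_mod_cast WithTop.coe_lt_top n))
          (c * x)).hasDerivAt
      have h2 : HasDerivAt (fun x : ℝ => c * x) c x := by
        simpa using (hasDerivAt_id x).const_mul c
      have h3 := ((h1.scomp x h2).const_mul ((c : ℂ) ^ n)).sub_const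
        (if n = 0 then (1 : ℂ) else 0)
      refine h3.congr_deriv ?_
      simp [pow_succ, mul_assoc])
  simp only [pow_zero, iteratedDeriv_zero, one_mul, if_true] at key
  exact ⟨key.1, fun n x => congrFun (key.2 n) x⟩

/-- Multiplying by `η(x / (N + 1))` with `η 0 = 1` approximates the identity. Bounds on `η` are only
needed on a convex set `S ∋ 0` containing the support of `v`, as such a set is stable under the
contractions `x ↦ x / (N + 1)`. -/
theorem tendsto_dilate (v : 𝓢(ℝ, ℂ)) {S : Set ℝ} (hv : tsupport v ⊆ S) (hS : Convex ℝ S)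
    (h0 : (0 : ℝ) ∈ S) {η : ℝ → ℂ} (hη : ContDiff ℝ ∞ η) (h1 : η 0 = 1) (C : ℕ → ℝ)
    (hC : ∀ j, ∀ x ∈ S, ‖iteratedDeriv j η x‖ ≤ C j) :
    ∃ g : ℕ → 𝓢(ℝ, ℂ), (∀ N x, g N x = v x * η (1 / ((N : ℝ) + 1) * x)) ∧
      Tendsto g atTop (𝓝 v) := by
  have hC0 : ∀ j, 0 ≤ C j := fun j => (norm_nonneg _).trans (hC j 0 h0)
  have hmem : ∀ (N : ℕ), ∀ x ∈ S, 1 / ((N : ℝ) + 1) * x ∈ S := by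
    intro N x hx
    have hN : (0 : ℝ) < (N : ℝ) + 1 := by positivity
    refine hS.smul_mem_of_zero_mem h0 hx ⟨by positivity, ?_⟩
    rw [div_le_one hN]
    linarith [(Nat.cast_nonneg N : (0 : ℝ) ≤ N)]
  have hbound : ∀ j (N : ℕ), ∀ x ∈ S,
      ‖iteratedDeriv j (fun x => η (1 / ((N : ℝ) + 1) * x) - 1) x‖ ≤
        C (max j 1) / ((N : ℝ) + 1) * (1 + |x|) := by
    intro j N x hx
    have hN : (0 : ℝ) < (N : ℝ) + 1 := by positivity
    rw [(iteratedDeriv_scale hη _).2]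
    rcases Nat.eq_zero_or_pos j with rfl | hj
    -- Order zero is the mean value inequality, the source of the growth factor `1 + |x|`;
    -- in positive order the chain rule produces the small factor.
    · have := Convex.norm_image_sub_le_of_norm_deriv_le (f := η) (s := S) (x := 0)
        (y := 1 / ((N : ℝ) + 1) * x) (C := C 1)
        (fun y _ => hη.differentiable (by simp) y)
        (fun y hy => by simpa using hC 1 y hy) hS h0 (hmem N x hx)
      rw [h1] at this
      simp only [pow_zero, one_mul, iteratedDeriv_zero, if_true]
      refine this.trans ?_
      rw [sub_zero, norm_mul, Real.norm_eq_abs, Real.norm_eq_abs, abs_of_pos (by positivity)]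
      have : C (max 0 1) = C 1 := by simp
      rw [this]
      have : C 1 * (1 / ((N : ℝ) + 1) * |x|) = C 1 / ((N : ℝ) + 1) * |x| := by ring
      rw [this]
      have := hC0 1
      gcongr
      linarith
    · rw [if_neg hj.ne', sub_zero, max_eq_left hj, norm_mul, norm_pow, Complex.norm_real,
        Real.norm_eq_abs, abs_of_pos (by positivity)]
      have hle : (1 / ((N : ℝ) + 1)) ^ j ≤ 1 / ((N : ℝ) + 1) := by
        refine pow_le_of_le_one (by positivity) ?_ hj.ne'
        rw [div_le_one hN]
        linarith [(Nat.cast_nonneg N : (0 : ℝ) ≤ N)]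
      have hCj := hC0 j
      calc _ ≤ 1 / ((N : ℝ) + 1) * C j := by
            gcongr
            exact hC j _ (hmem N x hx)
        _ = C j / ((N : ℝ) + 1) * 1 := by ring
        _ ≤ _ := by
            gcongr
            linarith [abs_nonneg x]
  choose g hg using fun N : ℕ => exists_mul v hv (iteratedDeriv_scale hη (1 / ((N : ℝ) + 1))).1 _
    (fun j x hx => hbound j N x hx)
  refine ⟨fun N => v + g N, fun N x => ?_, ?_⟩
  · rw [add_apply, hg]; ring
  · refine tendsto_of_mul v hv (fun N => (iteratedDeriv_scale hη (1 / ((N : ℝ) + 1))).1)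
      (fun j => C (max j 1)) (fun j => Eventually.of_forall fun N => hbound j N) fun N x => ?_
    rw [add_apply, hg]; ring


/-! ### Polynomial approximation of a smooth function with its derivatives -/

theorem exists_antiderivative (q : Polynomial ℂ) : ∃ Q : Polynomial ℂ, Q.derivative = q := by
  induction q using Polynomial.induction_on' with
  | add p q hp hq =>
    obtain ⟨P, rfl⟩ := hp
    obtain ⟨Q, rfl⟩ := hq
    exact ⟨P + Q, Polynomial.derivative_add⟩
  | monomial n a =>
    refine ⟨Polynomial.monomial (n + 1) (a / ((n : ℂ) + 1)), ?_⟩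
    rw [Polynomial.derivative_monomial]
    have : (n : ℂ) + 1 ≠ 0 := by exact_mod_cast Nat.succ_ne_zero n
    congr 1
    push_cast
    field_simp

theorem hasDerivAt_eval_ofReal (q : Polynomial ℂ) (x : ℝ) :
    HasDerivAt (fun y : ℝ => q.eval (y : ℂ)) (q.derivative.eval (x : ℂ)) x :=
  (q.hasDerivAt (x : ℂ)).comp_ofReal

theorem contDiff_eval_ofReal (q : Polynomial ℂ) :
    ContDiff ℝ ∞ (fun y : ℝ => q.eval (y : ℂ)) := by
  have := (Polynomial.contDiff_aeval (𝕜 := ℂ) q ∞).restrict_scalars ℝ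
  simp only [Polynomial.coe_aeval_eq_eval] at this
  exact this.comp Complex.ofRealCLM.contDiff

theorem exists_polynomial_near_complex (R : ℝ) {h : ℝ → ℂ} (hh : Continuous h) {ε : ℝ}
    (hε : 0 < ε) :
    ∃ q : Polynomial ℂ, ∀ x ∈ Icc (0 : ℝ) R, ‖q.eval (x : ℂ) - h x‖ ≤ ε := by
  obtain ⟨p₁, h₁⟩ := exists_polynomial_near_of_continuousOn 0 R (fun x => (h x).re)
    (Complex.continuous_re.comp hh).continuousOn (ε / 2) (by positivity)
  obtain ⟨p₂, h₂⟩ := exists_polynomial_near_of_continuousOn 0 R (fun x => (h x).im)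
    (Complex.continuous_im.comp hh).continuousOn (ε / 2) (by positivity)
  refine ⟨p₁.map Complex.ofRealHom + Polynomial.C Complex.I * p₂.map Complex.ofRealHom,
    fun x hx => ?_⟩
  have e : ∀ p : Polynomial ℝ, (p.map Complex.ofRealHom).eval (x : ℂ) = ((p.eval x : ℝ) : ℂ) :=
    fun p => Polynomial.eval_map_apply (f := Complex.ofRealHom) x
  rw [Polynomial.eval_add, Polynomial.eval_mul, Polynomial.eval_C, e, e]
  refine (Complex.norm_le_abs_re_add_abs_im _).trans ?_
  have a := h₁ x hx
  have b := h₂ x hx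
  simp only [Complex.sub_re, Complex.add_re, Complex.ofReal_re, Complex.mul_re, Complex.I_re,
    Complex.I_im, Complex.ofReal_im, Complex.sub_im, Complex.add_im, Complex.mul_im, zero_mul,
    one_mul, zero_add, add_zero, mul_zero, sub_zero]
  linarith

/-- Weierstrass approximation in `C^n([0, R])`: approximate the derivative inductively and integrate
from `0`. -/
theorem exists_polynomial_near_iteratedDeriv {R : ℝ} (hR : 0 ≤ R) (n : ℕ) :
    ∀ {h : ℝ → ℂ}, ContDiff ℝ ∞ h → ∀ {ε : ℝ}, 0 < ε →
    ∃ q : Polynomial ℂ, ∀ j ≤ n, ∀ x ∈ Icc (0 : ℝ) R,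
      ‖iteratedDeriv j (fun y : ℝ => q.eval (y : ℂ) - h y) x‖ ≤ ε := by
  induction n with
  | zero =>
    intro h hh ε hε
    obtain ⟨q, hq⟩ := exists_polynomial_near_complex R hh.continuous hε
    refine ⟨q, fun j hj x hx => ?_⟩
    obtain rfl : j = 0 := by omega
    simpa using hq x hx
  | succ n ih =>
    intro h hh ε hε
    have hh' : ContDiff ℝ ∞ (deriv h) := (contDiff_infty_iff_deriv.1 hh).2
    have hhd : Differentiable ℝ h := (contDiff_infty_iff_deriv.1 hh).1
    obtain ⟨q, hq⟩ := ih hh' (ε := ε / (R + 1)) (by positivity)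
    obtain ⟨Q, hQ⟩ := exists_antiderivative q
    set P : Polynomial ℂ := Q + Polynomial.C (h 0 - Q.eval 0) with hP
    have hder : ∀ x : ℝ, HasDerivAt (fun y : ℝ => P.eval (y : ℂ) - h y)
        (q.eval (x : ℂ) - deriv h x) x := by
      intro x
      have := (hasDerivAt_eval_ofReal P x).sub (hhd x).hasDerivAt
      rwa [show P.derivative = q by simp [hP, hQ]] at this
    have hderiv : deriv (fun y : ℝ => P.eval (y : ℂ) - h y) =
        fun y : ℝ => q.eval (y : ℂ) - deriv h y := funext fun x => (hder x).deriv
    have hle : ε / (R + 1) ≤ ε := div_le_self hε.le (by linarith)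
    refine ⟨P, fun j hj x hx => ?_⟩
    rcases j with _ | j
    · have := Convex.norm_image_sub_le_of_norm_deriv_le
        (f := fun y : ℝ => P.eval (y : ℂ) - h y) (s := Icc 0 R) (x := 0) (y := x)
        (C := ε / (R + 1)) (fun y _ => (hder y).differentiableAt)
        (fun y hy => by rw [hderiv]; simpa using hq 0 (Nat.zero_le _) y hy)
        (convex_Icc 0 R) ⟨le_rfl, hR⟩ hx
      have h00 : P.eval ((0 : ℝ) : ℂ) - h 0 = 0 := by simp [hP]
      simp only [h00, sub_zero] at this
      rw [iteratedDeriv_zero]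
      refine this.trans ?_
      rw [Real.norm_eq_abs, abs_of_nonneg hx.1, div_mul_eq_mul_div, div_le_iff₀ (by linarith)]
      gcongr
      linarith [hx.2]
    · rw [iteratedDeriv_succ', hderiv]
      exact (hq j (by omega) x hx).trans hle


/-! ### Laplace transforms of compactly supported functions -/

theorem integrable_mul_cexp {a : ℝ → ℂ} (ha : Continuous a) (hc : HasCompactSupport a) (E : ℝ) :
    Integrable fun t : ℝ => a t * Complex.exp (-(E : ℂ) * (t : ℂ)) :=
  Continuous.integrable_of_hasCompactSupport (by fun_prop) hc.mul_right

/-- Differentiation under the integral sign for the two-sided Laplace transform. -/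
theorem hasDerivAt_laplace {a : ℝ → ℂ} (ha : Continuous a) (hc : HasCompactSupport a) (E : ℝ) :
    HasDerivAt (fun E : ℝ => ∫ t : ℝ, a t * Complex.exp (-(E : ℂ) * (t : ℂ)))
      (∫ t : ℝ, (-(t : ℂ) * a t) * Complex.exp (-(E : ℂ) * (t : ℂ))) E := by
  refine (hasDerivAt_integral_of_dominated_loc_of_deriv_le (μ := volume)
    (F := fun (E t : ℝ) => a t * Complex.exp (-(E : ℂ) * (t : ℂ)))
    (F' := fun (E t : ℝ) => (-(t : ℂ) * a t) * Complex.exp (-(E : ℂ) * (t : ℂ)))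
    (bound := fun t : ℝ => ‖-(t : ℂ) * a t‖ * Real.exp ((|E| + 1) * |t|))
    (Metric.ball_mem_nhds E one_pos) ?_ ?_ ?_ ?_ ?_ ?_).2
  · exact Eventually.of_forall fun x => (integrable_mul_cexp ha hc x).aestronglyMeasurable
  · exact integrable_mul_cexp ha hc E
  · exact (integrable_mul_cexp (a := fun t => -(t : ℂ) * a t) (by fun_prop) hc.mul_left
      E).aestronglyMeasurable
  · refine Eventually.of_forall fun t x hx => ?_
    rw [norm_mul, Complex.norm_exp]
    gcongr
    have h1 : |x| ≤ |E| + 1 := by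
      have := abs_sub_abs_le_abs_sub x E
      rw [Metric.mem_ball, Real.dist_eq] at hx
      linarith
    have h2 : (-(x : ℂ) * (t : ℂ)).re = -(x * t) := by simp
    rw [h2]
    calc -(x * t) ≤ |x * t| := neg_le_abs _
      _ = |x| * |t| := abs_mul _ _
      _ ≤ _ := by gcongr
  · exact Continuous.integrable_of_hasCompactSupport (by fun_prop) (hc.mul_left).norm.mul_right
  · refine Eventually.of_forall fun t x _ => ?_
    have h1 : HasDerivAt (fun y : ℝ => -(y : ℂ) * (t : ℂ)) (-(t : ℂ)) x := by
      simpa using ((Complex.ofRealCLM.hasDerivAt (x := x)).neg.mul_const (t : ℂ))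
    exact (h1.cexp.const_mul (a t)).congr_deriv (by ring)

/-- The Laplace transform of a profile on `[0, 1]` is smooth, and all its derivatives are bounded on
`[-1, ∞)` by the same constant, because `|t| ^ n ≤ 1` and `e^{-Et} ≤ e` there. -/
theorem laplace_smooth_bound {ρ : ℝ → ℂ} (hρ : Continuous ρ)
    (hs : Function.support ρ ⊆ Icc 0 1) :
    ContDiff ℝ ∞ (fun E : ℝ => ∫ t : ℝ, ρ t * Complex.exp (-(E : ℂ) * (t : ℂ))) ∧
      ∀ n, ∀ E ∈ Ici (-1 : ℝ),
        ‖iteratedDeriv n (fun E : ℝ => ∫ t : ℝ, ρ t * Complex.exp (-(E : ℂ) * (t : ℂ))) E‖ ≤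
          ∫ t : ℝ, ‖ρ t‖ * Real.exp 1 := by
  have hc : HasCompactSupport ρ := HasCompactSupport.of_support_subset_isCompact isCompact_Icc hs
  have key := iteratedDeriv_of_chain (F := fun n (E : ℝ) =>
    ∫ t : ℝ, ((-(t : ℂ)) ^ n * ρ t) * Complex.exp (-(E : ℂ) * (t : ℂ))) (by
      intro n x
      refine (hasDerivAt_laplace (a := fun t => (-(t : ℂ)) ^ n * ρ t) (by fun_prop)
        hc.mul_left x).congr_deriv ?_
      simp only [pow_succ']
      congr 1
      funext t
      ring)
  simp only [pow_zero, one_mul] at key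
  refine ⟨key.1, fun n E hE => ?_⟩
  rw [key.2 n]
  refine norm_integral_le_of_norm_le
    (Continuous.integrable_of_hasCompactSupport (by fun_prop) hc.norm.mul_right)
    (Eventually.of_forall fun t => ?_)
  by_cases ht : ρ t = 0
  · simp [ht]
  · obtain ⟨h0, h1⟩ := hs ht
    rw [norm_mul, norm_mul, Complex.norm_exp, norm_pow, norm_neg, Complex.norm_real,
      Real.norm_eq_abs, abs_of_nonneg h0]
    have h2 : (-(E : ℂ) * (t : ℂ)).re = -(E * t) := by simp
    have h3 : t ^ n ≤ 1 := pow_le_one₀ h0 h1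
    have h4 : -(E * t) ≤ 1 := by
      have : -1 ≤ E := hE
      nlinarith
    rw [h2]
    calc t ^ n * ‖ρ t‖ * Real.exp (-(E * t)) ≤ 1 * ‖ρ t‖ * Real.exp 1 := by gcongr
      _ = _ := by ring

theorem exists_profile : ∃ ρ : ℝ → ℂ, ContDiff ℝ ∞ ρ ∧ Function.support ρ ⊆ Icc 0 1 ∧
    ∫ t, ρ t = 1 := by
  let b : ContDiffBump (1 / 2 : ℝ) := ⟨1 / 4, 1 / 2, by norm_num, by norm_num⟩
  refine ⟨fun t => (b.normed volume t : ℂ), Complex.ofRealCLM.contDiff.comp b.contDiff_normed,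
    fun t ht => ?_, ?_⟩
  · have h1 : t ∈ Function.support (b.normed volume) := by
      simpa using ht
    rw [b.support_normed_eq, Real.ball_eq_Ioo] at h1
    have : b.rOut = 1 / 2 := rfl
    rw [this] at h1
    constructor <;> linarith [h1.1, h1.2]
  · rw [integral_complex_ofReal, b.integral_normed]; simp

/-! ### The cut-off exponentials -/

/-- Smooth cutoff, `0` for `x ≤ -1` and `1` for `x ≥ 0`. -/
noncomputable def cutoff (x : ℝ) : ℂ := (Real.smoothTransition (x + 1) : ℂ)

theorem contDiff_cutoff : ContDiff ℝ ∞ cutoff :=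
  Complex.ofRealCLM.contDiff.comp
    (Real.smoothTransition.contDiff.comp (contDiff_id.add contDiff_const))

theorem cutoff_of_le {x : ℝ} (hx : x ≤ -1) : cutoff x = 0 := by
  simp [cutoff, Real.smoothTransition.zero_of_nonpos (show x + 1 ≤ 0 by linarith)]

theorem cutoff_of_ge {x : ℝ} (hx : 0 ≤ x) : cutoff x = 1 := by
  simp [cutoff, Real.smoothTransition.one_of_one_le (show 1 ≤ x + 1 by linarith)]

theorem cexp_chain (c : ℝ) : ContDiff ℝ ∞ (fun x : ℝ => Complex.exp ((c : ℂ) * x)) ∧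
    ∀ n, iteratedDeriv n (fun x : ℝ => Complex.exp ((c : ℂ) * x)) =
      fun x : ℝ => (c : ℂ) ^ n * Complex.exp ((c : ℂ) * x) := by
  have key := iteratedDeriv_of_chain (F := fun n (x : ℝ) =>
      (c : ℂ) ^ n * Complex.exp ((c : ℂ) * x)) (by
    intro n x
    have h1 : HasDerivAt (fun y : ℝ => (c : ℂ) * (y : ℂ)) (c : ℂ) x := by
      simpa using ((Complex.ofRealCLM.hasDerivAt (x := x)).const_mul (c : ℂ))
    exact (h1.cexp.const_mul _).congr_deriv (by ring))
  simpa only [pow_zero, one_mul] using key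

/-- The Schwartz function equal to `e^{-(m+1)x}` on `[0, ∞)`, cut off smoothly to the left. -/
noncomputable def expSchwartz (m : ℕ) : 𝓢(ℝ, ℂ) where
  toFun x := cutoff x * Complex.exp (((-((m : ℝ) + 1) : ℝ) : ℂ) * x)
  smooth' := contDiff_cutoff.mul (cexp_chain _).1
  decay' k n := by
    set f : ℝ → ℂ := fun x => cutoff x * Complex.exp (((-((m : ℝ) + 1) : ℝ) : ℂ) * x) with hf
    have hfs : ContDiff ℝ ∞ f := contDiff_cutoff.mul (cexp_chain _).1
    have hcont : Continuous fun x : ℝ => ‖x‖ ^ k * ‖iteratedFDeriv ℝ n f x‖ :=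
      (continuous_norm.pow k).mul (hfs.continuous_iteratedFDeriv (by exact_mod_cast le_top)).norm
    obtain ⟨B, hB⟩ := (isCompact_Icc (a := (-1 : ℝ)) (b := 0)).exists_bound_of_continuousOn
      hcont.continuousOn
    have hB0 : 0 ≤ B := (norm_nonneg _).trans (hB 0 (by simp))
    refine ⟨B + ((m : ℝ) + 1) ^ n * (k.factorial : ℝ), fun x => ?_⟩
    have hpos : 0 ≤ ((m : ℝ) + 1) ^ n * (k.factorial : ℝ) := by positivity
    rcases lt_or_ge x (-1) with h1 | h1
    · have : f =ᶠ[𝓝 x] fun _ => 0 := by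
        filter_upwards [Iio_mem_nhds h1] with y hy
        simp [hf, cutoff_of_le (le_of_lt hy)]
      rw [norm_iteratedFDeriv_eq_norm_iteratedDeriv, this.iteratedDeriv_eq n]
      simp only [iteratedDeriv_fun_const_zero, norm_zero, mul_zero]
      linarith
    rcases le_or_gt x 0 with h2 | h2
    · have := hB x ⟨h1, h2⟩
      rw [Real.norm_eq_abs, abs_of_nonneg (by positivity)] at this
      linarith
    · have : f =ᶠ[𝓝 x] fun y : ℝ => Complex.exp (((-((m : ℝ) + 1) : ℝ) : ℂ) * y) := by
        filter_upwards [Ioi_mem_nhds h2] with y hy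
        simp [hf, cutoff_of_ge (le_of_lt hy)]
      rw [norm_iteratedFDeriv_eq_norm_iteratedDeriv, this.iteratedDeriv_eq n, (cexp_chain _).2]
      rw [norm_mul, norm_pow, Complex.norm_real, norm_neg, Complex.norm_exp, Real.norm_eq_abs,
        Real.norm_eq_abs, abs_of_pos h2, abs_of_pos (by positivity : (0 : ℝ) < (m : ℝ) + 1)]
      have h3 : (((-((m : ℝ) + 1) : ℝ) : ℂ) * (x : ℂ)).re = -(((m : ℝ) + 1) * x) := by
        rw [Complex.re_ofReal_mul, Complex.ofReal_re]; ring
      rw [h3]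
      have h4 : x ^ k ≤ k.factorial * Real.exp x := by
        have := Real.pow_div_factorial_le_exp x h2.le k
        rw [div_le_iff₀ (by positivity)] at this
        linarith
      have h5 : Real.exp (-(((m : ℝ) + 1) * x)) ≤ Real.exp (-x) := by
        gcongr
        nlinarith [(Nat.cast_nonneg m : (0 : ℝ) ≤ m)]
      have h6 : Real.exp x * Real.exp (-x) = 1 := by rw [← Real.exp_add]; simp
      calc x ^ k * (((m : ℝ) + 1) ^ n * Real.exp (-(((m : ℝ) + 1) * x)))
          ≤ (k.factorial * Real.exp x) * (((m : ℝ) + 1) ^ n * Real.exp (-x)) := by gcongr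
        _ = ((m : ℝ) + 1) ^ n * k.factorial * (Real.exp x * Real.exp (-x)) := by ring
        _ ≤ _ := by rw [h6]; linarith

theorem expSchwartz_apply (m : ℕ) (x : ℝ) :
    expSchwartz m x = cutoff x * Complex.exp (((-((m : ℝ) + 1) : ℝ) : ℂ) * x) := rfl

theorem tsupport_expSchwartz (m : ℕ) : tsupport (expSchwartz m) ⊆ Ici (-1) := by
  refine closure_minimal (fun x hx => ?_) isClosed_Ici
  by_contra h
  simp only [mem_Ici, not_le] at h
  exact hx (by simp [expSchwartz_apply, cutoff_of_le h.le])

/-! ### The subspace of Laplace transforms -/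

/-- `g` agrees on `[0, ∞)` with the Laplace transform of a test function on `(0, ∞)`. -/
def IsLaplace (g : 𝓢(ℝ, ℂ)) : Prop :=
  ∃ φ : ℝ → ℂ, ContDiff ℝ (⊤ : ℕ∞) φ ∧ HasCompactSupport φ ∧
    tsupport φ ⊆ Set.Ioi (0:ℝ) ∧
    ∀ E ≥ (0:ℝ), g E = ∫ t in Set.Ioi (0:ℝ), φ t * Complex.exp (-(E : ℂ) * (t : ℂ))

/-- The set whose density is claimed, as a linear subspace of the Schwartz space. -/
noncomputable def laplaceSubmodule : Submodule ℂ 𝓢(ℝ, ℂ) where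
  carrier := {g | IsLaplace g}
  zero_mem' := ⟨0, contDiff_const, HasCompactSupport.zero, by simp [tsupport], by simp⟩
  add_mem' := by
    rintro f g ⟨φ, h1, h2, h3, h4⟩ ⟨φ', h1', h2', h3', h4'⟩
    refine ⟨φ + φ', h1.add h1', h2.add h2',
      (tsupport_add φ φ').trans (union_subset h3 h3'), fun E hE => ?_⟩
    rw [add_apply, h4 E hE, h4' E hE, ← integral_add
      (integrable_mul_cexp h1.continuous h2 E).integrableOn
      (integrable_mul_cexp h1'.continuous h2' E).integrableOn]
    simp [add_mul]
  smul_mem' := by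
    rintro c g ⟨φ, h1, h2, h3, h4⟩
    refine ⟨fun t => c * φ t, contDiff_const.mul h1, h2.mul_left,
      (tsupport_mul_subset_right (f := fun _ => c)).trans h3, fun E hE => ?_⟩
    rw [smul_apply, h4 E hE, smul_eq_mul, ← integral_const_mul]
    simp [mul_assoc]

theorem isLaplace_of_eq_zero {g : 𝓢(ℝ, ℂ)} (hg : ∀ E ≥ (0 : ℝ), g E = 0) : IsLaplace g :=
  ⟨0, contDiff_const, HasCompactSupport.zero, by simp [tsupport], by simpa using hg⟩

/-- With `a = m + 1`, the test function is the profile dilated by `c` and translated by `a`; it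
lives in `[a, a + c]`, away from `0`. -/
theorem isLaplace_exp_mul {ρ : ℝ → ℂ} (hρ : ContDiff ℝ ∞ ρ) (hs : Function.support ρ ⊆ Icc 0 1)
    (m : ℕ) {c : ℝ} (hc : 0 < c) {g : 𝓢(ℝ, ℂ)}
    (hg : ∀ E, g E = expSchwartz m E *
      ∫ s : ℝ, ρ s * Complex.exp (-((c * E : ℝ) : ℂ) * (s : ℂ))) : IsLaplace g := by
  set a : ℝ := (m : ℝ) + 1 with ha
  have ha0 : 0 < a := by positivity
  set φ : ℝ → ℂ := fun t => (c⁻¹ : ℂ) * ρ (c⁻¹ * (t - a)) with hφ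
  have hsupp : Function.support φ ⊆ Icc a (a + c) := by
    intro t ht
    have h1 : ρ (c⁻¹ * (t - a)) ≠ 0 := fun h => ht (by simp [hφ, h])
    obtain ⟨h2, h3⟩ := hs h1
    have e : t - a = c * (c⁻¹ * (t - a)) := by field_simp
    constructor
    · nlinarith
    · nlinarith
  refine ⟨φ, ?_, HasCompactSupport.of_support_subset_isCompact isCompact_Icc hsupp,
    (closure_minimal hsupp isClosed_Icc).trans fun t ht => lt_of_lt_of_le ha0 ht.1,
    fun E hE => ?_⟩
  · exact contDiff_const.mul (hρ.comp (contDiff_const.mul (contDiff_id.sub contDiff_const)))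
  · rw [setIntegral_eq_integral_of_forall_compl_eq_zero (fun t ht => by
      have : φ t = 0 := by
        by_contra h
        exact ht (lt_of_lt_of_le ha0 (hsupp h).1)
      rw [this, zero_mul])]
    rw [hg, expSchwartz_apply, cutoff_of_ge hE, one_mul, ← ha]
    set G : ℝ → ℂ := fun s => (c⁻¹ : ℂ) * ρ s * Complex.exp (-(E : ℂ) * ((c * s + a : ℝ) : ℂ))
      with hG
    have e1 : (fun t : ℝ => φ t * Complex.exp (-(E : ℂ) * (t : ℂ))) =
        fun t : ℝ => (fun u => G (c⁻¹ * u)) (t - a) := by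
      funext t
      have : c * (c⁻¹ * (t - a)) + a = t := by field_simp; ring
      simp only [hG, hφ, this]
    rw [e1, integral_sub_right_eq_self (fun u => G (c⁻¹ * u)) a,
      Measure.integral_comp_mul_left G c⁻¹, inv_inv, abs_of_pos hc, ← integral_const_mul,
      ← integral_smul]
    congr 1
    funext s
    simp only [hG, Complex.real_smul]
    have hc' : (c : ℂ) ≠ 0 := by exact_mod_cast hc.ne'
    have e2 : Complex.exp (-(E : ℂ) * ((c * s + a : ℝ) : ℂ)) =
        Complex.exp (((-a : ℝ) : ℂ) * E) * Complex.exp (-((c * E : ℝ) : ℂ) * (s : ℂ)) := by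
      rw [← Complex.exp_add]
      congr 1
      push_cast
      ring
    rw [e2]
    field_simp


/-! ### Density -/

theorem expSchwartz_mem (m : ℕ) : expSchwartz m ∈ laplaceSubmodule.topologicalClosure := by
  obtain ⟨ρ, hρ, hs, hint⟩ := exists_profile
  obtain ⟨hL, hLb⟩ := laplace_smooth_bound hρ.continuous hs
  obtain ⟨g, hg, hlim⟩ := tendsto_dilate (expSchwartz m) (tsupport_expSchwartz m)
    (convex_Ici _) (by simp) hL (by simpa using hint) _ hLb
  refine mem_closure_of_tendsto hlim (Eventually.of_forall fun N => ?_)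
  exact isLaplace_exp_mul hρ hs m (c := 1 / ((N : ℝ) + 1)) (by positivity) (hg N)

/-- A test function is `e^{-x} h(e^{-x})` with `h y = f (-log y) / y`. Since `f` vanishes far to the
right, `h` vanishes near `0⁺` and extends smoothly by `0` to `y ≤ 0`. -/
theorem exists_log_pullback {f : ℝ → ℂ} (hf : ContDiff ℝ ∞ f) (hc : HasCompactSupport f) :
    ∃ h : ℝ → ℂ, ContDiff ℝ ∞ h ∧
      ∀ x : ℝ, f x = Complex.exp (((-1 : ℝ) : ℂ) * x) * h (Real.exp (-x)) := by
  obtain ⟨R, hR⟩ := hc.isCompact.isBounded.subset_closedBall 0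
  have hzero : ∀ x, R < x → f x = 0 := by
    intro x hx
    by_contra h
    have := hR (subset_tsupport f h)
    rw [mem_closedBall_zero_iff, Real.norm_eq_abs] at this
    linarith [le_abs_self x]
  set h : ℝ → ℂ := fun y => if 0 < y then f (-Real.log y) * (y : ℂ)⁻¹ else 0 with hh
  refine ⟨h, ?_, fun x => ?_⟩
  · rw [contDiff_iff_contDiffAt]
    intro y
    rcases lt_or_ge 0 y with hy | hy
    · have h1 : ContDiffAt ℝ ∞ (fun y : ℝ => f (-Real.log y) * (y : ℂ)⁻¹) y :=
        (hf.contDiffAt.comp y (Real.contDiffAt_log.2 hy.ne').neg).mul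
          (Complex.ofRealCLM.contDiff.contDiffAt.inv (by simpa using hy.ne'))
      refine h1.congr_of_eventuallyEq ?_
      filter_upwards [Ioi_mem_nhds hy] with z hz
      simp only [hh, if_pos (show 0 < z from hz)]
    · refine (contDiffAt_const (c := (0 : ℂ))).congr_of_eventuallyEq ?_
      filter_upwards [Iio_mem_nhds (lt_of_le_of_lt hy (Real.exp_pos (-R)))] with z hz
      simp only [hh]
      split_ifs with hz0
      · have : Real.log z < -R := (Real.log_lt_iff_lt_exp hz0).2 hz
        rw [hzero _ (by linarith), zero_mul]
      · rfl
  · simp only [hh, if_pos (Real.exp_pos _), Real.log_exp, neg_neg]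
    have : Complex.exp (((-1 : ℝ) : ℂ) * x) = ((Real.exp (-x) : ℝ) : ℂ) := by
      push_cast; congr 1; ring
    rw [this]
    have hne : ((Real.exp (-x) : ℝ) : ℂ) ≠ 0 := by exact_mod_cast (Real.exp_pos _).ne'
    field_simp

theorem norm_iteratedDeriv_comp_exp_le {r : ℝ → ℂ} (hr : ContDiff ℝ ∞ r) {j : ℕ} {ε : ℝ}
    (hb : ∀ i ≤ j, ∀ y ∈ Icc 0 (Real.exp 1), ‖iteratedDeriv i r y‖ ≤ ε)
    {x : ℝ} (hx : x ∈ Ici (-1 : ℝ)) :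
    ‖iteratedDeriv j (fun x : ℝ => r (Real.exp (-x))) x‖ ≤ j.factorial * ε * Real.exp 1 ^ j := by
  have he : ContDiff ℝ ∞ fun x : ℝ => Real.exp (-x) := Real.contDiff_exp.comp contDiff_neg
  have hle : Real.exp (-x) ≤ Real.exp 1 := by
    gcongr
    have : -1 ≤ x := hx
    linarith
  rw [← norm_iteratedFDeriv_eq_norm_iteratedDeriv]
  refine norm_iteratedFDeriv_comp_le (f := fun x : ℝ => Real.exp (-x)) hr he
    (by exact_mod_cast le_top) x (fun i hi => ?_) (fun i h1 hi => ?_)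
  · rw [norm_iteratedFDeriv_eq_norm_iteratedDeriv]
    exact hb i hi _ ⟨(Real.exp_pos _).le, hle⟩
  · have e : (fun x : ℝ => Real.exp (-x)) = fun x => Real.exp ((-1) * x) := by
      funext x; simp
    rw [norm_iteratedFDeriv_eq_norm_iteratedDeriv, e, iteratedDeriv_exp_const_mul]
    simp only [norm_mul, norm_pow, norm_neg, norm_one, one_pow, one_mul, neg_mul, Real.norm_eq_abs,
      Real.abs_exp]
    exact hle.trans (le_self_pow₀ (Real.one_le_exp zero_le_one) (by omega))

theorem mem_of_hasCompactSupport {f : 𝓢(ℝ, ℂ)} (hc : HasCompactSupport f) :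
    f ∈ laplaceSubmodule.topologicalClosure := by
  obtain ⟨h, hh, hfh⟩ := exists_log_pullback (f.smooth ⊤) hc
  choose q hq using fun N : ℕ => exists_polynomial_near_iteratedDeriv (Real.exp_pos 1).le N hh
    (ε := 1 / ((N : ℝ) + 1)) (by positivity)
  -- `f₂ = (1 - χ) f` vanishes on `[0, ∞)`, hence belongs to the subspace already.
  have hc₂ : HasCompactSupport fun x => (1 - cutoff x) * f x := hc.mul_left
  let f₂ : 𝓢(ℝ, ℂ) := hc₂.toSchwartzMap ((contDiff_const.sub contDiff_cutoff).mul (f.smooth ⊤))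
  have hf₂ : ∀ x, f₂ x = (1 - cutoff x) * f x := fun x => rfl
  let g : ℕ → 𝓢(ℝ, ℂ) := fun N =>
    f₂ + ∑ i ∈ Finset.range ((q N).natDegree + 1), (q N).coeff i • expSchwartz i
  have hgmem : ∀ N, g N ∈ laplaceSubmodule.topologicalClosure := fun N =>
    add_mem (Submodule.le_topologicalClosure _ (isLaplace_of_eq_zero fun E hE => by
      rw [hf₂, cutoff_of_ge hE, sub_self, zero_mul]))
      (sum_mem fun i _ => Submodule.smul_mem _ _ (expSchwartz_mem i))
  have hr : ∀ N, ContDiff ℝ ∞ fun y : ℝ => (q N).eval (y : ℂ) - h y := fun N =>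
    (contDiff_eval_ofReal _).sub hh
  refine (Submodule.isClosed_topologicalClosure _).mem_of_tendsto (f := g) (b := atTop)
    (tendsto_of_mul (expSchwartz 0) (tsupport_expSchwartz 0)
    (w := fun N x => (q N).eval ((Real.exp (-x) : ℝ) : ℂ) - h (Real.exp (-x)))
    (fun N => (hr N).comp (Real.contDiff_exp.comp contDiff_neg))
    (fun j => j.factorial * Real.exp 1 ^ j) (fun j => ?_) fun N x => ?_)
    (Eventually.of_forall hgmem)
  · filter_upwards [eventually_ge_atTop j] with N hN x hx
    refine (norm_iteratedDeriv_comp_exp_le (hr N) (fun i hi => hq N i (hi.trans hN)) hx).trans ?_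
    calc _ = j.factorial * Real.exp 1 ^ j / ((N : ℝ) + 1) * 1 := by ring
      _ ≤ _ := by
        gcongr
        linarith [abs_nonneg x]
  · have e : ∀ i : ℕ, expSchwartz i x =
        expSchwartz 0 x * ((Real.exp (-x) : ℝ) : ℂ) ^ i := by
      intro i
      rw [expSchwartz_apply, expSchwartz_apply, Complex.ofReal_exp, ← Complex.exp_nat_mul,
        mul_assoc, ← Complex.exp_add]
      congr 2
      push_cast
      ring
    have e0 : expSchwartz 0 x = cutoff x * Complex.exp (((-1 : ℝ) : ℂ) * x) := by
      rw [expSchwartz_apply]; simp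
    have e1 : (∑ i ∈ Finset.range ((q N).natDegree + 1), (q N).coeff i • expSchwartz i) x =
        expSchwartz 0 x * (q N).eval ((Real.exp (-x) : ℝ) : ℂ) := by
      rw [sum_apply, Polynomial.eval_eq_sum_range, Finset.mul_sum]
      refine Finset.sum_congr rfl fun i _ => ?_
      rw [smul_apply, e i, smul_eq_mul]
      ring
    have e2 : cutoff x * f x = expSchwartz 0 x * h (Real.exp (-x)) := by
      rw [hfh x, e0, mul_assoc]
    simp only [g]
    rw [add_apply, e1, hf₂, mul_sub, ← e2]
    ring

theorem mem_topologicalClosure (f : 𝓢(ℝ, ℂ)) : f ∈ laplaceSubmodule.topologicalClosure := by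
  let b : ContDiffBump (0 : ℝ) := ⟨1, 2, by norm_num, by norm_num⟩
  set η : ℝ → ℂ := fun x => (b x : ℂ) with hη
  have hηs : ContDiff ℝ ∞ η := Complex.ofRealCLM.contDiff.comp b.contDiff
  have hηc : HasCompactSupport η := b.hasCompactSupport.comp_left (g := Complex.ofReal) rfl
  have hC : ∀ j, ∃ C, ∀ x ∈ (univ : Set ℝ), ‖iteratedDeriv j η x‖ ≤ C := by
    intro j
    obtain ⟨C, hC⟩ := (hηc.iteratedFDeriv (𝕜 := ℝ) j).exists_bound_of_continuous
      (hηs.continuous_iteratedFDeriv (by exact_mod_cast le_top))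
    exact ⟨C, fun x _ => by simpa [norm_iteratedFDeriv_eq_norm_iteratedDeriv] using hC x⟩
  choose C hC using hC
  obtain ⟨g, hg, hlim⟩ := tendsto_dilate f (subset_univ _) convex_univ (mem_univ _) hηs
    (by simp only [hη]; rw [b.one_of_mem_closedBall (by simp [b])]; simp) C hC
  refine (Submodule.isClosed_topologicalClosure _).mem_of_tendsto hlim
    (Eventually.of_forall fun N => mem_of_hasCompactSupport ?_)
  have hN : (1 / ((N : ℝ) + 1)) ≠ 0 := by positivity
  have : ⇑(g N) = fun x => f x * η (1 / ((N : ℝ) + 1) * x) := funext (hg N)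
  rw [this]
  exact (hηc.comp_homeomorph (Homeomorph.mulLeft₀ _ hN)).mul_left

end LaplaceDense

/-- Density of Laplace transforms of test functions supported in `(0,∞)` in the
Schwartz space: every Schwartz function can be approximated by Schwartz functions
agreeing on `E ≥ 0` with such a Laplace transform. -/
theorem laplace_transforms_dense_in_schwartz :
    Dense {g : SchwartzMap ℝ ℂ |
      ∃ φ : ℝ → ℂ, ContDiff ℝ (⊤ : ℕ∞) φ ∧ HasCompactSupport φ ∧
        tsupport φ ⊆ Set.Ioi (0:ℝ) ∧
        ∀ E ≥ (0:ℝ), g E = ∫ t in Set.Ioi (0:ℝ), φ t * Complex.exp (-(E : ℂ) * (t : ℂ))} := by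
  exact LaplaceDense.mem_topologicalClosure
end
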